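/- Let r be a positive integer and set κ = 1/(r·2^(r+1)). For every δ > 0 there exists p₀ = p₀(r, δ) such that the following holds for every prime p > p₀: if G is a subgroup of the multiplicative group 𝔽_p* with |G| > p^(1−κ), then every subset A ⊆ G with |A| > δ|G| contains a non-trivial r-term arithmetic progression, i.e., there exist a, b ∈ 𝔽_p with b ≠ 0 such that a, a+b, a+2b, …, a+(r−1)b all lie in A. -/

import Mathlib

/-!
Let `m` be the index of `G` and `χ` a multiplicative character of order `m`, so that `G` is the
kernel of `χ`. Away from `0` the function `ν = m · 1_G` equals `1 + ∑ χ ^ j` over `0 < j < m`.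
Stepanov's polynomial method shows that products of few shifts of a nontrivial `χ ^ j` and its
conjugate cancel up to a power of `p`; after repeated use of the Cauchy-Schwarz inequality, `ν - 1`
correlates only by a power of `p⁻¹` with products of bounded functions of fewer than all the
variables of a sum. This power beats the powers of `m ≤ p ^ κ` that arise when the densification
argument of Conlon, Fox and Zhao is applied to `ν`.

The subset `A` is dense in `G`, so `m · 1_A ≤ ν` has mean bounded below. It is therefore modelled by
a function with values in `[0, 1]` which has the same mean and the same weighted count of
progressions, up to small errors. For the model, Szemerédi's theorem, in the averaged form deduced
from the density Hales-Jewett theorem, bounds the count below by a constant, while the trivial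
progressions contribute at most `m ^ r / p`.
-/

namespace SubgroupAP

section Stepanov

open Polynomial Module

section Derivation

variable {R : Type*} [CommRing R]

/-- The derivation `W · d/dx` of `R[X]`. At points where `W` does not vanish, its powers detect root
multiplicities just as iterated derivatives do. -/
noncomputable def scaledDerivative (W : R[X]) : End R R[X] :=
  LinearMap.mulLeft R W ∘ₗ derivative

/-- The operator `Q ↦ W Q' + Q V`, which is `scaledDerivative W` conjugated by a formal solution `U`
of `W U' = U V`. -/
noncomputable def twistedDerivative (W V : R[X]) : End R R[X] :=
  scaledDerivative W + LinearMap.mulRight R V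

lemma scaledDerivative_apply (W P : R[X]) : scaledDerivative W P = W * derivative P := rfl

lemma twistedDerivative_apply (W V Q : R[X]) :
    twistedDerivative W V Q = W * derivative Q + Q * V := rfl

lemma scaledDerivative_mul (W P Q : R[X]) :
    scaledDerivative W (P * Q) = scaledDerivative W P * Q + P * scaledDerivative W Q := by
  simp only [scaledDerivative_apply, derivative_mul]; ring

lemma scaledDerivative_pow (W P : R[X]) (k : ℕ) :
    P * scaledDerivative W (P ^ k) = (k : R[X]) * scaledDerivative W P * P ^ k := by
  cases k with
  | zero => simp [scaledDerivative_apply]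
  | succ k =>
    simp only [scaledDerivative_apply, derivative_pow_succ, map_add, map_one, C_eq_natCast]
    push_cast
    ring

lemma pow_scaledDerivative_mul {W V U Y : R[X]} (hU : scaledDerivative W U = U * V)
    (hY : derivative Y = 0) (Q : R[X]) (l : ℕ) :
    (scaledDerivative W ^ l) (Q * Y * U) = (twistedDerivative W V ^ l) Q * Y * U := by
  induction l generalizing Q with
  | zero => rfl
  | succ l ih =>
    have hstep : scaledDerivative W (Q * Y * U) = twistedDerivative W V Q * Y * U := by
      rw [scaledDerivative_mul, hU, scaledDerivative_mul, scaledDerivative_apply W Y, hY,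
        twistedDerivative_apply, scaledDerivative_apply]
      ring
    simp only [pow_succ, Module.End.mul_apply, hstep, ih]

lemma natDegree_pow_twistedDerivative_le {W V Q : R[X]} {N : ℕ} (hW : W.natDegree ≤ N)
    (hV : V.natDegree ≤ N) (l : ℕ) :
    ((twistedDerivative W V ^ l) Q).natDegree ≤ Q.natDegree + l * N := by
  induction l with
  | zero => simp
  | succ l ih =>
    rw [pow_succ', Module.End.mul_apply]
    generalize (twistedDerivative W V ^ l) Q = T at ih ⊢
    rw [twistedDerivative_apply, add_mul, one_mul]
    have hT := natDegree_derivative_le T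
    exact natDegree_add_le_of_degree_le (natDegree_mul_le.trans (by omega))
      (natDegree_mul_le.trans (by omega))

variable [IsDomain R]

lemma eval_pow_scaledDerivative_ne_zero {W H : R[X]} {y : R} (hW : W.eval y ≠ 0)
    (hH : H.eval y ≠ 0) {m : ℕ} (hm : (m.factorial : R) ≠ 0) :
    ((scaledDerivative W ^ m) ((X - C y) ^ m * H)).eval y ≠ 0 := by
  induction m generalizing H with
  | zero => simpa using hH
  | succ m ih =>
    rw [Nat.factorial_succ, Nat.cast_mul, mul_ne_zero_iff] at hm
    have hstep : scaledDerivative W ((X - C y) ^ (m + 1) * H) =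
        (X - C y) ^ m * (W * (C ((m + 1 : ℕ) : R) * H + (X - C y) * derivative H)) := by
      simp only [scaledDerivative_apply, derivative_mul, derivative_X_sub_C_pow,
        Nat.add_sub_cancel]
      rw [pow_succ]
      ring
    rw [pow_succ, Module.End.mul_apply, hstep]
    refine ih ?_ hm.2
    simpa using ⟨hW, by exact_mod_cast hm.1, hH⟩

lemma le_rootMultiplicity_of_pow_scaledDerivative {W P : R[X]} (hP : P ≠ 0) {y : R}
    (hW : W.eval y ≠ 0) {M : ℕ} (hM : ∀ m < M, (m.factorial : R) ≠ 0)
    (h : ∀ l < M, ((scaledDerivative W ^ l) P).eval y = 0) : M ≤ P.rootMultiplicity y := by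
  by_contra! hlt
  obtain ⟨H, hH, hnd⟩ := exists_eq_pow_rootMultiplicity_mul_and_not_dvd P hP y
  have hne := eval_pow_scaledDerivative_ne_zero hW (by rwa [dvd_iff_isRoot] at hnd) (hM _ hlt)
  exact hne (hH ▸ h _ hlt)

lemma card_mul_le_natDegree {P : R[X]} {Z : Finset R} {M : ℕ}
    (h : ∀ y ∈ Z, M ≤ P.rootMultiplicity y) : Z.card * M ≤ P.natDegree := by
  classical
  have hZ : Z ⊆ P.roots.toFinset ∨ M = 0 := by
    refine or_iff_not_imp_right.2 fun hM y hy => ?_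
    rw [Multiset.mem_toFinset, ← Multiset.count_pos, count_roots]
    exact (Nat.pos_of_ne_zero hM).trans_le (h y hy)
  rcases hZ with hZ | rfl
  · calc Z.card * M ≤ ∑ y ∈ Z, P.roots.count y := by
          rw [← smul_eq_mul]
          exact Finset.card_nsmul_le_sum _ _ _ fun y hy => (h y hy).trans_eq (count_roots P).symm
      _ ≤ ∑ y ∈ P.roots.toFinset, P.roots.count y := Finset.sum_le_sum_of_subset hZ
      _ = P.roots.card := P.roots.toFinset_sum_count_eq
      _ ≤ P.natDegree := card_roots' P
  · simp

end Derivation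

section LinearAlgebra

variable {K : Type*} [Field K]

lemma exists_ne_zero_forall_eq_zero_of_finrank_lt {V ι : Type*} [AddCommGroup V] [Module K V]
    [FiniteDimensional K V] [Fintype ι] {m : ℕ} (φ : ι → V →ₗ[K] K[X])
    (hφ : ∀ i v, φ i v ∈ degreeLT K m) (hlt : Fintype.card ι * m < finrank K V) :
    ∃ v ≠ 0, ∀ i, φ i v = 0 := by
  have : FiniteDimensional K (degreeLT K m) := (degreeLT.basis K m).finiteDimensional_of_finite
  have hdim : finrank K (ι → degreeLT K m) = Fintype.card ι * m := by
    rw [finrank_pi_fintype, Finset.sum_const, finrank_eq_card_basis (degreeLT.basis K m)]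
    simp
  obtain ⟨v, hv, hv0⟩ := Submodule.exists_mem_ne_zero_of_ne_bot <|
    LinearMap.ker_ne_bot_of_finrank_lt
      (f := LinearMap.pi fun i => (φ i).codRestrict (degreeLT K m) (hφ i)) (hdim ▸ hlt)
  exact ⟨v, hv0, fun i => congrArg Subtype.val (congrFun (LinearMap.mem_ker.1 hv) i)⟩

lemma eq_zero_of_sum_mul_X_pow_mul_eq_zero {ι : Type*} [Fintype ι] {n : ℕ} {w : ι → ℕ}
    (hw : Function.Injective w) (hwn : ∀ i j, w i < w j → w i + n ≤ w j) {Q T : ι → K[X]}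
    (hQ : ∀ i, Q i ∈ degreeLT K n) (hT : ∀ i, ¬ X ∣ T i)
    (h : ∑ i, Q i * (X ^ w i * T i) = 0) (i : ι) : Q i = 0 := by
  classical
  induction hs : w i using Nat.strong_induction_on generalizing i with
  | _ s ih =>
  have hdvd : X ^ (w i + n) ∣ Q i * (X ^ w i * T i) := by
    rw [← Finset.add_sum_erase _ _ (Finset.mem_univ i)] at h
    rw [eq_neg_of_add_eq_zero_left h, dvd_neg]
    refine Finset.dvd_sum fun j hj => ?_
    rcases (hw.ne (Finset.ne_of_mem_erase hj)).lt_or_gt with hji | hij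
    · rw [ih (w j) (hs ▸ hji) j rfl, zero_mul]
      exact dvd_zero _
    · exact ((pow_dvd_pow X (hwn i j hij)).mul_right _).mul_left _
  rw [pow_add, mul_left_comm] at hdvd
  have hXT : IsCoprime (X ^ n) (T i) := (prime_X.irreducible.coprime_iff_not_dvd.2 (hT i)).pow_left
  refine eq_zero_of_dvd_of_degree_lt (hXT.dvd_of_dvd_mul_right
    ((mul_dvd_mul_iff_left (pow_ne_zero _ X_ne_zero)).1 hdvd)) ?_
  rw [degree_X_pow]
  exact mem_degreeLT.1 (hQ i)

lemma exists_sum_mul_pow_twistedDerivative_eq_zero {ι : Type*} [Fintype ι] {n M N q : ℕ}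
    (hcount : M * (n + M * N + q) < Fintype.card ι * n) {W : K[X]} {V g : ι → K[X]}
    (hW : W.natDegree ≤ N) (hV : ∀ i, (V i).natDegree ≤ N) (hg : ∀ i, (g i).natDegree < q) :
    ∃ Q : ι → K[X], Q ≠ 0 ∧ (∀ i, Q i ∈ degreeLT K n) ∧
      ∀ l < M, ∑ i, g i * (twistedDerivative W (V i) ^ l) (Q i) = 0 := by
  have : FiniteDimensional K (degreeLT K n) := (degreeLT.basis K n).finiteDimensional_of_finite
  let φ (l : Fin M) : (ι → degreeLT K n) →ₗ[K] K[X] := ∑ i, LinearMap.mulLeft K (g i) ∘ₗ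
    (twistedDerivative W (V i) ^ l.1) ∘ₗ (degreeLT K n).subtype ∘ₗ LinearMap.proj i
  have hφ (l : Fin M) (v : ι → degreeLT K n) :
      φ l v = ∑ i, g i * (twistedDerivative W (V i) ^ l.1) (v i) := by
    simp only [φ, LinearMap.sum_apply, LinearMap.comp_apply, LinearMap.mulLeft_apply,
      LinearMap.proj_apply, Submodule.subtype_apply]
  have hdeg (l : Fin M) (v : ι → degreeLT K n) : φ l v ∈ degreeLT K (n + M * N + q) := by
    rw [hφ]
    refine Submodule.sum_mem _ fun i _ => mem_degreeLT.2 (degree_le_natDegree.trans_lt ?_)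
    have hQ : (v i : K[X]).natDegree ≤ n :=
      natDegree_le_of_degree_le (mem_degreeLT.1 (v i).2).le
    have hT := natDegree_pow_twistedDerivative_le (Q := (v i : K[X])) hW (hV i) l
    have hl : l.1 * N ≤ M * N := Nat.mul_le_mul_right N l.2.le
    have := hg i
    exact_mod_cast natDegree_mul_le.trans_lt (by omega)
  obtain ⟨v, hv0, hv⟩ := exists_ne_zero_forall_eq_zero_of_finrank_lt φ hdeg (by
    rw [finrank_pi_fintype, Finset.sum_const, finrank_eq_card_basis (degreeLT.basis K n)]
    simpa using hcount)
  refine ⟨fun i => v i, fun h => hv0 ?_, fun i => (v i).2, fun l hl => (hφ ⟨l, hl⟩ v).symm.trans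
    (hv _)⟩
  exact funext fun i => Subtype.ext (congrFun h i)

end LinearAlgebra

section Factor

variable {R : Type*} [CommRing R]

/-- The factor `A ^ (e n) B ^ ((d - e) n)` of the auxiliary polynomial. For `n d = p - 1` it takes
the value `c ^ e` at every point `y` of `ZMod p` with `A(y) ^ n = c B(y) ^ n` and `B(y) ≠ 0`. -/
noncomputable def stepanovFactor (A B : R[X]) (n d e : ℕ) : R[X] :=
  A ^ (e * n) * B ^ ((d - e) * n)

/-- `A B` times the logarithmic derivative of `stepanovFactor A B n d e`. -/
noncomputable def stepanovLogDeriv (A B : R[X]) (n d e : ℕ) : R[X] :=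
  ((e * n : ℕ) : R[X]) * (derivative A * B) + (((d - e) * n : ℕ) : R[X]) * (A * derivative B)

lemma scaledDerivative_stepanovFactor (A B : R[X]) (n d e : ℕ) :
    scaledDerivative (A * B) (stepanovFactor A B n d e) =
      stepanovFactor A B n d e * stepanovLogDeriv A B n d e := by
  have hpow (P : R[X]) (k : ℕ) : P * derivative (P ^ k) = k * derivative P * P ^ k := by
    simpa only [scaledDerivative_apply, one_mul] using scaledDerivative_pow 1 P k
  simp only [stepanovFactor, stepanovLogDeriv, scaledDerivative_apply, derivative_mul]
  linear_combination (B * B ^ ((d - e) * n)) * hpow A (e * n) +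
    (A * A ^ (e * n)) * hpow B ((d - e) * n)

lemma natDegree_stepanovLogDeriv_le (A B : R[X]) (n d e : ℕ) :
    (stepanovLogDeriv A B n d e).natDegree ≤ A.natDegree + B.natDegree := by
  have hA := natDegree_derivative_le A
  have hB := natDegree_derivative_le B
  simp only [stepanovLogDeriv, ← nsmul_eq_mul]
  exact natDegree_add_le_of_degree_le
    ((natDegree_smul_le _ _).trans (natDegree_mul_le.trans (by omega)))
    ((natDegree_smul_le _ _).trans (natDegree_mul_le.trans (by omega)))

lemma natDegree_stepanovFactor_le {A B : R[X]} {n d e : ℕ} (he : e ≤ d) :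
    (stepanovFactor A B n d e).natDegree ≤ n * d * (A.natDegree + B.natDegree) := by
  have h₁ : e * n ≤ n * d := by rw [mul_comm]; exact Nat.mul_le_mul_left n he
  have h₂ : (d - e) * n ≤ n * d := by rw [mul_comm]; exact Nat.mul_le_mul_left n (d.sub_le e)
  rw [mul_add]
  exact natDegree_mul_le.trans <| add_le_add
    (natDegree_pow_le.trans (Nat.mul_le_mul_right _ h₁))
    (natDegree_pow_le.trans (Nat.mul_le_mul_right _ h₂))

lemma eval_stepanovFactor {p : ℕ} [Fact p.Prime] {A B : (ZMod p)[X]} {n d e : ℕ}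
    (hnd : n * d + 1 = p) (he : e ≤ d) {c y : ZMod p} (hB : B.eval y ≠ 0)
    (hc : A.eval y ^ n = c * B.eval y ^ n) : (stepanovFactor A B n d e).eval y = c ^ e := by
  have hexp : n * e + (d - e) * n = p - 1 := by
    rw [mul_comm (d - e), ← mul_add, Nat.add_sub_cancel' he]
    omega
  rw [stepanovFactor, eval_mul, eval_pow, eval_pow, mul_comm e, pow_mul, hc, mul_pow, ← pow_mul,
    mul_assoc, ← pow_add, hexp, ZMod.pow_card_sub_one_eq_one hB, mul_one]

end Factor

section Auxiliary

variable {p : ℕ} [Fact p.Prime]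

/-- Stepanov's auxiliary polynomial `∑ Q₍ₑ,ⱼ₎ X ^ (p j) A ^ (e n) B ^ ((d - e) n)`. -/
noncomputable def stepanovPolynomial (A B : (ZMod p)[X]) (n d q : ℕ)
    (Q : Fin d × Fin q → (ZMod p)[X]) : (ZMod p)[X] :=
  ∑ i, Q i * X ^ (p * i.2.1) * stepanovFactor A B n d i.1.1

lemma stepanovPolynomial_ne_zero {A₁ B : (ZMod p)[X]} (hA₁ : ¬ X ∣ A₁) (hB : ¬ X ∣ B) {n d q : ℕ}
    (hn : 0 < n) (hnd : n * d + 1 = p) {Q : Fin d × Fin q → (ZMod p)[X]} (hQ0 : Q ≠ 0)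
    (hQ : ∀ i, Q i ∈ degreeLT (ZMod p) n) : stepanovPolynomial (X * A₁) B n d q Q ≠ 0 := by
  let w (i : Fin d × Fin q) : ℕ := p * i.2.1 + i.1.1 * n
  have hsnd {i j : Fin d × Fin q} (h : i.2.1 < j.2.1) : w i + n ≤ w j := by
    have h₁ : (i.1.1 + 1) * n ≤ d * n := Nat.mul_le_mul_right n i.1.2
    have h₂ : p * (i.2.1 + 1) ≤ p * j.2.1 := Nat.mul_le_mul_left p h
    simp only [w]
    linarith [Nat.zero_le (j.1.1 * n)]
  have hfst {i j : Fin d × Fin q} (h : i.2.1 = j.2.1) (h' : i.1.1 < j.1.1) : w i + n ≤ w j := by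
    have h₁ : (i.1.1 + 1) * n ≤ j.1.1 * n := Nat.mul_le_mul_right n h'
    simp only [w, h]
    linarith
  have hcases (i j : Fin d × Fin q) (hij : i ≠ j) : w i + n ≤ w j ∨ w j + n ≤ w i := by
    rcases lt_trichotomy i.2.1 j.2.1 with h | h | h
    · exact .inl (hsnd h)
    · rcases lt_trichotomy i.1.1 j.1.1 with h' | h' | h'
      · exact .inl (hfst h h')
      · exact absurd (Prod.ext (Fin.ext h') (Fin.ext h)) hij
      · exact .inr (hfst h.symm h')
    · exact .inr (hsnd h)
  intro h0
  refine hQ0 (funext fun i => eq_zero_of_sum_mul_X_pow_mul_eq_zero (w := w)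
    (T := fun i => A₁ ^ (i.1.1 * n) * B ^ ((d - i.1.1) * n)) (fun i j hij => ?_)
    (fun i j hij => ?_) hQ (fun i => ?_) ?_ i)
  · by_contra hne
    have := hcases i j hne
    lia
  · have := hcases i j (fun h => by simp [h] at hij)
    lia
  · exact fun hX => (prime_X.dvd_or_dvd hX).elim (hA₁ ∘ prime_X.dvd_of_dvd_pow)
      (hB ∘ prime_X.dvd_of_dvd_pow)
  · rw [← h0, stepanovPolynomial]
    refine Finset.sum_congr rfl fun i _ => ?_
    simp only [w, stepanovFactor, mul_pow, pow_add]
    ring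

lemma natDegree_stepanovPolynomial_le {A B : (ZMod p)[X]} {n d q N : ℕ} (hd : 0 < d)
    (hnd : n * d + 1 = p) (hN : A.natDegree + B.natDegree ≤ N)
    {Q : Fin d × Fin q → (ZMod p)[X]} (hQ : ∀ i, Q i ∈ degreeLT (ZMod p) n) :
    (stepanovPolynomial A B n d q Q).natDegree ≤ p * (q + N) := by
  refine natDegree_sum_le_of_forall_le _ _ fun i _ => ?_
  have hQi : (Q i).natDegree ≤ n := natDegree_le_of_degree_le (mem_degreeLT.1 (hQ i)).le
  have hnp : n ≤ n * d := Nat.le_mul_of_pos_right n hd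
  have hj : p * (i.2.1 + 1) ≤ p * q := Nat.mul_le_mul_left p i.2.2
  calc _ ≤ n + p * i.2.1 + n * d * (A.natDegree + B.natDegree) :=
        natDegree_mul_le.trans <| add_le_add
          (natDegree_mul_le.trans (add_le_add hQi (natDegree_X_pow _).le))
          (natDegree_stepanovFactor_le i.1.2.le)
    _ ≤ n + p * i.2.1 + p * N := by gcongr; omega
    _ ≤ p * (q + N) := by lia

lemma eval_pow_scaledDerivative_stepanovPolynomial {A B : (ZMod p)[X]} {n d q : ℕ}
    (hnd : n * d + 1 = p) {c y : ZMod p} (hB : B.eval y ≠ 0)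
    (hc : A.eval y ^ n = c * B.eval y ^ n) (Q : Fin d × Fin q → (ZMod p)[X]) (l : ℕ) :
    ((scaledDerivative (A * B) ^ l) (stepanovPolynomial A B n d q Q)).eval y =
      (∑ i : Fin d × Fin q, C (c ^ i.1.1) * X ^ i.2.1 *
        (twistedDerivative (A * B) (stepanovLogDeriv A B n d i.1.1) ^ l) (Q i)).eval y := by
  rw [stepanovPolynomial, map_sum, eval_finsetSum, eval_finsetSum]
  refine Finset.sum_congr rfl fun i _ => ?_
  have hY : derivative (X ^ (p * i.2.1) : (ZMod p)[X]) = 0 := by simp [derivative_X_pow]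
  rw [pow_scaledDerivative_mul (scaledDerivative_stepanovFactor A B n d i.1.1) hY]
  simp only [eval_mul, eval_pow, eval_X, eval_C, eval_stepanovFactor hnd i.1.2.le hB hc, pow_mul,
    ZMod.pow_card]
  ring

theorem card_mul_le_of_eval_pow_eq {A₁ B : (ZMod p)[X]} (hA₁ : ¬ X ∣ A₁) (hB : ¬ X ∣ B)
    {n d r N : ℕ} (hd : 0 < d) (hnd : n * d + 1 = p) (hr : (r + N + 2) ^ 2 * d ≤ n)
    (hN : (X * A₁).natDegree + B.natDegree ≤ N) {c : ZMod p} {Z : Finset (ZMod p)}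
    (hZ : ∀ y ∈ Z, (X * A₁).eval y ≠ 0 ∧ B.eval y ≠ 0 ∧
      (X * A₁).eval y ^ n = c * B.eval y ^ n) :
    Z.card * (d * r) ≤ p * (r + 2 * N + 2) := by
  have hn : 0 < n := lt_of_lt_of_le (by positivity) hr
  have hcount : d * r * (n + d * r * N + (r + N + 2)) <
      Fintype.card (Fin d × Fin (r + N + 2)) * n := by
    have hrr : r * (d * r * N + (r + N + 2)) ≤ (N + 1) * ((r + N + 2) ^ 2 * d) := by
      have h₁ : d * r ^ 2 * N ≤ N * ((r + N + 2) ^ 2 * d) := by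
        rw [mul_comm N, mul_comm d]; gcongr; omega
      have h₂ : r * (r + N + 2) ≤ (r + N + 2) ^ 2 * d := by
        rw [sq]; exact (Nat.mul_le_mul_right _ (by omega)).trans (Nat.le_mul_of_pos_right _ hd)
      linarith
    have hrn : r * (n + d * r * N + (r + N + 2)) < (r + N + 2) * n := by
      have := hrr.trans (Nat.mul_le_mul_left _ hr)
      lia
    simpa [mul_assoc] using Nat.mul_lt_mul_of_pos_left hrn hd
  obtain ⟨Q, hQ0, hQ, hvanish⟩ := exists_sum_mul_pow_twistedDerivative_eq_zero hcount
    (W := X * A₁ * B) (V := fun i => stepanovLogDeriv (X * A₁) B n d i.1.1)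
    (g := fun i => C (c ^ i.1.1) * X ^ i.2.1) (natDegree_mul_le.trans hN)
    (fun i => (natDegree_stepanovLogDeriv_le _ _ _ _ _).trans hN)
    (fun i => (natDegree_C_mul_X_pow_le _ _).trans_lt i.2.2)
  have hP := stepanovPolynomial_ne_zero hA₁ hB hn hnd hQ0 hQ
  have hM : d * r ≤ p := by
    have : r * d ≤ (r + N + 2) ^ 2 * d := Nat.mul_le_mul_right d (by nlinarith)
    have : n ≤ n * d := Nat.le_mul_of_pos_right n hd
    lia
  have hfact (m : ℕ) (hm : m < d * r) : (m.factorial : ZMod p) ≠ 0 := by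
    rw [Ne, ZMod.natCast_eq_zero_iff, (Fact.out : p.Prime).dvd_factorial]
    omega
  have hmult (y) (hy : y ∈ Z) :
      d * r ≤ (stepanovPolynomial (X * A₁) B n d (r + N + 2) Q).rootMultiplicity y := by
    obtain ⟨hAy, hBy, hc⟩ := hZ y hy
    refine le_rootMultiplicity_of_pow_scaledDerivative (W := X * A₁ * B) hP ?_ hfact fun l hl => ?_
    · rw [eval_mul]; exact mul_ne_zero hAy hBy
    · rw [eval_pow_scaledDerivative_stepanovPolynomial hnd hBy hc, hvanish l hl, eval_zero]
  exact (card_mul_le_natDegree hmult).trans <|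
    (natDegree_stepanovPolynomial_le hd hnd hN hQ).trans_eq (by ring)

end Auxiliary

end Stepanov

section CharacterSums

open Polynomial ComplexConjugate

lemma pow_eq_one_of_mulChar_apply_eq_one {F R : Type*} [Field F] [Fintype F] [CommRing R]
    {χ : MulChar F R} {n : ℕ} (hn : n * orderOf χ = Fintype.card F - 1) {w : F} (hw : w ≠ 0)
    (h : χ w = 1) : w ^ n = 1 := by
  obtain ⟨g, hg⟩ := IsCyclic.exists_generator (α := Fˣ)
  obtain ⟨k, hk⟩ := (Submonoid.mem_powers_iff _ _).1 (mem_powers_iff_mem_zpowers.2 (hg (.mk0 w hw)))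
  have hgk : (g : F) ^ k = w := by simpa using congrArg Units.val hk
  have hχk : χ ^ k = 1 := by
    rw [MulChar.eq_iff hg, MulChar.pow_apply_coe, ← map_pow, hgk, h, MulChar.one_apply_coe]
  obtain ⟨j, rfl⟩ := orderOf_dvd_of_pow_eq_one hχk
  calc w ^ n = ((g : F) ^ (n * orderOf χ)) ^ j := by
        rw [← hgk, ← pow_mul, ← pow_mul]
        congr 1
        ring
    _ = 1 := by rw [hn, FiniteField.pow_card_sub_one_eq_one _ g.ne_zero, one_pow]

lemma sum_nthRootsFinset_one {R : Type*} [CommRing R] [IsDomain R] {ζ : R} {d : ℕ}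
    (hζ : IsPrimitiveRoot ζ d) (hd : 1 < d) : ∑ z ∈ nthRootsFinset d (1 : R), z = 0 := by
  classical
  have himage : (Finset.range d).image (ζ ^ ·) = nthRootsFinset d (1 : R) := by
    refine Finset.eq_of_subset_of_card_le (Finset.image_subset_iff.2 fun i _ => ?_) ?_
    · rw [mem_nthRootsFinset (by omega), ← pow_mul, mul_comm, pow_mul, hζ.pow_eq_one, one_pow]
    · rw [Finset.card_image_of_injOn hζ.injOn_pow, Finset.card_range, hζ.card_nthRootsFinset]
  rw [← himage, Finset.sum_image hζ.injOn_pow, hζ.geom_sum_eq_zero hd]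

/-- Subtracting `K` from the size of every fibre does not change the sum, and makes all the
coefficients nonpositive. -/
lemma norm_sum_le_of_card_fiber_le {ι : Type*} {s : Finset ι} {f : ι → ℂ} {d : ℕ} (hd : 1 < d)
    (hf : ∀ x ∈ s, f x ^ d = 1) {K : ℝ} (hK : ∀ z, ((s.filter (f · = z)).card : ℝ) ≤ K) :
    ‖∑ x ∈ s, f x‖ ≤ d * K - s.card := by
  have hd0 : 0 < d := by omega
  have hζ := Complex.isPrimitiveRoot_exp d hd0.ne'
  have hmem : ∀ x ∈ s, f x ∈ nthRootsFinset d (1 : ℂ) := fun x hx =>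
    (mem_nthRootsFinset hd0 1).2 (hf x hx)
  have hsum : ∑ x ∈ s, f x =
      ∑ z ∈ nthRootsFinset d (1 : ℂ), (((s.filter (f · = z)).card - K : ℝ) : ℂ) * z := by
    simp only [Complex.ofReal_sub, Complex.ofReal_natCast, sub_mul]
    rw [Finset.sum_sub_distrib, ← Finset.mul_sum, sum_nthRootsFinset_one hζ hd, mul_zero, sub_zero,
      ← Finset.sum_fiberwise_of_maps_to hmem]
    refine Finset.sum_congr rfl fun z _ => ?_
    rw [Finset.sum_congr rfl (g := fun _ => z) (fun x hx => (Finset.mem_filter.1 hx).2),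
      Finset.sum_const, nsmul_eq_mul]
  calc ‖∑ x ∈ s, f x‖
      ≤ ∑ z ∈ nthRootsFinset d (1 : ℂ), (K - (s.filter (f · = z)).card) := by
        rw [hsum]
        refine (norm_sum_le _ _).trans (Finset.sum_le_sum fun z hz => ?_)
        rw [norm_mul, Complex.norm_eq_one_of_pow_eq_one ((mem_nthRootsFinset hd0 1).1 hz) hd0.ne',
          mul_one, Complex.norm_real, Real.norm_eq_abs, abs_of_nonpos (sub_nonpos.2 (hK z)),
          neg_sub]
    _ = d * K - s.card := by
        rw [Finset.sum_sub_distrib, Finset.sum_const, hζ.card_nthRootsFinset, nsmul_eq_mul,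
          Finset.card_eq_sum_card_fiberwise (s := s) (fun x hx => hmem x hx)]
        push_cast
        rfl

variable {p : ℕ} [Fact p.Prime] {χ : MulChar (ZMod p) ℂ}

lemma mulChar_mul_conj (x y : ZMod p) : χ x * conj (χ y) = χ (x * y⁻¹) := by
  rw [map_mul, ← MulChar.inv_apply', ← MulChar.star_apply', starRingEnd_apply]

lemma card_filter_eval_eq_zero_le {A B : (ZMod p)[X]} (hA : A ≠ 0) (hB : B ≠ 0) :
    (Finset.univ.filter fun x => ¬ (A.eval x ≠ 0 ∧ B.eval x ≠ 0)).card ≤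
      A.natDegree + B.natDegree := by
  classical
  have hsub : (Finset.univ.filter fun x => ¬ (A.eval x ≠ 0 ∧ B.eval x ≠ 0)) ⊆
      A.roots.toFinset ∪ B.roots.toFinset := fun x hx => by
    simpa only [Finset.mem_union, Multiset.mem_toFinset, mem_roots hA, mem_roots hB, IsRoot.def,
      Finset.mem_filter, Finset.mem_univ, true_and, ← not_and_or, ne_eq, not_and_or, not_not]
      using hx
  exact (Finset.card_le_card hsub).trans <| (Finset.card_union_le _ _).trans <| add_le_add
    ((Multiset.toFinset_card_le _).trans (card_roots' A))
    ((Multiset.toFinset_card_le _).trans (card_roots' B))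

lemma card_filter_mulChar_eq_le {A₁ B : (ZMod p)[X]} (hA₁ : ¬ X ∣ A₁) (hB : ¬ X ∣ B) {n r N : ℕ}
    (hn : n * orderOf χ + 1 = p) (hr : (r + N + 2) ^ 2 * orderOf χ ≤ n)
    (hN : (X * A₁).natDegree + B.natDegree ≤ N) {s : Finset (ZMod p)}
    (hs : ∀ x ∈ s, (X * A₁).eval x ≠ 0 ∧ B.eval x ≠ 0) (z : ℂ) :
    (s.filter fun x => χ ((X * A₁).eval x) * conj (χ (B.eval x)) = z).card * (orderOf χ * r) ≤
      p * (r + 2 * N + 2) := by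
  set u : ZMod p → ZMod p := fun x => (X * A₁).eval x * (B.eval x)⁻¹
  have hu (x) (hx : x ∈ s) : u x ≠ 0 := mul_ne_zero (hs x hx).1 (inv_ne_zero (hs x hx).2)
  simp only [mulChar_mul_conj]
  rcases (s.filter fun x => χ (u x) = z).eq_empty_or_nonempty with h | ⟨x₀, hx₀⟩
  · rw [h, Finset.card_empty, zero_mul]
    exact Nat.zero_le _
  obtain ⟨hx₀s, rfl⟩ := Finset.mem_filter.1 hx₀
  refine card_mul_le_of_eval_pow_eq hA₁ hB (orderOf_pos_iff.2 (isOfFinOrder_of_finite χ)) hn hr hN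
    (c := u x₀ ^ n) fun y hy => ?_
  obtain ⟨hys, hyz⟩ := Finset.mem_filter.1 hy
  refine ⟨(hs y hys).1, (hs y hys).2, ?_⟩
  have hχu : χ (u y * (u x₀)⁻¹) = 1 := by
    rw [← mulChar_mul_conj, show χ (u y) = χ (u x₀) from hyz, mulChar_mul_conj,
      mul_inv_cancel₀ (hu x₀ hx₀s), map_one]
  have hpow := pow_eq_one_of_mulChar_apply_eq_one (n := n) (by rw [ZMod.card]; omega)
    (mul_ne_zero (hu y hys) (inv_ne_zero (hu x₀ hx₀s))) hχu
  rw [mul_pow, inv_pow, mul_inv_eq_one₀ (pow_ne_zero _ (hu x₀ hx₀s))] at hpow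
  rw [← hpow, ← mul_pow, mul_assoc, inv_mul_cancel₀ (hs y hys).2, mul_one]

theorem norm_sum_mulChar_mul_conj_le {A₁ B : (ZMod p)[X]} (hA₁ : ¬ X ∣ A₁) (hB : ¬ X ∣ B)
    {n r N : ℕ} (hχ : χ ≠ 1) (hn : n * orderOf χ + 1 = p) (hr0 : 0 < r)
    (hr : (r + N + 2) ^ 2 * orderOf χ ≤ n) (hN : (X * A₁).natDegree + B.natDegree ≤ N) :
    ‖∑ x, χ ((X * A₁).eval x) * conj (χ (B.eval x))‖ ≤ p * (2 * N + 2) / r + N := by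
  have hne {P : (ZMod p)[X]} (hP : ¬ X ∣ P) : P ≠ 0 := fun h => hP (h ▸ dvd_zero X)
  have hd : 1 < orderOf χ := by
    have := orderOf_pos_iff.2 (isOfFinOrder_of_finite χ)
    have := orderOf_eq_one_iff.not.2 hχ
    omega
  set s : Finset (ZMod p) :=
    Finset.univ.filter fun x => (X * A₁).eval x ≠ 0 ∧ B.eval x ≠ 0 with hs
  have hsN : (p : ℝ) - N ≤ s.card := by
    have hcompl := (card_filter_eval_eq_zero_le (mul_ne_zero X_ne_zero (hne hA₁)) (hne hB)).trans hN
    have htotal : s.card +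
        (Finset.univ.filter fun x => ¬ ((X * A₁).eval x ≠ 0 ∧ B.eval x ≠ 0)).card = p := by
      rw [hs, Finset.card_filter_add_card_filter_not, Finset.card_univ, ZMod.card]
    rw [sub_le_iff_le_add]
    exact_mod_cast (by omega : p ≤ s.card + N)
  have hsum : ∑ x, χ ((X * A₁).eval x) * conj (χ (B.eval x)) =
      ∑ x ∈ s, χ ((X * A₁).eval x) * conj (χ (B.eval x)) := by
    refine (Finset.sum_subset (Finset.subset_univ s) fun x _ hx => ?_).symm
    by_contra h
    refine hx (Finset.mem_filter.2 ⟨Finset.mem_univ x, ?_, ?_⟩) <;> intro h0 <;>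
      simp [h0, -eval_mul, MulChar.map_zero] at h
  have hunit (x) (hx : x ∈ s) : (χ ((X * A₁).eval x) * conj (χ (B.eval x))) ^ orderOf χ = 1 := by
    obtain ⟨-, h₁, h₂⟩ := Finset.mem_filter.1 hx
    rw [mulChar_mul_conj]
    obtain ⟨ζ, hζ, h⟩ := χ.apply_mem_rootsOfUnity_orderOf (mul_ne_zero h₁ (inv_ne_zero h₂))
    rw [← h, ← Units.val_pow_eq_pow_val, (mem_rootsOfUnity _ ζ).1 hζ, Units.val_one]
  have hfiber (z : ℂ) : ((s.filter fun x =>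
      χ ((X * A₁).eval x) * conj (χ (B.eval x)) = z).card : ℝ) ≤
        p * (r + 2 * N + 2) / (orderOf χ * r) := by
    rw [le_div_iff₀ (by positivity)]
    exact_mod_cast card_filter_mulChar_eq_le hA₁ hB hn hr hN
      (fun x hx => (Finset.mem_filter.1 hx).2) z
  rw [hsum]
  calc _ ≤ orderOf χ * (p * (r + 2 * N + 2) / (orderOf χ * r) : ℝ) - s.card :=
        norm_sum_le_of_card_fiber_le hd hunit hfiber
    _ = p * (2 * N + 2) / r + p - s.card := by field_simp; ring
    _ ≤ p * (2 * N + 2) / r + N := by linarith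

/-- The correlation `∏ χ(x + a) ∏ χ̄(x + b)`, over `a ∈ S` and `b ∈ T`, of shifts of `χ`. -/
noncomputable def shiftProd (χ : MulChar (ZMod p) ℂ) (S T : Finset (ZMod p)) (x : ZMod p) : ℂ :=
  (∏ a ∈ S, χ (x + a)) * ∏ b ∈ T, conj (χ (x + b))

lemma shiftProd_add (S T : Finset (ZMod p)) (t x : ZMod p) :
    shiftProd χ S T (x + t) =
      shiftProd χ (S.map (addLeftEmbedding t)) (T.map (addLeftEmbedding t)) x := by
  simp [shiftProd, add_assoc]

lemma conj_shiftProd (S T : Finset (ZMod p)) (x : ZMod p) :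
    conj (shiftProd χ S T x) = shiftProd χ T S x := by
  simp [shiftProd, mul_comm]

lemma norm_sum_shiftProd_le_of_zero_mem {n r N : ℕ} (hχ : χ ≠ 1) (hn : n * orderOf χ + 1 = p)
    (hr0 : 0 < r) (hr : (r + N + 2) ^ 2 * orderOf χ ≤ n) {S T : Finset (ZMod p)}
    (hST : Disjoint S T) (h0 : 0 ∈ S) (hN : S.card + T.card ≤ N) :
    ‖∑ x, shiftProd χ S T x‖ ≤ p * (2 * N + 2) / r + N := by
  let P (U : Finset (ZMod p)) : (ZMod p)[X] := ∏ a ∈ U, (X + C a)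
  have hdeg (U : Finset (ZMod p)) : (P U).natDegree = U.card := by
    simp [P, natDegree_prod_of_monic _ _ fun a _ => monic_X_add_C a]
  have heval (U : Finset (ZMod p)) (x : ZMod p) : (P U).eval x = ∏ a ∈ U, (x + a) := by
    simp [P, eval_prod]
  have hX {U : Finset (ZMod p)} (hU : 0 ∉ U) : ¬ X ∣ P U := by
    rw [X_dvd_iff, coeff_zero_eq_eval_zero, heval, Finset.prod_eq_zero_iff]
    rintro ⟨a, ha, h⟩
    rw [zero_add] at h
    exact hU (h ▸ ha)
  have hS : X * P (S.erase 0) = P S := by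
    simp only [P]
    rw [← Finset.mul_prod_erase S _ h0, C_0, add_zero]
  have hsum : ∑ x, shiftProd χ S T x =
      ∑ x, χ ((X * P (S.erase 0)).eval x) * conj (χ ((P T).eval x)) := by
    simp only [shiftProd, hS, heval, map_prod]
  rw [hsum]
  exact norm_sum_mulChar_mul_conj_le (hX (Finset.notMem_erase 0 S))
    (hX (Finset.disjoint_left.1 hST h0)) hχ hn hr0 hr (by rwa [hS, hdeg, hdeg])

theorem norm_sum_shiftProd_le {n r N : ℕ} (hχ : χ ≠ 1) (hn : n * orderOf χ + 1 = p)
    (hr0 : 0 < r) (hr : (r + N + 2) ^ 2 * orderOf χ ≤ n) {S T : Finset (ZMod p)}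
    (hST : Disjoint S T) (hne : (S ∪ T).Nonempty) (hN : S.card + T.card ≤ N) :
    ‖∑ x, shiftProd χ S T x‖ ≤ p * (2 * N + 2) / r + N := by
  wlog hS : S.Nonempty generalizing S T
  · have hT : T.Nonempty := by
      simpa [Finset.not_nonempty_iff_eq_empty.1 hS] using hne
    have hswap := this hST.symm (Finset.union_comm S T ▸ hne) (by omega) hT
    simp only [← conj_shiftProd S T] at hswap
    rwa [← map_sum, RCLike.norm_conj] at hswap
  obtain ⟨a, ha⟩ := hS
  rw [← Equiv.sum_comp (Equiv.addRight (-a))]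
  simp only [Equiv.coe_addRight, shiftProd_add]
  refine norm_sum_shiftProd_le_of_zero_mem hχ hn hr0 hr ((Finset.disjoint_map _).2 hST) ?_
    (by simpa using hN)
  exact Finset.mem_map.2 ⟨a, ha, by simp⟩

end CharacterSums

section Expectations

open Finset (univ)
open scoped BigOperators

variable {X Y Z : Type*}

/-- The indicator function of a set, with real values. -/
noncomputable def ind (A : Set X) : X → ℝ := A.indicator 1

lemma ind_of_mem {A : Set X} {x : X} (h : x ∈ A) : ind A x = 1 := by simp [ind, h]

lemma ind_of_notMem {A : Set X} {x : X} (h : x ∉ A) : ind A x = 0 := by simp [ind, h]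

lemma ind_nonneg (A : Set X) (x : X) : 0 ≤ ind A x :=
  Set.indicator_nonneg (fun _ _ => zero_le_one) x

lemma ind_le_one (A : Set X) (x : X) : ind A x ≤ 1 :=
  Set.indicator_le_self' (fun _ _ => zero_le_one) x

variable [Fintype X] [Fintype Y] [Fintype Z]

/-- The proportion of elements of a finite type that lie in `A`. -/
noncomputable def density (A : Set X) : ℝ := 𝔼 x, ind A x

lemma expect_mono {f g : X → ℝ} (h : ∀ x, f x ≤ g x) : 𝔼 x, f x ≤ 𝔼 x, g x :=
  Finset.expect_le_expect fun x _ => h x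

lemma expect_nonneg {f : X → ℝ} (h : ∀ x, 0 ≤ f x) : 0 ≤ 𝔼 x, f x :=
  Finset.expect_nonneg fun x _ => h x

lemma expect_le_of_forall_le {f : X → ℝ} {c : ℝ} (hc : 0 ≤ c) (h : ∀ x, f x ≤ c) :
    𝔼 x, f x ≤ c := by
  cases isEmpty_or_nonempty X
  · simpa using hc
  · exact Finset.expect_le Finset.univ_nonempty fun x _ => h x

lemma density_nonneg (A : Set X) : 0 ≤ density A := expect_nonneg (ind_nonneg A)

lemma density_le_one (A : Set X) : density A ≤ 1 :=
  expect_le_of_forall_le zero_le_one (ind_le_one A)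

lemma density_mono {A B : Set X} (h : A ⊆ B) : density A ≤ density B :=
  expect_mono (Set.indicator_le_indicator_of_subset h fun _ => zero_le_one)

lemma exists_expect_le [Nonempty X] (f : X → ℝ) : ∃ x, 𝔼 y, f y ≤ f x := by
  obtain ⟨x, -, h⟩ := Finset.exists_le_of_le_expect (s := univ) (f := f) Finset.univ_nonempty le_rfl
  exact ⟨x, h⟩

lemma nonempty_of_density_pos {A : Set X} (h : 0 < density A) : A.Nonempty := by
  by_contra hA
  simp [density, ind, Set.not_nonempty_iff_eq_empty.1 hA] at h

lemma expect_le_density_setOf_le_add {f : X → ℝ} {ε : ℝ} (hε : 0 ≤ ε) (hf : ∀ x, f x ≤ 1) :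
    𝔼 x, f x ≤ density {x | ε ≤ f x} + ε := by
  calc 𝔼 x, f x ≤ 𝔼 x, (ind {x | ε ≤ f x} x + ε) := expect_mono fun x => by
        by_cases hx : ε ≤ f x
        · rw [ind_of_mem (by exact hx)]
          linarith [hf x]
        · rw [ind_of_notMem (by exact hx)]
          linarith
    _ = density {x | ε ≤ f x} + 𝔼 _x : X, ε := Finset.expect_add_distrib ..
    _ ≤ _ := by
      gcongr
      exact expect_le_of_forall_le hε fun _ => le_rfl

lemma half_le_density_setOf_half_le {f : X → ℝ} {δ : ℝ} (hδ : 0 ≤ δ) (hf : ∀ x, f x ≤ 1)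
    (h : δ ≤ 𝔼 x, f x) : δ / 2 ≤ density {x | δ / 2 ≤ f x} := by
  linarith [expect_le_density_setOf_le_add (div_nonneg hδ zero_le_two) hf]

lemma density_mul_le_expect {f : X → ℝ} {A : Set X} {t : ℝ} (hf : ∀ x, 0 ≤ f x)
    (ht : ∀ x ∈ A, t ≤ f x) : density A * t ≤ 𝔼 x, f x := by
  rw [density, Finset.expect_mul]
  refine expect_mono fun x => ?_
  by_cases hx : x ∈ A
  · simpa [ind_of_mem hx] using ht x hx
  · simpa [ind_of_notMem hx] using hf x

lemma exists_density_div_card_le {T : Type*} [Fintype T] {G : Set X} (P : T → Set X)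
    (h : ∀ x ∈ G, ∃ t, x ∈ P t) (hG : 0 < density G) :
    ∃ t, density G / Fintype.card T ≤ density (P t) := by
  obtain ⟨x₀, hx₀⟩ := nonempty_of_density_pos hG
  have : Nonempty T := ⟨(h x₀ hx₀).choose⟩
  have hunion : density G ≤ ∑ t, density (P t) := by
    simp only [density]
    rw [← Finset.expect_sum_comm]
    refine expect_mono fun x => ?_
    by_cases hx : x ∈ G
    · obtain ⟨t, ht⟩ := h x hx
      rw [ind_of_mem hx, ← ind_of_mem ht]
      exact Finset.single_le_sum (f := fun t => ind (P t) x) (fun t _ => ind_nonneg _ _)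
        (Finset.mem_univ t)
    · rw [ind_of_notMem hx]
      exact Finset.sum_nonneg fun t _ => ind_nonneg _ _
  obtain ⟨t, ht⟩ := exists_expect_le fun t => density (P t)
  refine ⟨t, le_trans ?_ ht⟩
  rw [Fintype.expect_eq_sum_div_card]
  gcongr

lemma expect_prod_type {M : Type*} [AddCommMonoid M] [Module ℚ≥0 M] (f : X × Y → M) :
    𝔼 z, f z = 𝔼 x, 𝔼 y, f (x, y) := by
  rw [← Finset.expect_product]
  rfl

lemma expect_comp_of_card_fiber_eq [DecidableEq Z] {Φ : X → Z} {c : ℕ} (hc : c ≠ 0)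
    (h : ∀ z, (univ.filter (Φ · = z)).card = c) (f : Z → ℝ) : 𝔼 x, f (Φ x) = 𝔼 z, f z := by
  have hcard : Fintype.card X = c * Fintype.card Z := by
    rw [← Finset.card_univ, Finset.card_eq_sum_card_fiberwise (f := Φ) (t := univ) (by simp)]
    simp [h, mul_comm]
  have hfiber (z) : ∑ x ∈ univ.filter (Φ · = z), f (Φ x) = c * f z := by
    rw [Finset.sum_congr rfl fun x hx => by rw [(Finset.mem_filter.1 hx).2], Finset.sum_const, h,
      nsmul_eq_mul]
  simp_rw [Fintype.expect_eq_sum_div_card, hcard, ← Finset.sum_fiberwise (s := univ) (g := Φ),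
    hfiber, ← Finset.mul_sum, Nat.cast_mul]
  exact mul_div_mul_left _ _ (Nat.cast_ne_zero.2 hc)

section Cube

variable {ι ι₁ ι₂ β : Type*} [Fintype ι] [DecidableEq ι] [Fintype ι₁] [DecidableEq ι₁]
  [Fintype ι₂] [DecidableEq ι₂] [Fintype β]

lemma expect_sumArrow (f : (ι₁ ⊕ ι₂ → β) → ℝ) :
    𝔼 w, f w = 𝔼 x, 𝔼 y, f (Sum.elim x y) := by
  rw [← expect_prod_type fun z : (ι₁ → β) × (ι₂ → β) => f (Sum.elim z.1 z.2)]
  refine Fintype.expect_equiv (Equiv.sumArrowEquivProdArrow ι₁ ι₂ β) _ _ fun w => ?_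
  exact congrArg f (Sum.elim_comp_inl_inr w).symm

/-- Exchanging the restriction of `z` to the range of `c` with `x` is an involution. -/
lemma expect_extend (c : ι₁ ↪ ι) (f : (ι → β) → ℝ) :
    𝔼 z : ι → β, 𝔼 x : ι₁ → β, f (Function.extend c x z) = 𝔼 z, f z := by
  let swap (q : (ι → β) × (ι₁ → β)) : (ι → β) × (ι₁ → β) := (Function.extend c q.2 q.1, q.1 ∘ c)
  have hswap : Function.Involutive swap := by
    rintro ⟨z, x⟩
    refine Prod.ext (funext fun i => ?_) (funext fun j => by simp [swap, c.injective.extend_apply])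
    by_cases h : ∃ j, c j = i
    · obtain ⟨j, rfl⟩ := h
      simp [swap, c.injective.extend_apply]
    · simp [swap, Function.extend_apply' _ _ _ h]
  rw [← expect_prod_type fun q : (ι → β) × (ι₁ → β) => f (Function.extend c q.2 q.1),
    Fintype.expect_equiv hswap.toPerm (fun q => f (Function.extend c q.2 q.1)) (fun q => f q.1)
      fun q => rfl, expect_prod_type]
  refine Finset.expect_congr rfl fun z _ => ?_
  have : Nonempty (ι₁ → β) := ⟨z ∘ c⟩
  exact Fintype.expect_const (f z)

lemma exists_density_le_density_extend [Nonempty β] (c : ι₁ ↪ ι) (A : Set (ι → β)) :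
    ∃ z, density A ≤ density {x : ι₁ → β | Function.extend c x z ∈ A} := by
  obtain ⟨z, hz⟩ := exists_expect_le fun z : ι → β => 𝔼 x : ι₁ → β, ind A (Function.extend c x z)
  rw [expect_extend] at hz
  exact ⟨z, hz⟩

lemma expect_prod (g : ι → β → ℝ) : 𝔼 w : ι → β, ∏ i, g i (w i) = ∏ i, 𝔼 b, g i b := by
  simp_rw [Fintype.expect_eq_sum_div_card]
  rw [Finset.prod_div_distrib, Finset.prod_univ_sum]
  simp

lemma density_forall_mem [Nonempty β] (s : Finset ι) (P : Set β) :
    density {w : ι → β | ∀ i ∈ s, w i ∈ P} = density P ^ s.card := by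
  have hind (w : ι → β) :
      ind {w : ι → β | ∀ i ∈ s, w i ∈ P} w = ∏ i, if i ∈ s then ind P (w i) else 1 := by
    rw [Finset.prod_ite_mem, Finset.univ_inter]
    by_cases h : ∀ i ∈ s, w i ∈ P
    · rw [ind_of_mem (by exact h), Finset.prod_congr rfl fun i hi => ind_of_mem (h i hi),
        Finset.prod_const_one]
    · rw [ind_of_notMem (by exact h)]
      push Not at h
      obtain ⟨i, hi, hw⟩ := h
      exact (Finset.prod_eq_zero (f := fun i => ind P (w i)) hi (ind_of_notMem hw)).symm
  have hexpect (i : ι) : 𝔼 b, (if i ∈ s then ind P b else 1) = if i ∈ s then density P else 1 := by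
    split_ifs <;> simp [density]
  rw [density]
  simp_rw [hind]
  rw [expect_prod fun i b => if i ∈ s then ind P b else 1]
  simp_rw [hexpect]
  rw [Finset.prod_ite_mem, Finset.univ_inter, Finset.prod_const]

end Cube

end Expectations

section GrahamRothschild

open Combinatorics (Subspace)

universe u

variable {α β κ η ι ι₁ : Type*}

/-- The composite of two combinatorial subspaces. -/
def subspaceComp (U : Subspace κ α ι) (V : Subspace η α κ) : Subspace η α ι where
  idxFun i := (U.idxFun i).elim Sum.inl V.idxFun
  proper k := by
    obtain ⟨j, hj⟩ := V.proper k
    obtain ⟨i, hi⟩ := U.proper j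
    exact ⟨i, by simp [hi, hj]⟩

/-- A combinatorial subspace over the alphabet `α`, regarded as one over `Option α`. Words over
`Option α` containing `none` encode combinatorial lines over `α`, with `none` as the wildcard. -/
def subspaceOption (U : Subspace η α ι) : Subspace η (Option α) ι where
  idxFun i := (U.idxFun i).map some id
  proper k := by
    obtain ⟨i, hi⟩ := U.proper k
    exact ⟨i, by simp [hi]⟩

/-- The combinatorial subspace of all words that agree with `z` outside the range of `c`. -/
noncomputable def subspaceOfEmbedding (c : ι₁ ↪ ι) (z : ι → β) : Subspace ι₁ β ι where
  idxFun := Function.extend c Sum.inr (Sum.inl ∘ z)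
  proper k := ⟨c k, c.injective.extend_apply ..⟩

/-- The combinatorial subspace of all words on `ι ⊕ ι₁` with second half `y`. -/
def subspaceInl (y : ι₁ → β) : Subspace ι β (ι ⊕ ι₁) where
  idxFun := Sum.elim Sum.inr (Sum.inl ∘ y)
  proper k := ⟨Sum.inl k, rfl⟩

/-- The combinatorial subspace of all words on `ι ⊕ ι₁` with first half `x`. -/
def subspaceInr (x : ι → β) : Subspace ι₁ β (ι ⊕ ι₁) where
  idxFun := Sum.elim (Sum.inl ∘ x) Sum.inr
  proper k := ⟨Sum.inr k, rfl⟩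

/-- The product of two combinatorial subspaces. -/
def subspaceSum (V : Subspace κ β ι) (U : Subspace η β ι₁) : Subspace (κ ⊕ η) β (ι ⊕ ι₁) where
  idxFun := Sum.elim (fun i => (V.idxFun i).map id Sum.inl) fun i => (U.idxFun i).map id Sum.inr
  proper k := by
    rcases k with k | k
    · obtain ⟨i, hi⟩ := V.proper k
      exact ⟨Sum.inl i, by simp [hi]⟩
    · obtain ⟨i, hi⟩ := U.proper k
      exact ⟨Sum.inr i, by simp [hi]⟩

lemma subspaceComp_apply (U : Subspace κ α ι) (V : Subspace η α κ) (v : η → α) :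
    subspaceComp U V v = U (V v) := by
  funext i
  rcases h : U.idxFun i <;> simp [Subspace.apply_def, subspaceComp, h]

lemma subspaceInl_apply (x : ι → β) (y : ι₁ → β) : subspaceInl y x = Sum.elim x y := by
  funext i
  rcases i with i | i <;> rfl

lemma subspaceInr_apply (x : ι → β) (y : ι₁ → β) : subspaceInr x y = Sum.elim x y := by
  funext i
  rcases i with i | i <;> rfl

lemma subspaceSum_apply (V : Subspace κ β ι) (U : Subspace η β ι₁) (v : κ ⊕ η → β) :
    subspaceSum V U v = Sum.elim (V (v ∘ Sum.inl)) (U (v ∘ Sum.inr)) := by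
  funext i
  rcases i with i | i
  · rcases h : V.idxFun i <;> simp [Subspace.apply_def, subspaceSum, h]
  · rcases h : U.idxFun i <;> simp [Subspace.apply_def, subspaceSum, h]

lemma subspaceOption_comp_apply (U : Subspace κ α ι) (V : Subspace η α κ) (w : η → Option α) :
    subspaceOption (subspaceComp U V) w = subspaceOption U (subspaceOption V w) := by
  funext i
  rcases h : U.idxFun i <;> simp [Subspace.apply_def, subspaceOption, subspaceComp, h]

lemma subspaceOfEmbedding_apply (c : ι₁ ↪ ι) (z : ι → β) (v : ι₁ → β) :
    subspaceOfEmbedding c z v = Function.extend c v z := by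
  funext i
  by_cases h : ∃ j, c j = i
  · obtain ⟨j, rfl⟩ := h
    simp [Subspace.apply_def, subspaceOfEmbedding, c.injective.extend_apply]
  · simp [Subspace.apply_def, subspaceOfEmbedding, Function.extend_apply' _ _ _ h]

/-- The value of `c` at a word depends only on the part up to any given occurrence of `none`. -/
def DependsUpToNone {m : ℕ} {C : Type*} (c : (Fin m → Option α) → C) : Prop :=
  ∀ ⦃w w' : Fin m → Option α⦄ ⦃f : Fin m⦄, w f = none → (∀ i ≤ f, w i = w' i) → c w = c w'

/-- The first occurrence of `none` in the word `w` is at position `f`. -/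
def IsFirstNone {m : ℕ} (w : Fin m → Option α) (f : Fin m) : Prop :=
  w f = none ∧ ∀ i < f, w i ≠ none

lemma exists_isFirstNone {m : ℕ} {w : Fin m → Option α} (h : ∃ i, w i = none) :
    ∃ f, IsFirstNone w f :=
  ⟨wellFounded_lt.min {i | w i = none} h, wellFounded_lt.min_mem _ h,
    fun i hi hn => wellFounded_lt.not_lt_min {i | w i = none} (x := i) hn hi⟩

/-- A subspace whose extra leading parameter is copied to a new coordinate and also takes the place
of the constants `none` of `V`. -/
def subspaceCons {m : ℕ} (V : Subspace κ (Option α) ι) (U : Subspace (Fin m) α κ) :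
    Subspace (Fin (m + 1)) α (Option ι) where
  idxFun o := o.elim (Sum.inr 0) fun i => (V.idxFun i).elim
    (fun x => x.elim (Sum.inr 0) Sum.inl) fun j => (U.idxFun j).map id Fin.succ
  proper k := by
    refine Fin.cases ⟨none, rfl⟩ (fun l => ?_) k
    obtain ⟨j, hj⟩ := U.proper l
    obtain ⟨i, hi⟩ := V.proper j
    exact ⟨some i, by simp [hi, hj]⟩

lemma subspaceOption_cons_apply_none {m : ℕ} (V : Subspace κ (Option α) ι)
    (U : Subspace (Fin m) α κ) {w : Fin (m + 1) → Option α} (hw : w 0 = none) :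
    subspaceOption (subspaceCons V U) w =
      fun o => o.elim none (V (subspaceOption U (Fin.tail w))) := by
  funext o
  rcases o with _ | i
  · simp [Subspace.apply_def, subspaceOption, subspaceCons, hw]
  rcases hV : V.idxFun i with (_ | a) | j
  · simp [Subspace.apply_def, subspaceOption, subspaceCons, hV, hw]
  · simp [Subspace.apply_def, subspaceOption, subspaceCons, hV]
  · rcases hU : U.idxFun j <;>
      simp [Subspace.apply_def, subspaceOption, subspaceCons, hV, hU, Fin.tail]

lemma subspaceOption_cons_apply_some {m : ℕ} (V : Subspace κ (Option α) ι)
    (U : Subspace (Fin m) α κ) {w : Fin (m + 1) → Option α} {b : α} (hw : w 0 = some b) :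
    subspaceOption (subspaceCons V U) w = fun o => o.elim (some b) fun i =>
      (V.idxFun i).elim (fun x => some (x.getD b)) (subspaceOption U (Fin.tail w)) := by
  funext o
  rcases o with _ | i
  · simp [Subspace.apply_def, subspaceOption, subspaceCons, hw]
  rcases hV : V.idxFun i with (_ | a) | j
  · simp [Subspace.apply_def, subspaceOption, subspaceCons, hV, hw]
  · simp [Subspace.apply_def, subspaceOption, subspaceCons, hV]
  · rcases hU : U.idxFun j <;>
      simp [Subspace.apply_def, subspaceOption, subspaceCons, hV, hU, Fin.tail]

theorem exists_subspace_dependsUpToNone (α : Type u) [Finite α] (m : ℕ) (C : Type u) [Finite C] :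
    ∃ (ι : Type) (_ : Fintype ι), ∀ c : (ι → Option α) → C, ∃ U : Subspace (Fin m) α ι,
      DependsUpToNone fun w => c (subspaceOption U w) := by
  induction m generalizing C with
  | zero => exact ⟨Empty, inferInstance, fun c => ⟨⟨nofun, nofun⟩, nofun⟩⟩
  | succ m ih =>
    obtain ⟨κ, _, hκ⟩ := ih (α → C)
    obtain ⟨ι, _, hι⟩ := Subspace.exists_mono_in_high_dimension (Option α) C κ
    refine ⟨Option ι, inferInstance, fun c => ?_⟩
    obtain ⟨V, y, hV⟩ := hι fun x => c fun o => o.elim none x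
    obtain ⟨U, hU⟩ := hκ fun w b => c fun o => o.elim (some b) fun i =>
      (V.idxFun i).elim (fun x => some (x.getD b)) w
    refine ⟨subspaceCons V U, fun w w' f hf hww' => ?_⟩
    have h0 : w 0 = w' 0 := hww' 0 (Fin.zero_le _)
    rcases hw0 : w 0 with _ | b
    · simp only [subspaceOption_cons_apply_none V U hw0,
        subspaceOption_cons_apply_none V U (h0 ▸ hw0), hV]
    · simp only [subspaceOption_cons_apply_some V U hw0,
        subspaceOption_cons_apply_some V U (h0 ▸ hw0)]
      have hf0 : f ≠ 0 := fun h => by simp [← h, hf] at hw0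
      obtain ⟨f', rfl⟩ := Fin.exists_succ_eq.2 hf0
      exact congrFun (hU (w := Fin.tail w) (w' := Fin.tail w') hf
        fun i hi => hww' _ (Fin.succ_le_succ_iff.2 hi)) b

/-- The concatenation of two subspaces, the parameter of the first one being the leading one. -/
def subspaceAppend {l m n : ℕ} (V : Subspace Unit α (Fin l)) (U : Subspace (Fin m) α (Fin n)) :
    Subspace (Fin (m + 1)) α (Fin (l + n)) where
  idxFun := Fin.append (fun i => (V.idxFun i).map id fun _ => 0)
    fun j => (U.idxFun j).map id Fin.succ
  proper k := by
    refine Fin.cases ?_ (fun l => ?_) k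
    · obtain ⟨i, hi⟩ := V.proper ()
      exact ⟨Fin.castAdd n i, by simp [hi]⟩
    · obtain ⟨j, hj⟩ := U.proper l
      exact ⟨Fin.natAdd _ j, by simp [hj]⟩

lemma subspaceOption_append_apply {l m n : ℕ} (V : Subspace Unit α (Fin l))
    (U : Subspace (Fin m) α (Fin n)) (w : Fin (m + 1) → Option α) :
    subspaceOption (subspaceAppend V U) w =
      Fin.append (subspaceOption V fun _ => w 0) (subspaceOption U (Fin.tail w)) := by
  funext i
  refine Fin.addCases (fun i => ?_) (fun i => ?_) i
  · rcases h : V.idxFun i <;> simp [Subspace.apply_def, subspaceOption, subspaceAppend, h]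
  · rcases h : U.idxFun i <;> simp [Subspace.apply_def, subspaceOption, subspaceAppend, h, Fin.tail]

lemma subspaceOption_apply_some (V : Subspace η α ι) (b : α) :
    subspaceOption V (fun _ => some b) = fun i => some (V (fun _ => b) i) := by
  funext i
  rcases h : V.idxFun i <;> simp [Subspace.apply_def, subspaceOption, h]

/-- The Hales-Jewett theorem, applied to the first block, frees the colour from the letters before
the first `none`. -/
theorem exists_subspace_eq_of_isFirstNone (α C : Type*) [Finite α] [Nonempty α] [Finite C]
    (m : ℕ) : ∃ n : ℕ, ∀ c : (Fin n → Option α) → C, DependsUpToNone c →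
      ∃ U : Subspace (Fin m) α (Fin n), ∀ w w' f, IsFirstNone w f → IsFirstNone w' f →
        c (subspaceOption U w) = c (subspaceOption U w') := by
  induction m with
  | zero => exact ⟨0, fun c _ => ⟨⟨nofun, nofun⟩, nofun⟩⟩
  | succ m ih =>
    obtain ⟨n, hn⟩ := ih
    obtain ⟨l, hl⟩ := Subspace.exists_mono_in_high_dimension_fin α ((Fin n → Option α) → C) Unit
    refine ⟨l + n, fun c hc => ?_⟩
    obtain ⟨V, C₀, hV⟩ := hl fun x y => c (Fin.append (fun i => some (x i)) y)
    have hC₀ {w : Fin (m + 1) → Option α} (hw0 : w 0 ≠ none) (y) :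
        c (Fin.append (subspaceOption V fun _ => w 0) y) = C₀ y := by
      obtain ⟨b, hb⟩ := Option.ne_none_iff_exists'.1 hw0
      rw [← hV fun _ => b, hb, subspaceOption_apply_some]
    have hC₀_depends : DependsUpToNone C₀ := fun w w' f hf hww' => by
      rw [← hV fun _ => Classical.arbitrary α]
      refine hc (f := Fin.natAdd l f) (by simpa using hf) fun i => ?_
      refine Fin.addCases (fun i _ => by simp) (fun i hi => ?_) i
      simpa using hww' i (by simpa using hi)
    obtain ⟨U, hU⟩ := hn C₀ hC₀_depends
    refine ⟨subspaceAppend V U, fun w w' f => ?_⟩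
    rw [subspaceOption_append_apply, subspaceOption_append_apply]
    refine Fin.cases ?_ (fun g => ?_) f
    · rintro ⟨h, -⟩ ⟨h', -⟩
      obtain ⟨i, hi⟩ := V.proper ()
      refine hc (f := Fin.castAdd n i) (by simp [Subspace.apply_def, subspaceOption, hi, h]) ?_
      refine Fin.addCases (fun j _ => by simp [h, h']) fun j hj => ?_
      exact absurd (Fin.le_def.1 hj) (by simp only [Fin.val_natAdd, Fin.val_castAdd]; omega)
    · rintro ⟨h, hw⟩ ⟨h', hw'⟩
      rw [hC₀ (hw 0 (Fin.succ_pos g)), hC₀ (hw' 0 (Fin.succ_pos g))]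
      exact hU _ _ g ⟨h, fun i hi => hw _ (Fin.succ_lt_succ_iff.2 hi)⟩
        ⟨h', fun i hi => hw' _ (Fin.succ_lt_succ_iff.2 hi)⟩

/-- The Graham-Rothschild theorem for colourings of lines. -/
theorem exists_subspace_eq_of_exists_none (α C : Type u) [Finite α] [Nonempty α] [Finite C]
    (η : Type*) [Finite η] : ∃ (ι : Type) (_ : Fintype ι), ∀ c : (ι → Option α) → C,
      ∃ U : Subspace η α ι, ∀ w w' : η → Option α, (∃ i, w i = none) → (∃ i, w' i = none) →
        c (subspaceOption U w) = c (subspaceOption U w') := by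
  classical
  have := Fintype.ofFinite C
  have := Fintype.ofFinite η
  let m := Fintype.card C * Fintype.card η
  obtain ⟨n, hn⟩ := exists_subspace_eq_of_isFirstNone α C m
  obtain ⟨ι, _, hι⟩ := exists_subspace_dependsUpToNone α n C
  refine ⟨ι, inferInstance, fun c => ?_⟩
  obtain ⟨U₁, hU₁⟩ := hι c
  obtain ⟨U₂, hU₂⟩ := hn _ hU₁
  let a₀ : α := Classical.arbitrary α
  let color (f : Fin m) : C :=
    c (subspaceOption U₁ (subspaceOption U₂ fun i => if i < f then some a₀ else none))
  have hcolor {w f} (h : IsFirstNone w f) :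
      c (subspaceOption U₁ (subspaceOption U₂ w)) = color f :=
    hU₂ w _ f h ⟨by simp, fun i hi => by simp [hi]⟩
  have : Nonempty C := ⟨c fun _ => none⟩
  obtain ⟨y, hy⟩ := Fintype.exists_le_card_fiber_of_mul_le_card color (n := Fintype.card η)
    (by simp [m])
  obtain ⟨e⟩ : Nonempty (η ↪ {f // color f = y}) := Function.Embedding.nonempty_of_card_le <| by
    rwa [Fintype.card_subtype]
  let e' : η ↪ Fin m := e.trans (Function.Embedding.subtype _)
  let U₃ : Subspace η α (Fin m) := subspaceOfEmbedding e' fun _ => a₀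
  have hU₃ {w : η → Option α} {i} (hi : subspaceOption U₃ w i = none) : color i = y := by
    by_cases h : ∃ k, e' k = i
    · obtain ⟨k, rfl⟩ := h
      exact (e k).2
    · simp [U₃, Subspace.apply_def, subspaceOption, subspaceOfEmbedding,
        Function.extend_apply' _ _ _ h] at hi
  refine ⟨subspaceComp U₁ (subspaceComp U₂ U₃), ?_⟩
  suffices hy : ∀ w : η → Option α, (∃ i, w i = none) →
      c (subspaceOption (subspaceComp U₁ (subspaceComp U₂ U₃)) w) = y from
    fun w w' hw hw' => (hy w hw).trans (hy w' hw').symm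
  rintro w ⟨k, hk⟩
  obtain ⟨f, hf⟩ := exists_isFirstNone (w := subspaceOption U₃ w) ⟨e' k, by
    simp [U₃, Subspace.apply_def, subspaceOption, subspaceOfEmbedding,
      e'.injective.extend_apply, hk]⟩
  rw [subspaceOption_comp_apply, subspaceOption_comp_apply, hcolor hf, hU₃ hf.1]

end GrahamRothschild

section DenseHalesJewett

open Combinatorics (Subspace)
open scoped BigOperators

variable {β κ ι ι₁ ι₂ Y : Type*} [Fintype β] [Fintype Y]

instance [Finite ι] [Finite β] [Finite κ] : Finite (Subspace κ β ι) :=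
  Finite.of_injective Subspace.idxFun fun
    | ⟨_, _⟩, ⟨_, _⟩, rfl => rfl

/-- In every cube over `β` of sufficiently large dimension, each set of density at least `δ`
contains a combinatorial subspace with parameters indexed by `κ`. -/
def DenseHalesJewett (β κ : Type*) [Fintype β] (δ : ℝ) : Prop :=
  ∃ n, ∀ (ι : Type) [Fintype ι] [DecidableEq ι], n ≤ Fintype.card ι → ∀ A : Set (ι → β),
    δ ≤ density A → ∃ W : Subspace κ β ι, ∀ v, W v ∈ A

lemma denseHalesJewett_of_cube [Nonempty β] {δ : ℝ} (ι₀ : Type) [Fintype ι₀] [DecidableEq ι₀]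
    (h : ∀ A : Set (ι₀ → β), δ ≤ density A → ∃ W : Subspace κ β ι₀, ∀ v, W v ∈ A) :
    DenseHalesJewett β κ δ := by
  refine ⟨Fintype.card ι₀, fun ι _ _ hcard A hA => ?_⟩
  obtain ⟨c⟩ := Function.Embedding.nonempty_of_card_le hcard
  obtain ⟨z, hz⟩ := exists_density_le_density_extend c A
  obtain ⟨W, hW⟩ := h _ (hA.trans hz)
  refine ⟨subspaceComp (subspaceOfEmbedding c z) W, fun v => ?_⟩
  rw [subspaceComp_apply, subspaceOfEmbedding_apply]
  exact hW v

lemma DenseHalesJewett.mono {δ δ' : ℝ} (h : DenseHalesJewett β κ δ) (hδ : δ ≤ δ') :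
    DenseHalesJewett β κ δ' := by
  obtain ⟨n, hn⟩ := h
  exact ⟨n, fun ι _ _ hcard A hA => hn ι hcard A (hδ.trans hA)⟩

lemma exists_subspace_density_forall_mem [Finite κ] [Fintype ι] [DecidableEq ι] {δ : ℝ}
    (hδ : 0 < δ) (h : ∀ A : Set (ι → β), δ / 2 ≤ density A → ∃ W : Subspace κ β ι, ∀ v, W v ∈ A)
    (A : Y → Set (ι → β)) (hA : δ ≤ 𝔼 y, density (A y)) :
    ∃ W : Subspace κ β ι,
      δ / 2 / (Nat.card (Subspace κ β ι) + 1) ≤ density {y | ∀ v, W v ∈ A y} := by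
  have := Fintype.ofFinite (Subspace κ β ι)
  have hgood := half_le_density_setOf_half_le hδ.le (fun y => density_le_one (A y)) hA
  obtain ⟨W, hW⟩ := exists_density_div_card_le (fun W : Subspace κ β ι => {y | ∀ v, W v ∈ A y})
    (fun y hy => h (A y) hy) ((half_pos hδ).trans_le hgood)
  refine ⟨W, le_trans ?_ hW⟩
  rw [Nat.card_eq_fintype_card]
  have : Nonempty (Subspace κ β ι) := ⟨W⟩
  exact div_le_div₀ (density_nonneg _) hgood (Nat.cast_pos.2 Fintype.card_pos) (by simp)

lemma density_sumArrow [Fintype ι₁] [DecidableEq ι₁] [Fintype ι₂] [DecidableEq ι₂]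
    (A : Set (ι₁ ⊕ ι₂ → β)) :
    density A = 𝔼 y : ι₂ → β, density {x : ι₁ → β | Sum.elim x y ∈ A} := by
  rw [density, expect_sumArrow, Finset.expect_comm]
  rfl

lemma DenseHalesJewett.congr {β' κ' : Type*} [Fintype β'] {δ : ℝ} (h : DenseHalesJewett β κ δ)
    (e : κ ≃ κ') (e' : β ≃ β') : DenseHalesJewett β' κ' δ := by
  obtain ⟨n, hn⟩ := h
  refine ⟨n, fun ι _ _ hι A hA => ?_⟩
  obtain ⟨W, hW⟩ := hn ι hι {w | e' ∘ w ∈ A} <| hA.trans_eq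
    (Fintype.expect_equiv ((Equiv.refl ι).arrowCongr e') _ _ fun w => rfl).symm
  refine ⟨W.reindex e e' (Equiv.refl ι), fun v => ?_⟩
  have hv := hW (e'.symm ∘ v ∘ e)
  rw [Set.mem_ofPred_eq] at hv
  convert hv using 1
  funext i
  simp

lemma DenseHalesJewett.sum [Nonempty β] {κ' : Type*} [Finite κ] {δ : ℝ} (hδ : 0 < δ)
    (h : DenseHalesJewett β κ (δ / 2)) (h' : ∀ ε > 0, DenseHalesJewett β κ' ε) :
    DenseHalesJewett β (κ ⊕ κ') δ := by
  obtain ⟨n, hn⟩ := h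
  obtain ⟨n', hn'⟩ := h' (δ / 2 / (Nat.card (Subspace κ β (Fin n)) + 1)) (by positivity)
  refine denseHalesJewett_of_cube (Fin n ⊕ Fin n') fun A hA => ?_
  rw [density_sumArrow] at hA
  obtain ⟨V, hV⟩ := exists_subspace_density_forall_mem hδ (hn (Fin n) (by simp)) _ hA
  obtain ⟨U, hU⟩ := hn' (Fin n') (by simp) _ hV
  refine ⟨subspaceSum V U, fun v => ?_⟩
  rw [subspaceSum_apply]
  exact hU _ _

theorem denseHalesJewett_of_unit {β : Type} [Fintype β] [Nonempty β]
    (h : ∀ δ > 0, DenseHalesJewett β Unit δ) (κ : Type) [Finite κ] :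
    ∀ δ > 0, DenseHalesJewett β κ δ := by
  induction κ using Finite.induction_empty_option with
  | of_equiv e ih => exact fun δ hδ => (ih δ hδ).congr e (Equiv.refl β)
  | h_empty =>
    refine fun δ hδ => ⟨0, fun ι _ _ _ A hA => ?_⟩
    obtain ⟨x, hx⟩ := nonempty_of_density_pos (hδ.trans_le hA)
    exact ⟨⟨Sum.inl ∘ x, nofun⟩, fun _ => hx⟩
  | h_option ih =>
    exact fun δ hδ => ((h (δ / 2) (half_pos hδ)).sum hδ ih).congr
      ((Equiv.sumComm ..).trans (Equiv.optionEquivSumPUnit _).symm) (Equiv.refl β)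

end DenseHalesJewett

section Insensitive

open Combinatorics (Subspace)
open Finset (univ)
open scoped BigOperators

variable {α κ ι ι₁ : Type*}

/-- The word obtained from `w` by changing the letter `none` into `a`. -/
def fill (a : α) (w : ι → Option α) : ι → Option α := fun i => some ((w i).getD a)

/-- Membership in `R` is not affected by changing letters `none` into `a` or conversely. -/
def IsInsensitive (a : α) (R : Set (ι → Option α)) : Prop := ∀ w, w ∈ R ↔ fill a w ∈ R

lemma fill_fill (a : α) (w : ι → Option α) : fill a (fill a w) = fill a w := rfl

lemma fill_subspace_apply (a : α) (W : Subspace κ (Option α) ι) (v : κ → Option α) :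
    fill a (W v) = fill a (W (fill a v)) := by
  funext i
  rcases h : W.idxFun i <;> simp [fill, Subspace.apply_def, h]

lemma IsInsensitive.preimage {a : α} {R : Set (ι → Option α)} (h : IsInsensitive a R)
    (W : Subspace κ (Option α) ι) : IsInsensitive a {v | W v ∈ R} := fun v => by
  rw [Set.mem_ofPred_eq, Set.mem_ofPred_eq, h, fill_subspace_apply, ← h]

lemma IsInsensitive.slice {a : α} {R : Set (ι ⊕ ι₁ → Option α)} (h : IsInsensitive a R)
    (y : ι₁ → Option α) : IsInsensitive a {z | Sum.elim z y ∈ R} := by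
  simpa only [subspaceInl_apply] using h.preimage (subspaceInl y)

lemma IsInsensitive.slice_fill {a : α} {R : Set (ι ⊕ ι₁ → Option α)} (h : IsInsensitive a R)
    (y : ι₁ → Option α) : {z | Sum.elim z (fill a y) ∈ R} = {z | Sum.elim z y ∈ R} := by
  ext z
  have := h.preimage (subspaceInr z) y
  simp only [Set.mem_ofPred_eq, subspaceInr_apply] at this
  exact this.symm

lemma IsInsensitive.compl {a : α} {R : Set (ι → Option α)} (h : IsInsensitive a R) :
    IsInsensitive a Rᶜ := fun w => not_congr (h w)

/-- The word with wildcards at the same positions as `τ` and the letters of `x` elsewhere. -/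
def mix (τ : ι → Option α) (x : ι → α) : ι → Option α := fun i => (τ i).map fun _ => x i

section Expectations

variable [Fintype α] [Fintype ι] [DecidableEq ι]

lemma expect_mix [Nonempty α] (f : (ι → Option α) → ℝ) :
    𝔼 w, f w = 𝔼 τ : ι → Option α, 𝔼 x : ι → α, f (mix τ x) := by
  classical
  let φ (q : Option α × α) : Option α := q.1.map fun _ => q.2
  have hφ (z) : (univ.filter fun q => φ q = z).card = Fintype.card α := by
    rcases z with _ | b
    · have : (univ.filter fun q => φ q = none) = ({none} : Finset (Option α)) ×ˢ univ := by
        ext ⟨t, b⟩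
        simp [φ, eq_comm]
      simp [this]
    · have : (univ.filter fun q => φ q = some b) =
          (univ.image some : Finset (Option α)) ×ˢ {b} := by
        ext ⟨t, c⟩
        rcases t with _ | t <;> simp [φ, eq_comm]
      rw [this, Finset.card_product,
        Finset.card_image_of_injective _ (Option.some_injective α), Finset.card_singleton, mul_one,
        Finset.card_univ]
  have hfiber (z : ι → Option α) :
      (univ.filter fun y : ι → Option α × α => φ ∘ y = z).card =
        Fintype.card α ^ Fintype.card ι := by
    have : (univ.filter fun y : ι → Option α × α => φ ∘ y = z) =
        Fintype.piFinset fun i => univ.filter fun q => φ q = z i := by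
      ext y
      simp [funext_iff]
    simp [this, hφ]
  rw [← expect_prod_type fun q : (ι → Option α) × (ι → α) => f (mix q.1 q.2),
    ← expect_comp_of_card_fiber_eq (pow_ne_zero _ Fintype.card_ne_zero) hfiber]
  exact Fintype.expect_equiv
    (Equiv.arrowProdEquivProdArrow ι (fun _ => Option α) fun _ => α) _ _ fun y => rfl

lemma density_forall_eq_none_le [Nonempty α] (s : Finset ι) :
    density {τ : ι → Option α | ∀ i ∈ s, τ i ∈ ({none} : Set (Option α))} ≤ (1 / 2) ^ s.card := by
  rw [density_forall_mem]
  refine pow_le_pow_left₀ (density_nonneg _) ?_ _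
  have hnone : density ({none} : Set (Option α)) = 1 / (Fintype.card α + 1) := by
    rw [density, Fintype.expect_eq_sum_div_card]
    simp [Fintype.sum_option, ind]
  have : (1 : ℝ) ≤ Fintype.card α := Nat.one_le_cast.2 Fintype.card_pos
  rw [hnone]
  gcongr
  linarith

/-- Averaging over the wildcard pattern `τ`: the patterns meeting each of the sets `s j` carry most
of the mass of `R`. -/
lemma exists_half_le_density_mix [Nonempty α] {n : ℕ} {ε : ℝ} (hε : 0 ≤ ε) (s : Fin n → Finset ι)
    (hs : ∑ j, (1 / 2 : ℝ) ^ (s j).card < ε / 2) {R : Set (ι → Option α)} (hR : ε ≤ density R) :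
    ∃ τ : ι → Option α, (∀ j, ∃ i ∈ s j, τ i ≠ none) ∧ ε / 2 ≤ density {x | mix τ x ∈ R} := by
  by_contra! hcon
  let bad (j : Fin n) : Set (ι → Option α) := {τ | ∀ i ∈ s j, τ i ∈ ({none} : Set (Option α))}
  have hpoint (τ : ι → Option α) :
      density {x | mix τ x ∈ R} ≤ ∑ j, ind (bad j) τ + ε / 2 := by
    by_cases hτ : ∃ j, τ ∈ bad j
    · obtain ⟨j, hj⟩ := hτ
      have : 1 ≤ ∑ j, ind (bad j) τ := by
        rw [← ind_of_mem hj]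
        exact Finset.single_le_sum (f := fun j => ind (bad j) τ) (fun _ _ => ind_nonneg _ _)
          (Finset.mem_univ j)
      linarith [density_le_one {x | mix τ x ∈ R}]
    · have : 0 ≤ ∑ j, ind (bad j) τ := Finset.sum_nonneg fun j _ => ind_nonneg _ _
      have : density {x | mix τ x ∈ R} < ε / 2 := hcon τ fun j => by
        by_contra! hj
        exact hτ ⟨j, hj⟩
      linarith
  have hbad : ∑ j, density (bad j) ≤ ∑ j, (1 / 2 : ℝ) ^ (s j).card :=
    Finset.sum_le_sum fun j _ => density_forall_eq_none_le (s j)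
  have hmass : density R ≤ ∑ j, density (bad j) + ε / 2 := by
    calc density R = 𝔼 τ, density {x | mix τ x ∈ R} := expect_mix _
      _ ≤ 𝔼 τ, (∑ j, ind (bad j) τ + ε / 2) := expect_mono hpoint
      _ = ∑ j, density (bad j) + 𝔼 _τ : ι → Option α, ε / 2 := by
        rw [Finset.expect_add_distrib, Finset.expect_sum_comm]
        rfl
      _ ≤ _ := by
        gcongr
        exact expect_le_of_forall_le (by linarith) fun _ => le_rfl
  linarith

end Expectations

/-- The wildcards of `S` are realised by letters of `z` at positions where `τ` is not `none`;
changing these into `none` is harmless by insensitivity. -/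
lemma exists_subspace_of_mix {a : α} {R : Set (ι → Option α)} (hR : IsInsensitive a R) (c : ι₁ ↪ ι)
    {τ : ι → Option α} (hτ : ∀ j, τ (c j) ≠ none) {z : ι → α} {S : Subspace κ α ι₁}
    (hS : ∀ v, mix τ (Function.extend c (S v) z) ∈ R) :
    ∃ W : Subspace κ (Option α) ι, ∀ v, W v ∈ R := by
  refine ⟨subspaceComp (subspaceOfEmbedding c (mix τ z)) (subspaceOption S), fun v => ?_⟩
  have hmem := hS fun k => (v k).getD a
  rw [hR] at hmem ⊢
  convert hmem using 1
  rw [subspaceComp_apply, subspaceOfEmbedding_apply]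
  funext i
  by_cases hi : ∃ j, c j = i
  · obtain ⟨j, rfl⟩ := hi
    obtain ⟨t, ht⟩ := Option.ne_none_iff_exists'.1 (hτ j)
    rcases hs : S.idxFun j <;>
      simp [fill, Subspace.apply_def, mix, c.injective.extend_apply, subspaceOption, hs, ht]
  · simp [fill, mix, Function.extend_apply' _ _ _ hi]

theorem exists_cube_forall_isInsensitive {α κ : Type*} [Fintype α] [Nonempty α] {ε : ℝ}
    (hε : 0 < ε) (h : DenseHalesJewett α κ (ε / 2)) :
    ∃ (ι : Type) (_ : Fintype ι) (_ : DecidableEq ι), ∀ (a : α) (R : Set (ι → Option α)),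
      IsInsensitive a R → ε ≤ density R → ∃ W : Subspace κ (Option α) ι, ∀ v, W v ∈ R := by
  obtain ⟨n, hn⟩ := h
  obtain ⟨L, hL⟩ : ∃ L : ℕ, (n : ℝ) * (1 / 2 : ℝ) ^ L < ε / 2 := by
    have hlim : Filter.Tendsto (fun L : ℕ => (n : ℝ) * (1 / 2 : ℝ) ^ L) Filter.atTop
        (nhds (n * 0)) :=
      (tendsto_pow_atTop_nhds_zero_of_lt_one (by norm_num) (by norm_num)).const_mul _
    rw [mul_zero] at hlim
    exact (hlim.eventually_lt_const (half_pos hε)).exists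
  refine ⟨Fin n × Fin L, inferInstance, inferInstance, fun a R hR hd => ?_⟩
  obtain ⟨τ, hτ, hτd⟩ := exists_half_le_density_mix hε.le
    (fun j => univ.map (Function.Embedding.sectR j (Fin L))) (by simpa using hL) hd
  have hl (j : Fin n) : ∃ l, τ (j, l) ≠ none := by simpa using hτ j
  choose l hl using hl
  let c : Fin n ↪ Fin n × Fin L := ⟨fun j => (j, l j), fun j j' h => congrArg Prod.fst h⟩
  obtain ⟨z, hz⟩ := exists_density_le_density_extend c {x | mix τ x ∈ R}
  obtain ⟨S, hS⟩ := hn (Fin n) (by simp) _ (hτd.trans hz)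
  exact exists_subspace_of_mix hR c hl hS

end Insensitive

section Partition

open Combinatorics (Subspace)
open Finset (univ)
open scoped BigOperators

variable {α β κ η ι ι₁ X : Type*}

lemma subspace_injective (W : Subspace κ β ι) : Function.Injective W := fun v v' h => by
  funext k
  obtain ⟨i, hi⟩ := W.proper k
  simpa [Subspace.apply_def, hi] using congrFun h i

variable [Fintype β] [Fintype κ] [DecidableEq κ] [Fintype η] [DecidableEq η]

/-- The mean of `g` on each combinatorial subspace with parameters indexed by `κ` is nonpositive. -/
def SubspaceNonpos (κ : Type*) [Fintype κ] [DecidableEq κ] (g : (ι → β) → ℝ) : Prop :=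
  ∀ W : Subspace κ β ι, 𝔼 v, g (W v) ≤ 0

lemma SubspaceNonpos.comp {g : (ι → β) → ℝ} (h : SubspaceNonpos κ g) (V : Subspace ι₁ β ι) :
    SubspaceNonpos κ fun v => g (V v) := fun W => by
  simp_rw [← subspaceComp_apply]
  exact h _

variable [Fintype ι] [DecidableEq ι] [Fintype ι₁] [DecidableEq ι₁]

lemma SubspaceNonpos.expect_nonpos {g : (ι → β) → ℝ} (h : SubspaceNonpos κ g) (c : κ ↪ ι) :
    𝔼 w, g w ≤ 0 := by
  rw [← expect_extend c]
  refine expect_le_of_forall_le le_rfl fun z => ?_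
  simp_rw [← subspaceOfEmbedding_apply]
  exact h _

lemma SubspaceNonpos.expect_mul_ind_range_nonpos {g : (ι → β) → ℝ} (h : SubspaceNonpos κ g)
    (W : Subspace κ β ι) : 𝔼 w, g w * ind (Set.range W) w ≤ 0 := by
  classical
  have hsum : ∑ w, g w * ind (Set.range W) w = ∑ v, g (W v) := by
    simp_rw [ind, Set.indicator_apply, Pi.one_apply, mul_ite, mul_one, mul_zero,
      ← Finset.sum_filter]
    rw [← Finset.sum_image (f := g) fun _ _ _ _ h => subspace_injective W h]
    exact Finset.sum_congr (by ext; simp) fun _ _ => rfl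
  rw [Fintype.expect_eq_sum_div_card, hsum, ← Fintype.card_mul_expect]
  exact div_nonpos_of_nonpos_of_nonneg
    (mul_nonpos_of_nonneg_of_nonpos (Nat.cast_nonneg _) (h W)) (Nat.cast_nonneg _)

lemma expect_mul_ind_le_density {g : (ι → β) → ℝ} (hg : ∀ w, g w ≤ 1) (R : Set (ι → β)) :
    𝔼 w, g w * ind R w ≤ density R :=
  expect_mono fun w => mul_le_of_le_one_left (ind_nonneg R w) (hg w)

variable [Fintype α] [Fintype X]

lemma exists_subset_forall_expect_mul_ind_nonpos {ε : ℝ} {a : α}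
    (h : ∀ R : Set (ι → Option α), IsInsensitive a R → ε ≤ density R →
      ∃ W : Subspace κ (Option α) ι, ∀ v, W v ∈ R) (Q : Set (ι → Option α)) :
    ∃ V ⊆ Q, (∀ g, SubspaceNonpos κ g → 𝔼 w, g w * ind V w ≤ 0) ∧
      (IsInsensitive a Q → ε ≤ density Q →
        1 / (Fintype.card (ι → Option α) : ℝ) ≤ density V) := by
  by_cases hQ : IsInsensitive a Q ∧ ε ≤ density Q
  · obtain ⟨W, hW⟩ := h Q hQ.1 hQ.2
    refine ⟨Set.range W, Set.range_subset_iff.2 hW,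
      fun g hg => hg.expect_mul_ind_range_nonpos W, fun _ _ => ?_⟩
    rw [density, Fintype.expect_eq_sum_div_card]
    gcongr
    rw [← ind_of_mem (Set.mem_range_self (f := W) fun _ => none)]
    exact Finset.single_le_sum (f := ind (Set.range W)) (fun _ _ => ind_nonneg _ _)
      (Finset.mem_univ _)
  · exact ⟨∅, Set.empty_subset Q, fun g _ => by simp [ind], fun h₁ h₂ => absurd ⟨h₁, h₂⟩ hQ⟩

lemma expect_mul_ind_sum_eq_add {R : Set (ι ⊕ ι₁ → β)} {V : (ι₁ → β) → Set (ι → β)}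
    (hV : ∀ y, V y ⊆ {z | Sum.elim z y ∈ R}) (f : (ι ⊕ ι₁ → β) → ℝ) :
    𝔼 w, f w * ind R w =
      𝔼 z, 𝔼 y, f (Sum.elim z y) * ind {y | Sum.elim z y ∈ R ∧ z ∉ V y} y +
        𝔼 y, 𝔼 z, f (Sum.elim z y) * ind (V y) z := by
  rw [Finset.expect_comm (s := univ (α := ι₁ → β)), ← Finset.expect_add_distrib, expect_sumArrow]
  refine Finset.expect_congr rfl fun z _ => ?_
  rw [← Finset.expect_add_distrib]
  refine Finset.expect_congr rfl fun y _ => ?_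
  rw [← mul_add]
  congr 1
  by_cases hzV : z ∈ V y
  · have hzR : Sum.elim z y ∈ R := hV y hzV
    simp [ind, hzV, hzR]
  · by_cases hzR : Sum.elim z y ∈ R <;> simp [ind, hzV, hzR]

/-- Sets insensitive to `a` correlate little with functions of nonpositive mean on subspaces, as
long as they have mean density at most `δ`. The parameter `X` lets the slices of a family be a
family. -/
def InsensitiveBound (α κ J : Type) [Fintype α] [Fintype κ] [DecidableEq κ] [Fintype J]
    [DecidableEq J] (ε δ : ℝ) : Prop :=
  ∀ (a : α) (X : Type) [Fintype X] (R : X → Set (J → Option α)) (g : X → (J → Option α) → ℝ),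
    (∀ x, IsInsensitive a (R x)) → (∀ x w, g x w ≤ 1) → (∀ x, SubspaceNonpos κ (g x)) →
    𝔼 x, density (R x) ≤ δ → 𝔼 x, 𝔼 w, g x w * ind (R x) w ≤ 2 * ε

lemma insensitiveBound_two_mul (α κ J : Type) [Fintype α] [Fintype κ] [DecidableEq κ] [Fintype J]
    [DecidableEq J] (ε : ℝ) : InsensitiveBound α κ J ε (2 * ε) := fun _ _ _ R _ _ hg _ hR =>
  (expect_mono fun x => expect_mul_ind_le_density (hg x) (R x)).trans hR

/-- Either the mean density is already small, or many slices are dense and contain a subspace, whose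
removal makes the set sparser and costs nothing by nonpositivity. -/
lemma insensitiveBound_sum {α κ ι J : Type} [Fintype α] [Fintype κ] [DecidableEq κ] [Fintype ι]
    [DecidableEq ι] [Fintype J] [DecidableEq J] {ε δ : ℝ} (hε : 0 ≤ ε)
    (h : ∀ (a : α) (R : Set (ι → Option α)), IsInsensitive a R → ε ≤ density R →
      ∃ W : Subspace κ (Option α) ι, ∀ v, W v ∈ R) (hJ : InsensitiveBound α κ J ε δ) :
    InsensitiveBound α κ (ι ⊕ J) ε (δ + ε / Fintype.card (ι → Option α)) := by
  intro a X _ R g hR hg hgW hd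
  let slice (q : X × (J → Option α)) : Set (ι → Option α) := {z | Sum.elim z q.2 ∈ R q.1}
  have hdensity : 𝔼 x, density (R x) = 𝔼 q, density (slice q) := by
    rw [expect_prod_type]
    exact Finset.expect_congr rfl fun x _ => density_sumArrow _
  by_cases hgood : density {q | ε ≤ density (slice q)} < ε
  · refine insensitiveBound_two_mul α κ _ ε a X R g hR hg hgW ?_
    linarith [expect_le_density_setOf_le_add hε fun q => density_le_one (slice q)]
  choose V hV hVg hVd using fun Q => exists_subset_forall_expect_mul_ind_nonpos (h a) Q
  let R' (q : X × (ι → Option α)) : Set (J → Option α) :=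
    {y | Sum.elim q.2 y ∈ R q.1 ∧ q.2 ∉ V (slice (q.1, y))}
  have hsplit (f : X → (ι ⊕ J → Option α) → ℝ) :
      𝔼 x, 𝔼 w, f x w * ind (R x) w = 𝔼 q, 𝔼 y, f q.1 (Sum.elim q.2 y) * ind (R' q) y +
        𝔼 q : X × (J → Option α), 𝔼 z, f q.1 (Sum.elim z q.2) * ind (V (slice q)) z := by
    rw [expect_prod_type, expect_prod_type, ← Finset.expect_add_distrib]
    exact Finset.expect_congr rfl fun x _ => expect_mul_ind_sum_eq_add (fun y => hV _) (f x)
  have hbound : 𝔼 q, 𝔼 y, g q.1 (Sum.elim q.2 y) * ind (R' q) y ≤ 2 * ε := by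
    refine hJ a _ R' _ (fun q y => ?_) (fun q y => hg _ _) (fun q => ?_) ?_
    · have hfill : slice (q.1, fill a y) = slice (q.1, y) := (hR q.1).slice_fill y
      have hmem := (hR q.1).preimage (subspaceInr q.2) y
      simp only [Set.mem_ofPred_eq, subspaceInr_apply] at hmem
      exact and_congr hmem (by rw [hfill])
    · simpa only [subspaceInr_apply] using (hgW q.1).comp (subspaceInr q.2)
    · have hremoved : ε / Fintype.card (ι → Option α) ≤ 𝔼 q, density (V (slice q)) := by
        rw [← mul_one_div]
        refine le_trans ?_ (density_mul_le_expect (fun q => density_nonneg _)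
          fun q hq => hVd _ ((hR q.1).slice q.2) hq)
        gcongr
        exact not_lt.1 hgood
      have hone := hsplit fun _ _ => 1
      simp only [one_mul] at hone
      simp only [density] at hd hremoved ⊢
      linarith
  have hnonpos : 𝔼 q : X × (J → Option α), 𝔼 z, g q.1 (Sum.elim z q.2) * ind (V (slice q)) z ≤ 0 :=
    expect_le_of_forall_le le_rfl fun q => hVg _ _ <| by
      simpa only [subspaceInl_apply] using (hgW q.1).comp (subspaceInl q.2)
  linarith [hsplit g]

lemma exists_forall_expect_mul_ind_le {α κ : Type} [Fintype α] [Nonempty α] [Fintype κ]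
    [DecidableEq κ] {ε : ℝ} (hε : 0 < ε) (h : DenseHalesJewett α κ (ε / 2)) :
    ∃ n, ∀ (η : Type) [Fintype η] [DecidableEq η], n ≤ Fintype.card η →
      ∀ (a : α) (R : Set (η → Option α)) (g : (η → Option α) → ℝ), IsInsensitive a R →
      (∀ w, g w ≤ 1) → SubspaceNonpos κ g → 𝔼 w, g w * ind R w ≤ 2 * ε := by
  obtain ⟨ι, _, _, hι⟩ := exists_cube_forall_isInsensitive hε h
  have hiterate (t : ℕ) : ∃ (J : Type) (_ : Fintype J) (_ : DecidableEq J),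
      InsensitiveBound α κ J ε (2 * ε + t * (ε / Fintype.card (ι → Option α))) := by
    induction t with
    | zero => exact ⟨Empty, inferInstance, inferInstance, by
        simpa using insensitiveBound_two_mul α κ Empty ε⟩
    | succ t ih =>
      obtain ⟨J, _, _, hJ⟩ := ih
      refine ⟨ι ⊕ J, inferInstance, inferInstance, ?_⟩
      rw [Nat.cast_succ, add_one_mul, ← add_assoc]
      exact insensitiveBound_sum hε.le hι hJ
  obtain ⟨t, ht⟩ := exists_nat_ge (1 / (ε / Fintype.card (ι → Option α)))
  rw [div_le_iff₀ (by positivity)] at ht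
  obtain ⟨J, _, _, hJ⟩ := hiterate t
  refine ⟨Fintype.card J, fun η _ _ hcard a R g hR hg hgW => ?_⟩
  obtain ⟨c⟩ := Function.Embedding.nonempty_of_card_le hcard
  rw [← expect_extend c]
  simp_rw [← subspaceOfEmbedding_apply]
  refine hJ a (η → Option α) (fun z => {v | subspaceOfEmbedding c z v ∈ R}) _
    (fun z => hR.preimage _) (fun z v => hg _) (fun z => hgW.comp _) ?_
  exact (expect_le_of_forall_le zero_le_one fun z => density_le_one _).trans (by linarith)

lemma exists_forall_expect_mul_prod_ind_le {α : Type} [Fintype α] [Nonempty α]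
    (h : ∀ (κ : Type) [Finite κ], ∀ δ > 0, DenseHalesJewett α κ δ) (s : Finset α) :
    ∀ (κ : Type) [Fintype κ] [DecidableEq κ] (ε : ℝ), 0 < ε →
    ∃ n, ∀ (η : Type) [Fintype η] [DecidableEq η], n ≤ Fintype.card η →
      ∀ (F : α → Set (η → Option α)) (g : (η → Option α) → ℝ), (∀ a, IsInsensitive a (F a)) →
      (∀ w, g w ≤ 1) → SubspaceNonpos κ g → 𝔼 w, g w * ∏ a ∈ s, ind (F a) w ≤ ε := by
  classical
  induction s using Finset.induction_on with
  | empty =>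
    refine fun κ _ _ ε hε => ⟨Fintype.card κ, fun η _ _ hcard F g _ _ hgW => ?_⟩
    obtain ⟨c⟩ := Function.Embedding.nonempty_of_card_le hcard
    simpa using (hgW.expect_nonpos c).trans hε.le
  | insert a s ha ih =>
    intro κ _ _ ε hε
    obtain ⟨n₀, h₀⟩ := ih κ (ε / 2) (half_pos hε)
    obtain ⟨n₁, h₁⟩ := exists_forall_expect_mul_ind_le (ε := ε / 4) (by positivity)
      (h (Fin n₀) _ (by positivity))
    refine ⟨n₁, fun η _ _ hcard F g hF hg hgW => ?_⟩
    have hprod (w) : 0 ≤ ∏ b ∈ s, ind (F b) w ∧ ∏ b ∈ s, ind (F b) w ≤ 1 :=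
      ⟨Finset.prod_nonneg fun b _ => ind_nonneg _ _,
        Finset.prod_le_one (fun b _ => ind_nonneg _ _) fun b _ => ind_le_one _ _⟩
    have hshift := h₁ η hcard a (F a) (fun w => g w * ∏ b ∈ s, ind (F b) w - ε / 2) (hF a)
      (fun w => by nlinarith [hprod w, hg w]) fun W => by
        have hW := h₀ (Fin n₀) (by simp) (fun b => {v | W v ∈ F b}) (fun v => g (W v))
          (fun b => (hF b).preimage W) (fun v => hg _) (hgW.comp W)
        rw [Finset.expect_sub_distrib, Fintype.expect_const]
        exact sub_nonpos.2 hW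
    have hsplit (w) : g w * ∏ b ∈ insert a s, ind (F b) w =
        (g w * ∏ b ∈ s, ind (F b) w - ε / 2) * ind (F a) w + ε / 2 * ind (F a) w := by
      rw [Finset.prod_insert ha]
      ring
    simp_rw [hsplit]
    rw [Finset.expect_add_distrib, ← Finset.mul_expect]
    have hle := density_le_one (F a)
    rw [density] at hle
    nlinarith

lemma ind_compl {X : Type*} (A : Set X) (x : X) : ind Aᶜ x = 1 - ind A x := by
  simp [ind, Set.indicator_compl]

/-- Expand `1 - ∏ a, 1_{F a}` as a telescoping sum of products in which one of the sets is replaced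
by its complement. -/
lemma exists_forall_expect_mul_one_sub_prod_ind_le {α κ : Type} [Fintype α] [Nonempty α]
    [Fintype κ] [DecidableEq κ] (h : ∀ (κ : Type) [Finite κ], ∀ δ > 0, DenseHalesJewett α κ δ)
    {ε : ℝ} (hε : 0 < ε) :
    ∃ n, ∀ (η : Type) [Fintype η] [DecidableEq η], n ≤ Fintype.card η →
      ∀ (F : α → Set (η → Option α)) (g : (η → Option α) → ℝ), (∀ a, IsInsensitive a (F a)) →
      (∀ w, g w ≤ 1) → SubspaceNonpos κ g →
      𝔼 w, g w * (1 - ∏ a, ind (F a) w) ≤ Fintype.card α * ε := by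
  classical
  choose n hn using fun s => exists_forall_expect_mul_prod_ind_le h s κ ε hε
  refine ⟨∑ s, n s, fun η _ _ hcard F g hF hg hgW => ?_⟩
  suffices ∀ s : Finset α, 𝔼 w, g w * (1 - ∏ a ∈ s, ind (F a) w) ≤ s.card * ε from this univ
  intro s
  induction s using Finset.induction_on with
  | empty => simp
  | insert a s ha ih =>
    let F' : α → Set (η → Option α) := Function.update F a (F a)ᶜ
    have hF' (b) : IsInsensitive b (F' b) := by
      rcases eq_or_ne b a with rfl | hb
      · simpa [F'] using (hF b).compl
      · simpa [F', hb] using hF b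
    have htelescope (w) : g w * (1 - ∏ b ∈ insert a s, ind (F b) w) =
        g w * (1 - ∏ b ∈ s, ind (F b) w) + g w * ∏ b ∈ insert a s, ind (F' b) w := by
      have hs : ∏ b ∈ s, ind (F' b) w = ∏ b ∈ s, ind (F b) w :=
        Finset.prod_congr rfl fun b hb => by simp [F', ne_of_mem_of_not_mem hb ha]
      rw [Finset.prod_insert ha, Finset.prod_insert ha, hs]
      simp only [F', Function.update_self, ind_compl]
      ring
    simp_rw [htelescope]
    rw [Finset.expect_add_distrib, Finset.card_insert_of_notMem ha, Nat.cast_succ, add_one_mul]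
    exact add_le_add ih <| hn _ η
      ((Finset.single_le_sum (fun _ _ => Nat.zero_le _) (Finset.mem_univ _)).trans hcard)
      F' g hF' hg hgW

end Partition

section DensityHalesJewett

open Combinatorics (Subspace)
open Finset (univ)
open scoped BigOperators

section LineFree

variable {α β κ ι ι₁ ι₂ X : Type*}

/-- The set `A` contains no combinatorial line. -/
def LineFree (A : Set (ι → β)) : Prop := ∀ W : Subspace Unit β ι, ∃ v, W v ∉ A

lemma LineFree.preimage {A : Set (ι → β)} (h : LineFree A) (V : Subspace κ β ι) :
    LineFree {v | V v ∈ A} := fun W => by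
  obtain ⟨v, hv⟩ := h (subspaceComp V W)
  exact ⟨v, by rwa [subspaceComp_apply] at hv⟩

/-- Otherwise the occurrences of `none` in `w` are the wildcards of a line contained in `A`. -/
lemma LineFree.ne_none {A : Set (ι → Option α)} (h : LineFree A) {w : ι → Option α} (hw : w ∈ A)
    (hfill : ∀ a, fill a w ∈ A) (i : ι) : w i ≠ none := by
  intro hi
  obtain ⟨v, hv⟩ := h
    ⟨fun j => (w j).elim (Sum.inr ()) fun b => Sum.inl (some b), fun _ => ⟨i, by simp [hi]⟩⟩
  refine hv ?_
  rcases hv : v () with _ | a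
  · convert hw using 1
    funext j
    rcases hj : w j <;> simp [Subspace.apply_def, hj, hv]
  · convert hfill a using 1
    funext j
    rcases hj : w j <;> simp [Subspace.apply_def, fill, hj, hv]

lemma fill_subspaceOption_apply (a : α) (U : Subspace κ α ι) (w : κ → Option α) :
    fill a (subspaceOption U w) = subspaceOption U (fill a w) := by
  funext i
  rcases h : U.idxFun i <;> simp [fill, Subspace.apply_def, subspaceOption, h]

lemma LineFree.le_mul_one_sub_ind {A : Set (ι → Option α)} (h : LineFree A) (d : ℝ)
    (w : ι → Option α) :
    ind A w + d * ind {w | ∀ a, fill a w ∈ A} w - (d + ind {w | ∀ i, w i ≠ none} w) ≤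
      (ind A w - d) * (1 - ind {w | ∀ a, fill a w ∈ A} w) := by
  have hnonneg := ind_nonneg {w : ι → Option α | ∀ i, w i ≠ none} w
  by_cases hw : ∀ a, fill a w ∈ A
  · rw [ind_of_mem (A := {w | ∀ a, fill a w ∈ A}) hw]
    by_cases hwA : w ∈ A
    · rw [ind_of_mem hwA, ind_of_mem (by exact h.ne_none hwA hw)]
      linarith
    · rw [ind_of_notMem hwA]
      linarith
  · rw [ind_of_notMem (A := {w | ∀ a, fill a w ∈ A}) hw]
    linarith

lemma LineFree.subspaceNonpos [Fintype β] [Nonempty β] [Fintype κ] [DecidableEq κ]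
    {A : Set (ι → β)} (hA : LineFree A) {d : ℝ}
    (h : ∀ B : Set (κ → β), d ≤ density B → ∃ W : Subspace Unit β κ, ∀ v, W v ∈ B) :
    SubspaceNonpos κ fun w => ind A w - d := fun W => by
  by_contra! hpos
  rw [Finset.expect_sub_distrib, Fintype.expect_const, sub_pos] at hpos
  obtain ⟨L, hL⟩ := h {v | W v ∈ A} hpos.le
  obtain ⟨v, hv⟩ := hA.preimage W L
  exact hv (hL v)

lemma sub_two_mul_mul_card_le [Fintype X] {f : X → ℝ} {d γ : ℝ} (hγ : 0 ≤ γ)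
    (hf : ∀ x, f x ≤ d + γ) (hmean : d - γ ≤ 𝔼 x, f x) (x : X) :
    d - 2 * γ * Fintype.card X ≤ f x := by
  classical
  have : Nonempty X := ⟨x⟩
  have hcard : (1 : ℝ) ≤ Fintype.card X := Nat.one_le_cast.2 Fintype.card_pos
  rw [Fintype.expect_eq_sum_div_card, le_div_iff₀ (by positivity),
    ← Finset.add_sum_erase _ _ (Finset.mem_univ x)] at hmean
  have hrest : ∑ y ∈ univ.erase x, f y ≤ (univ.erase x).card • (d + γ) :=
    Finset.sum_le_card_nsmul _ _ _ fun y _ => hf y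
  rw [Finset.card_erase_of_mem (Finset.mem_univ x), Finset.card_univ, nsmul_eq_mul,
    Nat.cast_pred Fintype.card_pos] at hrest
  nlinarith

lemma LineFree.le_density_slice [Fintype β] [Fintype ι₁] [DecidableEq ι₁] [Fintype ι₂]
    [DecidableEq ι₂] {A : Set (ι₁ ⊕ ι₂ → β)} (hA : LineFree A) {δ γ : ℝ} (hγ : 0 ≤ γ)
    (h : ∀ B : Set (ι₂ → β), δ + γ ≤ density B → ∃ W : Subspace Unit β ι₂, ∀ v, W v ∈ B)
    (hd : δ - γ ≤ density A) (w : ι₁ → β) :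
    δ - 2 * γ * Fintype.card (ι₁ → β) ≤ density {y : ι₂ → β | Sum.elim w y ∈ A} := by
  rw [density, expect_sumArrow] at hd
  refine sub_two_mul_mul_card_le (f := fun w => density {y : ι₂ → β | Sum.elim w y ∈ A}) hγ
    (fun w => ?_) hd w
  by_contra! hlt
  obtain ⟨L, hL⟩ := h _ hlt.le
  obtain ⟨v, hv⟩ := hA.preimage (subspaceInr w) L
  rw [Set.mem_ofPred_eq, subspaceInr_apply] at hv
  exact hv (hL v)

lemma prod_ind [Fintype α] (F : α → Set X) (x : X) :
    ∏ a, ind (F a) x = ind {x | ∀ a, x ∈ F a} x := by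
  by_cases h : ∀ a, x ∈ F a
  · rw [ind_of_mem (by exact h)]
    exact Finset.prod_eq_one fun a _ => ind_of_mem (h a)
  · rw [ind_of_notMem (by exact h)]
    obtain ⟨a, ha⟩ := not_forall.1 h
    exact Finset.prod_eq_zero (Finset.mem_univ a) (ind_of_notMem ha)

lemma density_forall_ne_none [Fintype α] [Fintype ι] [DecidableEq ι] :
    density {w : ι → Option α | ∀ i, w i ≠ none} =
      ((Fintype.card α : ℝ) / (Fintype.card α + 1)) ^ Fintype.card ι := by
  have hsome : density {b : Option α | b ≠ none} = (Fintype.card α : ℝ) / (Fintype.card α + 1) := by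
    classical
    rw [density, Fintype.expect_eq_sum_div_card]
    simp [ind, Set.indicator_apply, Fintype.sum_option]
  simpa [hsome] using density_forall_mem (ι := ι) univ {b : Option α | b ≠ none}

lemma exists_forall_fill_of_le_density [Fintype α] [Nonempty α] {Y : Type*} [Fintype Y]
    [Fintype ι₁] [DecidableEq ι₁] (c : ι₁ ↪ ι) {δ : ℝ} (hδ : 0 < δ)
    (h : ∀ A : Set (ι₁ → α), δ / 2 ≤ density A → ∃ W : Subspace Unit α ι₁, ∀ v, W v ∈ A)
    (B : (ι → Option α) → Set Y) (hB : ∀ w, δ ≤ density (B w)) :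
    ∃ w, (∃ i, w i = none) ∧
      δ / 2 / (Nat.card (Subspace Unit α ι₁) + 1) ≤ density {y | ∀ a, y ∈ B (fill a w)} := by
  let a₀ : α := Classical.arbitrary α
  let e (x : ι₁ → Option α) : ι → Option α := Function.extend c x fun _ => some a₀
  obtain ⟨S, hS⟩ := exists_subspace_density_forall_mem hδ h
    (fun y => {x | y ∈ B (e (some ∘ x))}) <| by
      have hcomm : 𝔼 y, density {x | y ∈ B (e (some ∘ x))} = 𝔼 x, density (B (e (some ∘ x))) :=
        Finset.expect_comm ..
      rw [hcomm]
      exact (Fintype.expect_const δ).symm.trans_le (expect_mono fun x => hB _)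
  obtain ⟨i, hi⟩ := S.proper ()
  refine ⟨e (subspaceOption S fun _ => none), ⟨c i, ?_⟩, hS.trans (density_mono fun y hy a => ?_)⟩
  · simp [e, c.injective.extend_apply, Subspace.apply_def, subspaceOption, hi]
  · have hfill : fill a (e (subspaceOption S fun _ => none)) = e (some ∘ S fun _ => a) := by
      funext i
      by_cases hi : ∃ j, c j = i
      · obtain ⟨j, rfl⟩ := hi
        rcases hj : S.idxFun j <;>
          simp [fill, e, c.injective.extend_apply, Subspace.apply_def, subspaceOption, hj]
      · simp [fill, e, Function.extend_apply' _ _ _ hi]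
    rw [hfill]
    exact hy _

end LineFree

/-- Slices of `A` have density close to `δ` by maximality, and the Graham-Rothschild theorem makes
the density of the words all of whose fillings lie in a slice uniformly positive. -/
lemma exists_lineFree_family {α ι₀ η : Type} [Fintype α] [Nonempty α] [Fintype ι₀] [DecidableEq ι₀]
    [Finite η] (c : ι₀ ↪ η) {δ ε : ℝ} (hδ : 0 < δ) (hε : 0 < ε) (hεδ : ε ≤ δ / 2)
    (h : ∀ A : Set (ι₀ → α), δ / 2 / 2 ≤ density A → ∃ W : Subspace Unit α ι₀, ∀ v, W v ∈ A)
    (hup : ∀ γ > 0, DenseHalesJewett (Option α) Unit (δ + γ)) :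
    ∃ γ > 0, ∃ (ι : Type) (_ : Fintype ι) (_ : DecidableEq ι), ∀ A : Set (ι → Option α),
      LineFree A → δ - γ ≤ density A → ∃ (Y : Type) (_ : Fintype Y) (_ : Nonempty Y)
        (B : Y → Set (η → Option α)), (∀ y, LineFree (B y)) ∧
          (∀ w, δ - ε ≤ density {y | w ∈ B y}) ∧ ∀ w, (∃ i, w i = none) →
            δ / 2 / 2 / (Nat.card (Subspace Unit α ι₀) + 1) ≤
              density {y | ∀ a, fill a w ∈ B y} := by
  classical
  obtain ⟨ι₁, _, hGR⟩ := exists_subspace_eq_of_exists_none α Prop η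
  let γ : ℝ := ε / (2 * Fintype.card (ι₁ → Option α))
  have hγ : 0 < γ := by positivity
  obtain ⟨n, hn⟩ := hup γ hγ
  refine ⟨γ, hγ, ι₁ ⊕ Fin n, inferInstance, inferInstance, fun A hA hd => ?_⟩
  let slice (w : ι₁ → Option α) : Set (Fin n → Option α) := {y | Sum.elim w y ∈ A}
  have hslice (w) : δ - ε ≤ density (slice w) := by
    convert hA.le_density_slice hγ.le (hn (Fin n) (by simp)) hd w using 2
    simp only [γ]
    field_simp
  obtain ⟨U, hU⟩ := hGR fun w => δ / 2 / 2 / (Nat.card (Subspace Unit α ι₀) + 1) ≤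
    density {y | ∀ a, y ∈ slice (fill a w)}
  refine ⟨Fin n → Option α, inferInstance, inferInstance,
    fun y => {w | y ∈ slice (subspaceOption U w)}, fun y => ?_, fun w => hslice _, fun w hw => ?_⟩
  · convert hA.preimage (subspaceComp (subspaceInl y) (subspaceOption U)) using 3 with w
    rw [subspaceComp_apply, subspaceInl_apply]
    rfl
  · obtain ⟨w₀, hw₀, hdense⟩ := exists_forall_fill_of_le_density c (half_pos hδ) h
      (fun w => slice (subspaceOption U w)) fun w => by linarith [hslice (subspaceOption U w)]
    simp_rw [fill_subspaceOption_apply] at hU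
    exact (hU w₀ w hw₀ hw).mp hdense

/-- Points of `B y` whose fillings all lie in `B y` are negligible, so `B y` is denser than average
where some filling is missing; that region is partitioned into subspaces, on which `B y` cannot be
dense. -/
lemma false_of_lineFree_family {α κ Y η : Type} [Fintype α] [Fintype κ] [DecidableEq κ]
    [Fintype Y] [Nonempty Y] [Fintype η] [DecidableEq η] {δ θ ε : ℝ} (hδ : 0 < δ) (hθ : 0 < θ)
    (hε : 16 * ε = δ * θ) (hδθ : δ * θ ≤ 1) {B : Y → Set (η → Option α)}
    (hfree : ∀ y, LineFree (B y)) (hB : ∀ w, δ - ε ≤ density {y | w ∈ B y})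
    (hfill : ∀ w, (∃ i, w i = none) → θ ≤ density {y | ∀ a, fill a w ∈ B y})
    (hκ : ∀ A : Set (κ → Option α), δ + ε ≤ density A →
      ∃ W : Subspace Unit (Option α) κ, ∀ v, W v ∈ A)
    (hpart : ∀ (F : α → Set (η → Option α)) (g : (η → Option α) → ℝ),
      (∀ a, IsInsensitive a (F a)) → (∀ w, g w ≤ 1) → SubspaceNonpos κ g →
      𝔼 w, g w * (1 - ∏ a, ind (F a) w) ≤ ε)
    (hfull : density {w : η → Option α | ∀ i, w i ≠ none} ≤ ε) : False := by
  classical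
  let full : Set (η → Option α) := {w | ∀ i, w i ≠ none}
  let filled (y : Y) : Set (η → Option α) := {w | ∀ a, fill a w ∈ B y}
  let g (y : Y) (w : η → Option α) : ℝ := ind (B y) w - (δ + ε)
  have hε0 : 0 < ε := by nlinarith [mul_pos hδ hθ]
  have hprod (y w) : ∏ a, ind {w | fill a w ∈ B y} w = ind (filled y) w :=
    prod_ind (fun a => {w | fill a w ∈ B y}) w
  have hupper : 𝔼 y, 𝔼 w, g y w * (1 - ind (filled y) w) ≤ ε :=
    expect_le_of_forall_le hε0.le fun y => by
      simp_rw [← hprod]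
      exact hpart _ (g y) (fun a w => by simp only [Set.mem_ofPred_eq, fill_fill])
        (fun w => by linarith [ind_le_one (B y) w]) ((hfree y).subspaceNonpos hκ)
  have hfilled (w) : θ * (1 - ind full w) ≤ 𝔼 y, ind (filled y) w := by
    by_cases hw : w ∈ full
    · rw [ind_of_mem hw, sub_self, mul_zero]
      exact expect_nonneg fun y => ind_nonneg _ _
    · rw [ind_of_notMem hw, sub_zero, mul_one]
      exact hfill w (by simpa [full] using hw)
  have hlower (w) : δ * θ - 2 * ε - (δ * θ + 1) * ind full w ≤
      𝔼 y, g y w * (1 - ind (filled y) w) := by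
    refine le_trans ?_ (expect_mono fun y => (hfree y).le_mul_one_sub_ind (δ + ε) w)
    rw [Finset.expect_sub_distrib, Finset.expect_add_distrib, ← Finset.mul_expect,
      Fintype.expect_const]
    have hBw : δ - ε ≤ 𝔼 y, ind (B y) w := hB w
    have hnonneg : 0 ≤ 𝔼 y, ind (filled y) w := expect_nonneg fun y => ind_nonneg _ _
    change _ ≤ _ + _ * 𝔼 y, ind (filled y) w - (_ + ind full w)
    nlinarith [mul_le_mul_of_nonneg_left (hfilled w) hδ.le, mul_nonneg hε0.le hnonneg]
  rw [Finset.expect_comm] at hupper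
  have htotal := (expect_mono hlower).trans hupper
  rw [Finset.expect_sub_distrib, ← Finset.mul_expect, Fintype.expect_const] at htotal
  change δ * θ - 2 * ε - (δ * θ + 1) * density full ≤ ε at htotal
  nlinarith [density_nonneg full]

lemma exists_denseHalesJewett_sub {α : Type} [Fintype α] [Nonempty α]
    (h : ∀ δ > 0, DenseHalesJewett α Unit δ) {δ : ℝ} (hδ : 0 < δ) (hδ2 : δ ≤ 2)
    (hup : ∀ γ > 0, DenseHalesJewett (Option α) Unit (δ + γ)) :
    ∃ γ > 0, DenseHalesJewett (Option α) Unit (δ - γ) := by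
  classical
  obtain ⟨n₀, h₀⟩ := h (δ / 2 / 2) (by positivity)
  let θ : ℝ := δ / 2 / 2 / (Nat.card (Subspace Unit α (Fin n₀)) + 1)
  have hθ0 : 0 < θ := by positivity
  have hθ : θ ≤ δ / 2 / 2 := div_le_self (by positivity) (by simp)
  let ε : ℝ := δ * θ / 16
  have hε : 0 < ε := by positivity
  obtain ⟨nκ, hκ⟩ := hup ε hε
  obtain ⟨n₁, h₁⟩ := exists_forall_expect_mul_one_sub_prod_ind_le (κ := Fin nκ)
    (ε := ε / Fintype.card α) (fun κ _ => denseHalesJewett_of_unit h κ) (by positivity)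
  obtain ⟨M, hM⟩ : ∃ M : ℕ, ((Fintype.card α : ℝ) / (Fintype.card α + 1)) ^ M < ε :=
    exists_pow_lt_of_lt_one hε (by rw [div_lt_one (by positivity)]; linarith)
  let n := max (max n₀ n₁) M
  obtain ⟨γ, hγ, ι, _, _, hι⟩ := exists_lineFree_family (η := Fin n)
    (Fin.castLEEmb ((le_max_left _ _).trans (le_max_left _ _))) hδ hε
    (by simp only [ε]; nlinarith) (h₀ (Fin n₀) (by simp)) hup
  refine ⟨γ, hγ, denseHalesJewett_of_cube ι fun A hA => ?_⟩
  by_contra! hfree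
  obtain ⟨Y, _, _, B, hB, hdense, hfill⟩ := hι A hfree hA
  refine false_of_lineFree_family hδ hθ0 (by simp only [ε]; ring) (by nlinarith) hB hdense hfill
    (hκ (Fin nκ) (by simp)) (fun F g hF hg hgW => ?_) ?_
  · refine (h₁ (Fin n) (by simp [n]) F g hF hg hgW).trans_eq ?_
    field_simp
  · rw [density_forall_ne_none, Fintype.card_fin]
    exact (pow_le_pow_of_le_one (by positivity) (div_le_one_of_le₀ (by linarith) (by positivity))
      (le_max_right _ _)).trans hM.le

theorem denseHalesJewett_option {α : Type} [Fintype α] [Nonempty α]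
    (h : ∀ δ > 0, DenseHalesJewett α Unit δ) : ∀ δ > 0, DenseHalesJewett (Option α) Unit δ := by
  by_contra! hcon
  obtain ⟨δ₀, hδ₀, hfail⟩ := hcon
  let S : Set ℝ := {δ | DenseHalesJewett (Option α) Unit δ}
  have hS : (2 : ℝ) ∈ S := ⟨0, fun ι _ _ _ A hA => absurd hA (by linarith [density_le_one A])⟩
  have hbound : δ₀ ∈ lowerBounds S := fun δ hδ => le_of_not_ge fun hlt => hfail (hδ.mono hlt)
  have hbdd : BddBelow S := ⟨δ₀, hbound⟩
  obtain ⟨γ, hγ, hmem⟩ := exists_denseHalesJewett_sub h (hδ₀.trans_le (le_csInf ⟨2, hS⟩ hbound))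
    (csInf_le hbdd hS) fun γ hγ => by
      obtain ⟨δ, hδ, hlt⟩ := exists_lt_of_csInf_lt ⟨2, hS⟩ (lt_add_of_pos_right (sInf S) hγ)
      exact hδ.mono hlt.le
  linarith [csInf_le hbdd (show sInf S - γ ∈ S from hmem)]

theorem denseHalesJewett_unit (α : Type) [Finite α] :
    ∀ [Fintype α], ∀ δ > 0, DenseHalesJewett α Unit δ := by
  induction α using Finite.induction_empty_option with
  | of_equiv e ih =>
    intro _ δ hδ
    have := Fintype.ofEquiv _ e.symm
    exact (ih δ hδ).congr (Equiv.refl Unit) e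
  | h_empty =>
    refine fun δ hδ => ⟨1, fun ι _ _ hι A hA => ?_⟩
    obtain ⟨x, -⟩ := nonempty_of_density_pos (hδ.trans_le hA)
    obtain ⟨i⟩ := Fintype.card_pos_iff.1 hι
    exact (x i).elim
  | @h_option α _ ih =>
    intro inst δ hδ
    obtain rfl : inst = instFintypeOption := Subsingleton.elim _ _
    cases isEmpty_or_nonempty α
    · refine ⟨1, fun ι _ _ hι A hA => ?_⟩
      obtain ⟨x, hx⟩ := nonempty_of_density_pos (hδ.trans_le hA)
      obtain ⟨i⟩ := Fintype.card_pos_iff.1 hι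
      refine ⟨⟨fun _ => Sum.inr (), fun _ => ⟨i, rfl⟩⟩, fun v => ?_⟩
      exact Set.mem_of_eq_of_mem (Subsingleton.elim _ _) hx
    · exact denseHalesJewett_option (fun δ hδ => ih δ hδ) δ hδ

end DensityHalesJewett

section Szemeredi

open Combinatorics (Subspace)
open Finset (univ)
open scoped BigOperators

lemma expect_comp_addMonoidHom {X Z : Type*} [Fintype X] [Fintype Z] [AddGroup X] [AddGroup Z]
    {Φ : X →+ Z} (hΦ : Function.Surjective Φ) (f : Z → ℝ) : 𝔼 x, f (Φ x) = 𝔼 z, f z := by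
  classical
  refine expect_comp_of_card_fiber_eq (c := (univ.filter (Φ · = 0)).card) ?_
    (fun z => AddMonoidHom.card_fiber_eq_of_mem_range Φ (hΦ z) (hΦ 0)) f
  exact Finset.card_ne_zero.2 ⟨0, by simp⟩

variable {k : ℕ} {ι Z : Type*} [Fintype ι] [AddCommGroup Z]

/-- The homomorphism `(x, y) ↦ x + ∑ i, w i • y i`, reading the letters of the word `w` as
coefficients. As `w` runs over a combinatorial line, its values run over an arithmetic
progression. -/
def wordHom (w : ι → Fin k) : Z × (ι → Z) →+ Z where
  toFun q := q.1 + ∑ i, (w i : ℕ) • q.2 i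
  map_zero' := by simp
  map_add' q q' := by
    simp only [Prod.fst_add, Prod.snd_add, Pi.add_apply, smul_add, Finset.sum_add_distrib]
    abel

/-- The first term and the common difference of the progression that `wordHom` traces along the
combinatorial line `W`. -/
def lineHom (W : Subspace Unit (Fin k) ι) : Z × (ι → Z) →+ Z × Z where
  toFun q := (q.1 + ∑ i, (W.idxFun i).elim Fin.val (fun _ => 0) • q.2 i,
    ∑ i, (W.idxFun i).elim (fun _ => 0) (fun _ => 1) • q.2 i)
  map_zero' := by simp
  map_add' q q' := by
    simp only [Prod.fst_add, Prod.snd_add, Pi.add_apply, smul_add, Finset.sum_add_distrib,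
      Prod.mk_add_mk]
    congr 1
    abel

lemma wordHom_subspace (W : Subspace Unit (Fin k) ι) (q : Z × (ι → Z)) (j : Fin k) :
    wordHom (W fun _ => j) q = (lineHom W q).1 + (j : ℕ) • (lineHom W q).2 := by
  simp only [wordHom, lineHom, AddMonoidHom.coe_mk, ZeroHom.coe_mk]
  rw [add_assoc, Finset.smul_sum, ← Finset.sum_add_distrib]
  congr 1
  refine Finset.sum_congr rfl fun i _ => ?_
  cases h : W.idxFun i <;> simp [Subspace.apply_def, h]

lemma wordHom_surjective (w : ι → Fin k) : Function.Surjective (wordHom (Z := Z) w) :=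
  fun z => ⟨(z, 0), by simp [wordHom]⟩

lemma lineHom_surjective (W : Subspace Unit (Fin k) ι) :
    Function.Surjective (lineHom (Z := Z) W) := by
  classical
  rintro ⟨x, d⟩
  obtain ⟨i₀, hi₀⟩ := W.proper ()
  refine ⟨(x, Pi.single i₀ d), ?_⟩
  simp only [lineHom, AddMonoidHom.coe_mk, ZeroHom.coe_mk]
  rw [Fintype.sum_eq_single i₀ fun i hi => by simp [hi],
    Fintype.sum_eq_single i₀ fun i hi => by simp [hi]]
  simp [hi₀]

theorem exists_le_density_progression {δ : ℝ} (k : ℕ) [NeZero k] (hδ : 0 < δ) :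
    ∃ c > 0, ∀ (Z : Type*) [AddCommGroup Z] [Fintype Z] (B : Set Z), δ ≤ density B →
      c ≤ density {q : Z × Z | ∀ j < k, q.1 + j • q.2 ∈ B} := by
  classical
  obtain ⟨n, hn⟩ := denseHalesJewett_unit (Fin k) (δ / 2) (half_pos hδ)
  refine ⟨δ / 2 / (Nat.card (Subspace Unit (Fin k) (Fin n)) + 1), by positivity,
    fun Z _ _ B hB => ?_⟩
  have hwords : 𝔼 q : Z × (Fin n → Z), density {w : Fin n → Fin k | wordHom w q ∈ B} =
      density B := by
    simp only [density]
    rw [Finset.expect_comm]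
    have hw (w : Fin n → Fin k) : 𝔼 q, ind {w | wordHom w q ∈ B} w = 𝔼 z, ind B z :=
      expect_comp_addMonoidHom (wordHom_surjective w) (ind B)
    simp_rw [hw]
    exact Fintype.expect_const _
  obtain ⟨W, hW⟩ := exists_subspace_density_forall_mem hδ (hn (Fin n) (by simp)) _
    (hB.trans_eq hwords.symm)
  refine (hW.trans <| density_mono (B := lineHom W ⁻¹' {q | ∀ j < k, q.1 + j • q.2 ∈ B})
    fun q hq j hj => ?_).trans_eq <| expect_comp_addMonoidHom (lineHom_surjective W) (ind _)
  rw [← wordHom_subspace W q ⟨j, hj⟩]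
  exact hq _

/-- Varnavides' form of Szemerédi's theorem. -/
theorem exists_le_expect_prod_progression {δ : ℝ} (k : ℕ) [NeZero k] (hδ : 0 < δ) :
    ∃ c > 0, ∀ (Z : Type*) [AddCommGroup Z] [Fintype Z] (g : Z → ℝ), (∀ x, 0 ≤ g x) →
      (∀ x, g x ≤ 1) → δ ≤ 𝔼 x, g x →
        c ≤ 𝔼 x, 𝔼 d, ∏ j ∈ Finset.range k, g (x + j • d) := by
  obtain ⟨c, hc, h⟩ := exists_le_density_progression k (half_pos hδ)
  refine ⟨c * (δ / 2) ^ k, by positivity, fun Z _ _ g h0 h1 hE => ?_⟩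
  have hdense := h Z {x | δ / 2 ≤ g x} (half_le_density_setOf_half_le hδ.le h1 hE)
  rw [← expect_prod_type fun q : Z × Z => ∏ j ∈ Finset.range k, g (q.1 + j • q.2)]
  refine (mul_le_mul_of_nonneg_right hdense (by positivity)).trans <|
    density_mul_le_expect (fun q => Finset.prod_nonneg fun _ _ => h0 _) fun q hq => ?_
  calc (δ / 2) ^ k = ∏ j ∈ Finset.range k, δ / 2 := by rw [Finset.prod_const, Finset.card_range]
    _ ≤ _ := Finset.prod_le_prod (fun _ _ => by positivity) fun j hj =>
      hq j (Finset.mem_range.1 hj)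

end Szemeredi

section Counting

universe u

open Finset (univ)
open scoped BigOperators

lemma abs_expect_le_of_forall_le {Y : Type*} [Fintype Y] {f : Y → ℝ} {c : ℝ} (hc : 0 ≤ c)
    (h : ∀ x, |f x| ≤ c) : |𝔼 x, f x| ≤ c :=
  (Finset.abs_expect_le _ _).trans (expect_le_of_forall_le hc h)

lemma prod_le_pow_card {ι : Type*} [Fintype ι] {s : Finset ι} {C : ι → ℝ} {B : ℝ} (hB : 1 ≤ B)
    (h0 : ∀ j ∈ s, 0 ≤ C j) (h : ∀ j ∈ s, C j ≤ B) : ∏ j ∈ s, C j ≤ B ^ Fintype.card ι :=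
  calc ∏ j ∈ s, C j ≤ ∏ _j ∈ s, B := Finset.prod_le_prod h0 h
    _ = B ^ s.card := Finset.prod_const B
    _ ≤ B ^ Fintype.card ι := pow_le_pow_right₀ hB (Finset.card_le_univ s)

section SecondMoment

variable {Y : Type*} [Fintype Y]

lemma sq_expect_mul_le_of_le {f ν : Y → ℝ} (h0 : ∀ x, 0 ≤ f x) (h : ∀ x, f x ≤ ν x) (D : Y → ℝ) :
    (𝔼 x, f x * D x) ^ 2 ≤ (𝔼 x, ν x) * 𝔼 x, ν x * D x ^ 2 := by
  calc (𝔼 x, f x * D x) ^ 2 = (𝔼 x, √(f x) * (√(f x) * D x)) ^ 2 := by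
        simp_rw [← mul_assoc, Real.mul_self_sqrt (h0 _)]
    _ ≤ (𝔼 x, √(f x) ^ 2) * 𝔼 x, (√(f x) * D x) ^ 2 := Finset.expect_mul_sq_le_sq_mul_sq _ _ _
    _ = (𝔼 x, f x) * 𝔼 x, f x * D x ^ 2 := by simp_rw [mul_pow, Real.sq_sqrt (h0 _)]
    _ ≤ _ := mul_le_mul (expect_mono h)
      (expect_mono fun x => mul_le_mul_of_nonneg_right (h x) (sq_nonneg _))
      (expect_nonneg fun x => mul_nonneg (h0 x) (sq_nonneg _))
      (expect_nonneg fun x => (h0 x).trans (h x))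

/-- The function `F` exceeds `1` only by what `N` does, which is little in mean square. -/
lemma expect_sub_min_mul_sub_le {F G N : Y → ℝ} {ε : ℝ} (hε : 0 < ε) (hε1 : ε ≤ 1)
    (hF : ∀ x, F x ≤ N x) (hG0 : ∀ x, 0 ≤ G x) (hG1 : ∀ x, G x ≤ 1)
    (hN : 𝔼 x, (N x - 1) ^ 2 ≤ ε ^ 2) :
    𝔼 x, (F x - min (F x) 1) * (F x - G x) ≤ 2 * ε := by
  have hpt (x) : (F x - min (F x) 1) * (F x - G x) ≤
      ε / 2 + (1 / (2 * ε) + 1) * (N x - 1) ^ 2 := by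
    rcases le_total (F x) 1 with h | h
    · rw [min_eq_left h, sub_self, zero_mul]
      positivity
    · have hAMGM : N x - 1 ≤ ε / 2 + 1 / (2 * ε) * (N x - 1) ^ 2 := by
        have : ε / 2 + 1 / (2 * ε) * (N x - 1) ^ 2 - (N x - 1) =
            (ε - (N x - 1)) ^ 2 / (2 * ε) := by field_simp; ring
        have : 0 ≤ (ε - (N x - 1)) ^ 2 / (2 * ε) := by positivity
        linarith
      calc (F x - min (F x) 1) * (F x - G x) ≤ (N x - 1) * N x := by
            rw [min_eq_right h]
            apply mul_le_mul <;> linarith [hF x, hG0 x, hG1 x]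
        _ ≤ _ := by linarith
  calc 𝔼 x, (F x - min (F x) 1) * (F x - G x)
      ≤ 𝔼 x, (ε / 2 + (1 / (2 * ε) + 1) * (N x - 1) ^ 2) := expect_mono hpt
    _ = (𝔼 _x : Y, ε / 2) + (1 / (2 * ε) + 1) * 𝔼 x, (N x - 1) ^ 2 := by
      rw [Finset.expect_add_distrib, ← Finset.mul_expect]
    _ ≤ ε / 2 + (1 / (2 * ε) + 1) * ε ^ 2 := by
      gcongr
      exact expect_le_of_forall_le (half_pos hε).le fun _ => le_rfl
    _ = ε + ε ^ 2 := by field_simp; ring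
    _ ≤ 2 * ε := by nlinarith

lemma expect_sub_sq_le {F G N : Y → ℝ} {ε : ℝ} (hε : 0 < ε) (hε1 : ε ≤ 1)
    (hF : ∀ x, F x ≤ N x) (hG0 : ∀ x, 0 ≤ G x) (hG1 : ∀ x, G x ≤ 1)
    (hN : 𝔼 x, (N x - 1) ^ 2 ≤ ε ^ 2)
    (hmin : |𝔼 x, min (F x) 1 * F x - 𝔼 x, min (F x) 1 * G x| ≤ ε)
    (hG : |𝔼 x, G x * F x - 𝔼 x, G x * G x| ≤ ε) : 𝔼 x, (F x - G x) ^ 2 ≤ 4 * ε := by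
  have hsplit : 𝔼 x, (F x - G x) ^ 2 =
      (𝔼 x, min (F x) 1 * F x - 𝔼 x, min (F x) 1 * G x) +
        𝔼 x, (F x - min (F x) 1) * (F x - G x) - (𝔼 x, G x * F x - 𝔼 x, G x * G x) := by
    simp_rw [← Finset.expect_sub_distrib, ← Finset.expect_add_distrib, ← Finset.expect_sub_distrib]
    exact Finset.expect_congr rfl fun x _ => by ring
  linarith [(abs_le.1 hmin).2, (abs_le.1 hG).1, expect_sub_min_mul_sub_le hε hε1 hF hG0 hG1 hN]

end SecondMoment

variable {I : Type*} {X : Type u} [DecidableEq I] {i : I}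

lemma dependsOn_compl_singleton_iff {Y : Type*} {f : (I → X) → Y} :
    DependsOn f {i}ᶜ ↔ ∀ x t, f (Function.update x i t) = f x := by
  refine ⟨fun h x t => h fun j hj => Function.update_of_ne hj t x, fun h x y hxy => ?_⟩
  rw [← h x (y i)]
  congr 1
  funext j
  by_cases hj : j = i
  · rw [hj, Function.update_self]
  · rw [Function.update_of_ne hj, hxy j hj]

variable [Fintype X]

/-- The average of `F` over the coordinate `i`. -/
noncomputable def partialAvg (i : I) (F : (I → X) → ℝ) (x : I → X) : ℝ :=
  𝔼 t, F (Function.update x i t)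

lemma dependsOn_partialAvg (i : I) (F : (I → X) → ℝ) : DependsOn (partialAvg i F) {i}ᶜ :=
  dependsOn_compl_singleton_iff.2 fun x t => by simp [partialAvg]

variable [Fintype I]

lemma expect_expect_update {M : Type*} [AddCommMonoid M] [Module ℚ≥0 M] (i : I)
    (F : (I → X) → M) : 𝔼 x, 𝔼 t, F (Function.update x i t) = 𝔼 x, F x := by
  let swap (q : (I → X) × X) : (I → X) × X := (Function.update q.1 i q.2, q.1 i)
  have hswap : Function.Involutive swap := fun ⟨x, t⟩ => by simp [swap]
  calc 𝔼 x, 𝔼 t, F (Function.update x i t) = 𝔼 q : (I → X) × X, F (swap q).1 := by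
        rw [← Finset.univ_product_univ, Finset.expect_product]
    _ = 𝔼 q : (I → X) × X, F q.1 := Fintype.expect_equiv hswap.toPerm _ _ fun _ => rfl
    _ = 𝔼 x, F x := by
      rw [← Finset.univ_product_univ, Finset.expect_product]
      refine Finset.expect_congr rfl fun x _ => ?_
      have : Nonempty X := ⟨x i⟩
      exact Fintype.expect_const (F x)

lemma expect_mul_partialAvg {u : (I → X) → ℝ} (hu : DependsOn u {i}ᶜ) (F : (I → X) → ℝ) :
    𝔼 x, u x * partialAvg i F x = 𝔼 x, u x * F x := by
  rw [← expect_expect_update i fun x => u x * F x]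
  refine Finset.expect_congr rfl fun x _ => ?_
  simp only [partialAvg, Finset.mul_expect, dependsOn_compl_singleton_iff.1 hu]

/-- `CutNormLE i F ε` bounds by `ε` the cut norm of `F` in the coordinates other than `i`: its
correlation with every product of `1`-bounded functions, the `j`-th of which ignores the
coordinate `j`. -/
def CutNormLE (i : I) (F : (I → X) → ℝ) (ε : ℝ) : Prop :=
  ∀ h : I → (I → X) → ℝ, (∀ j, j ≠ i → DependsOn (h j) {j}ᶜ) → (∀ j, j ≠ i → ∀ x, |h j x| ≤ 1) →
    |𝔼 x, F x * ∏ j ∈ univ.erase i, h j x| ≤ ε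

lemma CutNormLE.mono {F : (I → X) → ℝ} {ε ε' : ℝ} (h : CutNormLE i F ε) (hε : ε ≤ ε') :
    CutNormLE i F ε' :=
  fun g h1 h2 => (h g h1 h2).trans hε

lemma cutNormLE_zero {ε : ℝ} (hε : 0 ≤ ε) : CutNormLE i (0 : (I → X) → ℝ) ε :=
  fun h _ _ => by simpa using hε

lemma CutNormLE.abs_expect_mul_prod_le {F : (I → X) → ℝ} {ε : ℝ} (hF : CutNormLE i F ε)
    {h : I → (I → X) → ℝ} (hdep : ∀ j, j ≠ i → DependsOn (h j) {j}ᶜ) {C : I → ℝ}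
    (hC : ∀ j, 0 < C j) (hb : ∀ j, j ≠ i → ∀ x, |h j x| ≤ C j) :
    |𝔼 x, F x * ∏ j ∈ univ.erase i, h j x| ≤ (∏ j ∈ univ.erase i, C j) * ε := by
  have hpos : 0 < ∏ j ∈ univ.erase i, C j := Finset.prod_pos fun j _ => hC j
  have hcut := hF (fun j x => (C j)⁻¹ * h j x) (fun j hj x y hxy => by simp only [hdep j hj hxy])
    fun j hj x => by
      rw [abs_mul, abs_inv, abs_of_pos (hC j), inv_mul_le_iff₀ (hC j), mul_one]
      exact hb j hj x
  simp_rw [Finset.prod_mul_distrib, Finset.prod_inv_distrib, mul_left_comm (F _)] at hcut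
  rwa [← Finset.mul_expect, abs_mul, abs_inv, abs_of_pos hpos, inv_mul_le_iff₀ hpos] at hcut

lemma abs_expect_prod_sub_expect_prod_le {f g : I → (I → X) → ℝ} {C ε : I → ℝ}
    (hf : ∀ j, DependsOn (f j) {j}ᶜ) (hg : ∀ j, DependsOn (g j) {j}ᶜ) (hC : ∀ j, 0 < C j)
    (hfC : ∀ j x, |f j x| ≤ C j) (hgC : ∀ j x, |g j x| ≤ C j)
    (hcut : ∀ j, CutNormLE j (f j - g j) (ε j)) :
    |𝔼 x, ∏ j, f j x - 𝔼 x, ∏ j, g j x| ≤ ∑ i, (∏ j ∈ univ.erase i, C j) * ε i := by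
  let mixed (s : Finset I) (j : I) (x : I → X) : ℝ := if j ∈ s then f j x else g j x
  suffices h : ∀ s : Finset I, |𝔼 x, ∏ j, mixed s j x - 𝔼 x, ∏ j, g j x| ≤
      ∑ i ∈ s, (∏ j ∈ univ.erase i, C j) * ε i by simpa [mixed] using h univ
  intro s
  induction s using Finset.induction_on with
  | empty => simp [mixed]
  | insert a s ha ih =>
    have hstep := (hcut a).abs_expect_mul_prod_le (h := mixed s)
      (fun j _ x y hxy => by simp only [mixed, hf j hxy, hg j hxy]) hC
      (fun j _ x => by simp only [mixed]; split_ifs; exacts [hfC j x, hgC j x])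
    have hsplit (x) : (f a - g a) x * ∏ j ∈ univ.erase a, mixed s j x =
        ∏ j, mixed (insert a s) j x - ∏ j, mixed s j x := by
      rw [← Finset.mul_prod_erase univ (mixed (insert a s) · x) (Finset.mem_univ a),
        ← Finset.mul_prod_erase univ (mixed s · x) (Finset.mem_univ a)]
      have hrest : ∏ j ∈ univ.erase a, mixed (insert a s) j x = ∏ j ∈ univ.erase a, mixed s j x :=
        Finset.prod_congr rfl fun j hj => by
          simp [mixed, Finset.mem_insert, Finset.ne_of_mem_erase hj]
      rw [hrest, ← sub_mul]
      simp [mixed, ha]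
    simp_rw [hsplit, Finset.expect_sub_distrib] at hstep
    rw [Finset.sum_insert ha]
    exact (abs_sub_le _ _ _).trans (add_le_add hstep ih)

/-- The average over the coordinate `i` of the product of the functions `f j` with `j ≠ i`. -/
noncomputable def dualProd (i : I) (f : I → (I → X) → ℝ) : (I → X) → ℝ :=
  partialAvg i fun x => ∏ j ∈ univ.erase i, f j x

variable {f g ν : I → (I → X) → ℝ} {B ε₀ : ℝ}

lemma dualProd_nonneg (i : I) (hf : ∀ j x, 0 ≤ f j x) (x : I → X) : 0 ≤ dualProd i f x :=
  expect_nonneg fun _ => Finset.prod_nonneg fun j _ => hf j _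

lemma dualProd_mono (i : I) (hf : ∀ j x, 0 ≤ f j x) (hfg : ∀ j x, f j x ≤ g j x) (x : I → X) :
    dualProd i f x ≤ dualProd i g x :=
  expect_mono fun _ => Finset.prod_le_prod (fun j _ => hf j _) fun j _ => hfg j _

lemma dualProd_le (i : I) (hB : 1 ≤ B) (hf : ∀ j x, 0 ≤ f j x) (hfB : ∀ j x, f j x ≤ B)
    (x : I → X) : dualProd i f x ≤ B ^ Fintype.card I :=
  expect_le_of_forall_le (by positivity) fun _ =>
    prod_le_pow_card hB (fun j _ => hf j _) fun j _ => hfB j _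

lemma expect_prod_update {u : (I → X) → ℝ} (hu : DependsOn u {i}ᶜ) (f : I → (I → X) → ℝ) :
    𝔼 x, ∏ j, Function.update f i u j x = 𝔼 x, u x * dualProd i f x := by
  rw [dualProd, expect_mul_partialAvg hu]
  refine Finset.expect_congr rfl fun x _ => ?_
  rw [← Finset.mul_prod_erase univ _ (Finset.mem_univ i), Function.update_self]
  congr 1
  exact Finset.prod_congr rfl fun j hj => by rw [Function.update_of_ne (Finset.ne_of_mem_erase hj)]

lemma expect_prod_eq_expect_mul_dualProd (hf : DependsOn (f i) {i}ᶜ) :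
    𝔼 x, ∏ j, f j x = 𝔼 x, f i x * dualProd i f x := by
  rw [← expect_prod_update hf, Function.update_eq_self]

lemma abs_expect_mul_dualProd_sub_le [Nonempty X] {u : (I → X) → ℝ} {M : ℝ}
    (hu : DependsOn u {i}ᶜ) (hM : 1 ≤ M) (huM : ∀ x, |u x| ≤ M) (hν : ∀ j, DependsOn (ν j) {j}ᶜ)
    (hB : 1 ≤ B) (hε₀ : 0 ≤ ε₀) (hνB : ∀ j x, |ν j x| ≤ B) (hcut : ∀ j, CutNormLE j (ν j - 1) ε₀) :
    |𝔼 x, u x * dualProd i ν x - 𝔼 x, u x| ≤ Fintype.card I * (M * B ^ Fintype.card I * ε₀) := by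
  let C : I → ℝ := Function.update (fun _ => B) i M
  have hC : ∀ j, 1 ≤ C j := fun j => by
    rcases eq_or_ne j i with rfl | h <;> simp [C, *]
  have hprod (j : I) : ∏ k ∈ univ.erase j, C k ≤ M * B ^ Fintype.card I :=
    calc ∏ k ∈ univ.erase j, C k ≤ ∏ k, C k :=
          Finset.mul_prod_erase univ C (Finset.mem_univ j) ▸ le_mul_of_one_le_left
            (Finset.prod_nonneg fun k _ => zero_le_one.trans (hC k)) (hC j)
      _ = M * ∏ k ∈ univ.erase i, C k := by
        rw [← Finset.mul_prod_erase univ _ (Finset.mem_univ i)]; simp [C]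
      _ ≤ M * B ^ Fintype.card I := by
        gcongr
        exact prod_le_pow_card hB (fun j _ => zero_le_one.trans (hC j)) fun j hj => by
          simp [C, Function.update_of_ne (Finset.ne_of_mem_erase hj)]
  have hone (x : I → X) : dualProd i (1 : I → (I → X) → ℝ) x = 1 := by
    simp [dualProd, partialAvg]
  have htel := abs_expect_prod_sub_expect_prod_le (f := Function.update ν i u)
    (g := Function.update 1 i u) (C := C) (ε := fun _ => ε₀)
    (fun j => by rcases eq_or_ne j i with rfl | h <;> simp [*])
    (fun j => by
      rcases eq_or_ne j i with rfl | h
      · simp [hu]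
      · rw [Function.update_of_ne h]
        exact fun _ _ _ => rfl)
    (fun j => zero_lt_one.trans_le (hC j))
    (fun j x => by rcases eq_or_ne j i with rfl | h <;> simp [C, *])
    (fun j x => by rcases eq_or_ne j i with rfl | h <;> simp [C, *])
    (fun j => by rcases eq_or_ne j i with rfl | h <;> simp [*, cutNormLE_zero])
  simp_rw [expect_prod_update hu, hone, mul_one] at htel
  calc _ ≤ ∑ j, (∏ k ∈ univ.erase j, C k) * ε₀ := htel
    _ ≤ ∑ _j : I, M * B ^ Fintype.card I * ε₀ := by gcongr with j; exact hprod j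
    _ = _ := by simp

lemma expect_dualProd_sub_one_sq_le [Nonempty X] (i : I) {η : ℝ}
    (hν : ∀ j, DependsOn (ν j) {j}ᶜ) (hB : 1 ≤ B) (hε₀ : 0 ≤ ε₀)
    (hη : B ^ (2 * Fintype.card I) * ε₀ ≤ η) (hν0 : ∀ j x, 0 ≤ ν j x) (hνB : ∀ j x, ν j x ≤ B)
    (hcut : ∀ j, CutNormLE j (ν j - 1) ε₀) :
    𝔼 x, (dualProd i ν x - 1) ^ 2 ≤ 2 * Fintype.card I * η := by
  set n := Fintype.card I
  have hBn : 1 ≤ B ^ n := one_le_pow₀ hB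
  have habs (j x) : |ν j x| ≤ B := by simpa only [abs_of_nonneg (hν0 j x)] using hνB j x
  have hdual (x) : |dualProd i ν x| ≤ B ^ n := by
    simpa only [abs_of_nonneg (dualProd_nonneg i hν0 x)] using dualProd_le i hB hν0 hνB x
  have hη' : B ^ n * B ^ n * ε₀ ≤ η := by rwa [← pow_add, ← two_mul]
  have hfirst : |𝔼 x, dualProd i ν x - 1| ≤ n * η := by
    have h := abs_expect_mul_dualProd_sub_le (i := i) (u := fun _ : I → X => (1 : ℝ))
      (fun _ _ _ => rfl) le_rfl (by simp) hν hB hε₀ habs hcut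
    simp only [one_mul, Fintype.expect_const] at h
    refine h.trans (mul_le_mul_of_nonneg_left (le_trans ?_ hη') n.cast_nonneg)
    exact mul_le_mul_of_nonneg_right (le_mul_of_one_le_left (by positivity) hBn) hε₀
  have hsecond : |𝔼 x, dualProd i ν x * dualProd i ν x - 𝔼 x, dualProd i ν x| ≤ n * η :=
    (abs_expect_mul_dualProd_sub_le (dependsOn_partialAvg i _) hBn hdual hν hB hε₀ habs hcut).trans
      (mul_le_mul_of_nonneg_left hη' n.cast_nonneg)
  have hexpand : 𝔼 x, (dualProd i ν x - 1) ^ 2 =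
      (𝔼 x, dualProd i ν x * dualProd i ν x - 𝔼 x, dualProd i ν x) -
        (𝔼 x, dualProd i ν x - 1) := by
    conv_rhs => rw [← Fintype.expect_const (ι := I → X) (1 : ℝ)]
    simp_rw [← Finset.expect_sub_distrib]
    exact Finset.expect_congr rfl fun x _ => by ring
  linarith [(abs_le.1 hfirst).1, (abs_le.1 hsecond).2]

lemma CutNormLE.abs_expect_mul_dualProd_mul_dualProd_le {F : (I → X) → ℝ}
    (hF : CutNormLE i F ε₀) (hε₀ : 0 ≤ ε₀) (hB : 1 ≤ B) (hf : ∀ j, DependsOn (f j) {j}ᶜ)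
    (hg : ∀ j, DependsOn (g j) {j}ᶜ) (hfB : ∀ j x, |f j x| ≤ B) (hgB : ∀ j x, |g j x| ≤ B) :
    |𝔼 x, F x * (dualProd i f x * dualProd i g x)| ≤ B ^ (2 * Fintype.card I) * ε₀ := by
  have hdouble : 𝔼 x, F x * (dualProd i f x * dualProd i g x) = 𝔼 s, 𝔼 t, 𝔼 x,
      F x * ∏ j ∈ univ.erase i, f j (Function.update x i s) * g j (Function.update x i t) := by
    simp_rw [dualProd, partialAvg, Finset.expect_mul_expect, Finset.mul_expect,
      Finset.prod_mul_distrib]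
    rw [Finset.expect_comm]
    exact Finset.expect_congr rfl fun s _ => Finset.expect_comm ..
  rw [hdouble]
  have hB0 : 0 < B := zero_lt_one.trans_le hB
  refine abs_expect_le_of_forall_le (by positivity) fun s =>
    abs_expect_le_of_forall_le (by positivity) fun t => ?_
  have hcut := hF.abs_expect_mul_prod_le (C := fun _ => B * B)
    (h := fun j x => f j (Function.update x i s) * g j (Function.update x i t))
    (fun j hj => dependsOn_compl_singleton_iff.2 fun x r => by
      simp only [Function.update_comm hj, dependsOn_compl_singleton_iff.1 (hf j),
        dependsOn_compl_singleton_iff.1 (hg j)])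
    (fun _ => by positivity)
    (fun j _ x => by
      rw [abs_mul]
      exact mul_le_mul (hfB _ _) (hgB _ _) (abs_nonneg _) hB0.le)
  refine hcut.trans (mul_le_mul_of_nonneg_right ?_ hε₀)
  rw [pow_mul, ← pow_two]
  exact prod_le_pow_card (one_le_pow₀ hB) (fun _ _ => by positivity) fun _ _ => le_rfl

/-- `f` and `g` ignore the coordinate `i` and are close in cut norm, where `g` is bounded by `1`
while `f` is only bounded by a majorant `ν ≤ B` that is close to `1` in cut norm. -/
structure IsDenseModel (i : I) (f g ν : (I → X) → ℝ) (B ε₀ η : ℝ) : Prop where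
  dependsOn : DependsOn f {i}ᶜ
  dependsOn_model : DependsOn g {i}ᶜ
  dependsOn_majorant : DependsOn ν {i}ᶜ
  nonneg : ∀ x, 0 ≤ f x
  le_majorant : ∀ x, f x ≤ ν x
  majorant_le : ∀ x, ν x ≤ B
  model_nonneg : ∀ x, 0 ≤ g x
  model_le_one : ∀ x, g x ≤ 1
  cutNorm_sub : CutNormLE i (f - g) η
  cutNorm_majorant : CutNormLE i (ν - 1) ε₀

namespace IsDenseModel

variable {η η' : ℝ}

lemma mono {f g ν : (I → X) → ℝ} (h : IsDenseModel i f g ν B ε₀ η) (hη : η ≤ η') :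
    IsDenseModel i f g ν B ε₀ η' :=
  { h with cutNorm_sub := h.cutNorm_sub.mono hη }

lemma refl {u : (I → X) → ℝ} (hu : DependsOn u {i}ᶜ) (hu0 : ∀ x, 0 ≤ u x) (hu1 : ∀ x, u x ≤ 1)
    (hB : 1 ≤ B) (hε₀ : 0 ≤ ε₀) (hη : 0 ≤ η) : IsDenseModel i u u 1 B ε₀ η where
  dependsOn := hu
  dependsOn_model := hu
  dependsOn_majorant _ _ _ := rfl
  nonneg := hu0
  le_majorant := hu1
  majorant_le _ := hB
  model_nonneg := hu0
  model_le_one := hu1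
  cutNorm_sub := by simpa using cutNormLE_zero hη
  cutNorm_majorant := by simpa using cutNormLE_zero hε₀

variable {f g ν : (I → X) → ℝ} (h : IsDenseModel i f g ν B ε₀ η)
include h

lemma majorant_nonneg (x : I → X) : 0 ≤ ν x := (h.nonneg x).trans (h.le_majorant x)

lemma abs_le (x : I → X) : |f x| ≤ B := by
  rw [abs_of_nonneg (h.nonneg x)]
  exact (h.le_majorant x).trans (h.majorant_le x)

lemma abs_model_le_one (x : I → X) : |g x| ≤ 1 := by
  rw [abs_of_nonneg (h.model_nonneg x)]
  exact h.model_le_one x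

lemma expect_majorant_le [Nonempty X] : 𝔼 x, ν x ≤ 1 + ε₀ := by
  have hcut := h.cutNorm_majorant (fun _ _ => 1) (fun _ _ _ _ _ => rfl) (by simp)
  simp only [Finset.prod_const_one, mul_one, Pi.sub_apply, Pi.one_apply,
    Finset.expect_sub_distrib, Fintype.expect_const] at hcut
  linarith [le_abs_self (𝔼 x, ν x - 1)]

end IsDenseModel

/-- The counting estimate, with error `ε` and allowing `η` in the hypotheses, for families of dense
models that are unweighted (majorized by `1`) outside `S`. -/
def CountingEstimate (S : Finset I) (ε η : ℝ) : Prop :=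
  ∀ (X : Type u) [Fintype X] [Nonempty X] (f g ν : I → (I → X) → ℝ) (B ε₀ : ℝ), 1 ≤ B → 0 ≤ ε₀ →
    B ^ (2 * Fintype.card I) * ε₀ ≤ η → (∀ j, IsDenseModel j (f j) (g j) (ν j) B ε₀ η) →
    (∀ j ∉ S, ν j = 1) → |𝔼 x, ∏ j, f j x - 𝔼 x, ∏ j, g j x| ≤ ε

lemma countingEstimate_empty {η : ℝ} :
    CountingEstimate.{u} (∅ : Finset I) (Fintype.card I * η) η := by
  intro X _ _ f g ν B ε₀ _ _ _ h hν
  have hf1 (j x) : |f j x| ≤ 1 := by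
    rw [abs_of_nonneg ((h j).nonneg x)]
    simpa [hν j (Finset.notMem_empty j)] using (h j).le_majorant x
  simpa using abs_expect_prod_sub_expect_prod_le (C := 1) (fun j => (h j).dependsOn)
    (fun j => (h j).dependsOn_model) (fun _ => zero_lt_one) hf1
    (fun j => (h j).abs_model_le_one) (fun j => (h j).cutNorm_sub)

lemma CountingEstimate.anti {S : Finset I} {ε η η' : ℝ} (hS : CountingEstimate.{u} S ε η')
    (hη : η ≤ η') : CountingEstimate.{u} S ε η :=
  fun X _ _ f g ν B ε₀ hB hε₀ hBε₀ h =>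
    hS X f g ν B ε₀ hB hε₀ (hBε₀.trans hη) fun j => (h j).mono hη

section Step

variable {S : Finset I} {ε η : ℝ} [Nonempty X] (hB : 1 ≤ B) (hε₀ : 0 ≤ ε₀)
  (hη : B ^ (2 * Fintype.card I) * ε₀ ≤ η) (h : ∀ j, IsDenseModel j (f j) (g j) (ν j) B ε₀ η)
include hB hε₀ hη h

lemma CountingEstimate.abs_expect_mul_dualProd_sub_le {u : (I → X) → ℝ}
    (hS : CountingEstimate.{u} S ε η) (hν : ∀ j ∉ insert i S, ν j = 1)
    (hu : DependsOn u {i}ᶜ) (hu0 : ∀ x, 0 ≤ u x) (hu1 : ∀ x, u x ≤ 1) :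
    |𝔼 x, u x * dualProd i f x - 𝔼 x, u x * dualProd i g x| ≤ ε := by
  rw [← expect_prod_update hu, ← expect_prod_update hu]
  refine hS X _ _ (Function.update ν i 1) B ε₀ hB hε₀ hη (fun j => ?_) fun j hj => ?_
  · rcases eq_or_ne j i with rfl | hji
    · simpa using IsDenseModel.refl hu hu0 hu1 hB hε₀ (le_trans (by positivity) hη)
    · simpa [hji] using h j
  · rcases eq_or_ne j i with rfl | hji
    · simp
    · simpa [hji] using hν j (by simp [hji, hj])

lemma CountingEstimate.expect_dualProd_sub_sq_le (hS : CountingEstimate.{u} S ε η)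
    (hν : ∀ j ∉ insert i S, ν j = 1) (hε : 0 < ε) (hε1 : ε ≤ 1)
    (hηε : 2 * Fintype.card I * η ≤ ε ^ 2) :
    𝔼 x, (dualProd i f x - dualProd i g x) ^ 2 ≤ 4 * ε := by
  have hF0 := dualProd_nonneg i fun j => (h j).nonneg
  have hG0 := dualProd_nonneg i fun j => (h j).model_nonneg
  have hG1 (x) : dualProd i g x ≤ 1 := by
    simpa using dualProd_le i le_rfl (fun j => (h j).model_nonneg) (fun j => (h j).model_le_one) x
  refine expect_sub_sq_le hε hε1
    (dualProd_mono i (fun j => (h j).nonneg) fun j => (h j).le_majorant) hG0 hG1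
    ((expect_dualProd_sub_one_sq_le i (fun j => (h j).dependsOn_majorant) hB hε₀ hη
      (fun j => (h j).majorant_nonneg) (fun j => (h j).majorant_le)
      fun j => (h j).cutNorm_majorant).trans hηε)
    (hS.abs_expect_mul_dualProd_sub_le hB hε₀ hη h hν (fun x y hxy => ?_)
      (fun x => le_min (hF0 x) zero_le_one) fun x => min_le_right _ _)
    (hS.abs_expect_mul_dualProd_sub_le hB hε₀ hη h hν (dependsOn_partialAvg i _) hG0 hG1)
  rw [dualProd, dependsOn_partialAvg i _ hxy]

omit [Nonempty X] in
lemma expect_majorant_mul_dualProd_sub_sq_le (i : I) :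
    𝔼 x, ν i x * (dualProd i f x - dualProd i g x) ^ 2 ≤
      𝔼 x, (dualProd i f x - dualProd i g x) ^ 2 + 4 * η := by
  have hg (j x) : |g j x| ≤ B := ((h j).abs_model_le_one x).trans hB
  have hff := (h i).cutNorm_majorant.abs_expect_mul_dualProd_mul_dualProd_le hε₀ hB
    (fun j => (h j).dependsOn) (fun j => (h j).dependsOn) (fun j => (h j).abs_le)
    fun j => (h j).abs_le
  have hfg := (h i).cutNorm_majorant.abs_expect_mul_dualProd_mul_dualProd_le hε₀ hB
    (fun j => (h j).dependsOn) (fun j => (h j).dependsOn_model) (fun j => (h j).abs_le) hg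
  have hgg := (h i).cutNorm_majorant.abs_expect_mul_dualProd_mul_dualProd_le hε₀ hB
    (fun j => (h j).dependsOn_model) (fun j => (h j).dependsOn_model) hg hg
  have hexpand : 𝔼 x, ν i x * (dualProd i f x - dualProd i g x) ^ 2 =
      𝔼 x, (dualProd i f x - dualProd i g x) ^ 2 +
        𝔼 x, (ν i - 1) x * (dualProd i f x * dualProd i f x) -
        2 * 𝔼 x, (ν i - 1) x * (dualProd i f x * dualProd i g x) +
        𝔼 x, (ν i - 1) x * (dualProd i g x * dualProd i g x) := by
    rw [Finset.mul_expect, ← Finset.expect_add_distrib, ← Finset.expect_sub_distrib,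
      ← Finset.expect_add_distrib]
    exact Finset.expect_congr rfl fun x _ => by simp only [Pi.sub_apply, Pi.one_apply]; ring
  linarith [(abs_le.1 hff).2, (abs_le.1 hfg).1, (abs_le.1 hgg).2]

lemma CountingEstimate.abs_expect_mul_dualProd_sub_dualProd_le (hS : CountingEstimate.{u} S ε η)
    (hν : ∀ j ∉ insert i S, ν j = 1) (hε : 0 < ε) (hε1 : ε ≤ 1)
    (hηε : (2 * Fintype.card I + 4) * η ≤ ε ^ 2) :
    |𝔼 x, f i x * (dualProd i f x - dualProd i g x)| ≤ 4 * √ε := by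
  have hε₀η : ε₀ ≤ η := (le_mul_of_one_le_left hε₀ (one_le_pow₀ hB)).trans hη
  have hη0 : 0 ≤ η := hε₀.trans hε₀η
  have hn : 0 ≤ 2 * (Fintype.card I : ℝ) * η := by positivity
  have hL2 := hS.expect_dualProd_sub_sq_le hB hε₀ hη h hν hε hε1 (by linarith)
  have hνL2 := expect_majorant_mul_dualProd_sub_sq_le hB hε₀ hη h i
  have hν2 : 𝔼 x, ν i x ≤ 2 := by nlinarith [(h i).expect_majorant_le]
  refine abs_le_of_sq_le_sq (le_trans (sq_expect_mul_le_of_le (h i).nonneg (h i).le_majorant _) ?_)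
    (by positivity)
  rw [mul_pow, Real.sq_sqrt hε.le]
  calc (𝔼 x, ν i x) * 𝔼 x, ν i x * (dualProd i f x - dualProd i g x) ^ 2 ≤ 2 * (5 * ε) := by
        refine mul_le_mul hν2 (by nlinarith) (expect_nonneg fun x => ?_) zero_le_two
        exact mul_nonneg ((h i).majorant_nonneg x) (sq_nonneg _)
    _ ≤ 4 ^ 2 * ε := by linarith

omit hB hε₀ hη [Nonempty X] in
lemma abs_expect_mul_dualProd_sub_expect_prod_le (i : I) :
    |𝔼 x, f i x * dualProd i g x - 𝔼 x, ∏ j, g j x| ≤ η := by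
  rw [dualProd, expect_mul_partialAvg (h i).dependsOn, ← Finset.expect_sub_distrib]
  simp_rw [← Finset.mul_prod_erase univ (g · _) (Finset.mem_univ i), ← sub_mul]
  exact (h i).cutNorm_sub g (fun j _ => (h j).dependsOn_model) fun j _ => (h j).abs_model_le_one

end Step

lemma CountingEstimate.insert {S : Finset I} {ε η : ℝ} (hS : CountingEstimate.{u} S ε η) (i : I)
    (hε : 0 < ε) (hε1 : ε ≤ 1) (hηε : (2 * Fintype.card I + 4) * η ≤ ε ^ 2) :
    CountingEstimate.{u} (insert i S) (4 * √ε + η) η := by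
  intro X _ _ f g ν B ε₀ hB hε₀ hη h hν
  have hdual := hS.abs_expect_mul_dualProd_sub_dualProd_le hB hε₀ hη h hν hε hε1 hηε
  simp_rw [mul_sub, Finset.expect_sub_distrib] at hdual
  rw [expect_prod_eq_expect_mul_dualProd (h i).dependsOn]
  exact (abs_sub_le _ _ _).trans
    (add_le_add hdual (abs_expect_mul_dualProd_sub_expect_prod_le h i))

theorem exists_countingEstimate (S : Finset I) {ε : ℝ} (hε : 0 < ε) :
    ∃ η > 0, CountingEstimate.{u} S ε η := by
  induction S using Finset.induction_on generalizing ε with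
  | empty =>
    refine ⟨ε / (Fintype.card I + 1), by positivity, fun X _ _ f g ν B ε₀ hB hε₀ hη h hν =>
      (countingEstimate_empty X f g ν B ε₀ hB hε₀ hη h hν).trans ?_⟩
    rw [← mul_div_assoc, div_le_iff₀ (by positivity)]
    linarith
  | insert i S _ ih =>
    set s := min 1 (ε / 8)
    have hs : 0 < s := by positivity
    obtain ⟨η', hη', hS⟩ := ih (pow_pos hs 2)
    set η := min η' (min ((s ^ 2) ^ 2 / (2 * Fintype.card I + 4)) (ε / 2))
    have hηε : (2 * Fintype.card I + 4) * η ≤ (s ^ 2) ^ 2 := by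
      rw [← le_div_iff₀' (by positivity)]
      exact (min_le_right _ _).trans (min_le_left _ _)
    refine ⟨η, by positivity, fun X _ _ f g ν B ε₀ hB hε₀ hη h hν => ?_⟩
    have hinsert := (hS.anti (min_le_left _ _)).insert i (pow_pos hs 2)
      (pow_le_one₀ hs.le (min_le_left _ _)) hηε X f g ν B ε₀ hB hε₀ hη h hν
    rw [Real.sqrt_sq hs.le] at hinsert
    linarith [min_le_right 1 (ε / 8), (min_le_right η' _).trans
      (min_le_right ((s ^ 2) ^ 2 / (2 * Fintype.card I + 4)) (ε / 2))]

end Counting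

section DenseModel

open Polynomial
open scoped BigOperators

variable {X : Type*} [Fintype X]

/-- The functions whose correlation with every `φ ∈ Φ` is at most `ε` in absolute value. -/
def lowCorrelation (Φ : Set (X → ℝ)) (ε : ℝ) : Set (X → ℝ) :=
  {T | ∀ φ ∈ Φ, |𝔼 x, T x * φ x| ≤ ε}

/-- The test functions against which the functions of `lowCorrelation Φ 1` still have correlation
at most `1`. -/
def bipolar (Φ : Set (X → ℝ)) : Set (X → ℝ) := lowCorrelation (lowCorrelation Φ 1) 1

/-- The correlation with `φ`, as a linear functional. -/
noncomputable def correlation (φ : X → ℝ) : (X → ℝ) →ₗ[ℝ] ℝ where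
  toFun T := 𝔼 x, T x * φ x
  map_add' S T := by simp only [Pi.add_apply, add_mul, Finset.expect_add_distrib]
  map_smul' c T := by
    simp only [Pi.smul_apply, smul_eq_mul, mul_assoc, Finset.mul_expect, RingHom.id_apply]

lemma lowCorrelation_eq_iInter (Φ : Set (X → ℝ)) (ε : ℝ) :
    lowCorrelation Φ ε = ⋂ φ ∈ Φ, correlation φ ⁻¹' Metric.closedBall 0 ε := by
  ext T
  simp [lowCorrelation, correlation]

lemma convex_lowCorrelation (Φ : Set (X → ℝ)) (ε : ℝ) : Convex ℝ (lowCorrelation Φ ε) := by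
  rw [lowCorrelation_eq_iInter]
  exact convex_iInter₂ fun φ _ => (convex_closedBall 0 ε).linear_preimage (correlation φ)

lemma isClosed_lowCorrelation (Φ : Set (X → ℝ)) (ε : ℝ) : IsClosed (lowCorrelation Φ ε) := by
  rw [lowCorrelation_eq_iInter]
  exact isClosed_biInter fun φ _ =>
    Metric.isClosed_closedBall.preimage (correlation φ).continuous_of_finiteDimensional

lemma smul_mem_lowCorrelation {Φ : Set (X → ℝ)} {ε c : ℝ} (hc : 0 ≤ c) {T : X → ℝ}
    (hT : T ∈ lowCorrelation Φ ε) : c • T ∈ lowCorrelation Φ (c * ε) := fun φ hφ => by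
  change |correlation φ (c • T)| ≤ c * ε
  rw [map_smul, smul_eq_mul, abs_mul, abs_of_nonneg hc]
  exact mul_le_mul_of_nonneg_left (hT φ hφ) hc

lemma neg_mem_lowCorrelation {Φ : Set (X → ℝ)} {ε : ℝ} {T : X → ℝ}
    (hT : T ∈ lowCorrelation Φ ε) : -T ∈ lowCorrelation Φ ε := fun φ hφ => by
  change |correlation φ (-T)| ≤ ε
  rw [map_neg, abs_neg]
  exact hT φ hφ

lemma abs_expect_mul_le_of_mem_bipolar {Φ : Set (X → ℝ)} {ψ T : X → ℝ} {ε : ℝ}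
    (hψ : ψ ∈ bipolar Φ) (hε : 0 < ε) (hT : T ∈ lowCorrelation Φ ε) :
    |𝔼 x, T x * ψ x| ≤ ε := by
  have h := hψ _ (by simpa [hε.ne'] using smul_mem_lowCorrelation (inv_pos.2 hε).le hT)
  simp_rw [mul_comm (ψ _)] at h
  change |correlation ψ (ε⁻¹ • T)| ≤ 1 at h
  rwa [map_smul, smul_eq_mul, abs_mul, abs_of_pos (inv_pos.2 hε), inv_mul_le_iff₀ hε,
    mul_one] at h

lemma exists_eq_correlation [Nonempty X] (ℓ : (X → ℝ) →ₗ[ℝ] ℝ) : ∃ w, ℓ = correlation w := by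
  classical
  refine ⟨fun x => Fintype.card X * ℓ (Pi.single x 1), LinearMap.pi_ext' fun x => ?_⟩
  ext
  simp [correlation, Fintype.expect_eq_sum_div_card, Pi.single_apply]

lemma exists_mem_lowCorrelation [Nonempty X] {Φ K : Set (X → ℝ)} (hconv : Convex ℝ K)
    (hcomp : IsCompact K) {ε : ℝ} (hε : 0 < ε)
    (h : ∀ ψ ∈ bipolar Φ, ∃ F ∈ K, 𝔼 x, F x * ψ x ≤ ε) : ∃ F ∈ K, F ∈ lowCorrelation Φ ε := by
  by_contra! hdisj
  obtain ⟨ℓ, u, v, hℓK, huv, hℓΦ⟩ := geometric_hahn_banach_compact_closed hconv hcomp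
    (convex_lowCorrelation Φ ε) (isClosed_lowCorrelation Φ ε) (Set.disjoint_left.2 hdisj)
  obtain ⟨w, hw⟩ := exists_eq_correlation (ℓ : (X → ℝ) →ₗ[ℝ] ℝ)
  have hℓ (F) : ℓ F = correlation w F := LinearMap.congr_fun hw F
  have hv : v < 0 := by simpa using hℓΦ 0 fun φ _ => by simpa using hε.le
  have hscale (F : X → ℝ) : 𝔼 x, F x * ((ε / v) • w) x = ε / v * ℓ F := by
    simp [hℓ, correlation, Finset.mul_expect, mul_left_comm]
  have hψ : (ε / v) • w ∈ bipolar Φ := fun T hT => by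
    simp_rw [mul_comm _ (T _)]
    rw [hscale]
    have hεT : ε • T ∈ lowCorrelation Φ ε := by simpa using smul_mem_lowCorrelation hε.le hT
    have hpos := hℓΦ _ hεT
    have hneg := hℓΦ _ (neg_mem_lowCorrelation hεT)
    rw [map_neg] at hneg
    rw [map_smul, smul_eq_mul] at hpos hneg
    rw [div_mul_eq_mul_div, abs_div, abs_of_neg hv, div_le_one (neg_pos.2 hv)]
    exact abs_le.2 ⟨by linarith, by linarith⟩
  obtain ⟨F, hFK, hF⟩ := h _ hψ
  have hFv : ℓ F < v := (hℓK F hFK).trans huv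
  rw [hscale, div_mul_eq_mul_div, div_le_iff_of_neg hv] at hF
  nlinarith

lemma abs_le_of_mem_bipolar {Φ : Set (X → ℝ)} (hΦ : ∀ φ ∈ Φ, ∀ x, |φ x| ≤ 1)
    {ψ : X → ℝ} (hψ : ψ ∈ bipolar Φ) (x : X) : |ψ x| ≤ 1 := by
  classical
  have : Nonempty X := ⟨x⟩
  have hdelta (φ : X → ℝ) : 𝔼 y, φ y * (Pi.single x (Fintype.card X) : X → ℝ) y = φ x := by
    rw [Fintype.expect_eq_sum_div_card]
    simp [Pi.single_apply]
  simpa only [hdelta] using hψ (Pi.single x (Fintype.card X : ℝ)) fun φ hφ => by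
    simpa only [mul_comm, hdelta] using hΦ φ hφ x

section Multiplicative

variable {Φ : Set (X → ℝ)} {ψ ψ' : X → ℝ}
  (hmul : ∀ T ∈ lowCorrelation Φ 1, ∀ φ ∈ Φ, T * φ ∈ lowCorrelation Φ 1)
include hmul

lemma mul_mem_bipolar (h : ψ ∈ bipolar Φ) (h' : ψ' ∈ bipolar Φ) : ψ * ψ' ∈ bipolar Φ := by
  intro T hT
  have hTψ' : T * ψ' ∈ lowCorrelation Φ 1 := fun φ hφ => by
    simpa [mul_comm, mul_left_comm] using h' _ (hmul T hT φ hφ)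
  simpa [mul_comm, mul_left_comm] using h _ hTψ'

lemma pow_mem_bipolar (hone : 1 ∈ Φ) (h : ψ ∈ bipolar Φ) (n : ℕ) : ψ ^ n ∈ bipolar Φ := by
  induction n with
  | zero => exact fun T hT => by simpa using hT 1 hone
  | succ n ih => exact pow_succ ψ n ▸ mul_mem_bipolar hmul ih h

lemma abs_expect_mul_eval_le (hone : 1 ∈ Φ) (h : ψ ∈ bipolar Φ) (P : ℝ[X]) {F : X → ℝ} {ε : ℝ}
    (hε : 0 < ε) (hF : F ∈ lowCorrelation Φ ε) :
    |𝔼 x, F x * P.eval (ψ x)| ≤ (∑ n ∈ P.support, |P.coeff n|) * ε := by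
  have hexpand : 𝔼 x, F x * P.eval (ψ x) =
      ∑ n ∈ P.support, P.coeff n * 𝔼 x, F x * (ψ ^ n) x := by
    simp_rw [Finset.mul_expect]
    rw [← Finset.expect_sum_comm]
    refine Finset.expect_congr rfl fun x _ => ?_
    simp only [eval_eq_sum, Polynomial.sum, Finset.mul_sum, Pi.pow_apply, mul_left_comm]
  rw [hexpand, Finset.sum_mul]
  refine (Finset.abs_sum_le_sum_abs _ _).trans (Finset.sum_le_sum fun n _ => ?_)
  rw [abs_mul]
  exact mul_le_mul_of_nonneg_left
    (abs_expect_mul_le_of_mem_bipolar (pow_mem_bipolar hmul hone h n) hε hF) (abs_nonneg _)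

/-- By duality it suffices to correlate with a single `ψ` at a time; the best model is then the
indicator of `ψ > 0`, and `max ψ 0` is replaced by a polynomial in `ψ`. -/
lemma exists_expect_sub_mul_le [Nonempty X] (hone : 1 ∈ Φ) (hψ : ψ ∈ bipolar Φ)
    (hψ1 : ∀ x, |ψ x| ≤ 1) {P : ℝ[X]} {ε ε' : ℝ}
    (hP : ∀ t ∈ Set.Icc (-1) 1, |P.eval t - max t 0| < ε / 6) (hε'0 : 0 < ε') (hε'1 : ε' ≤ 1)
    (hε' : (∑ n ∈ P.support, |P.coeff n|) * ε' ≤ ε / 2) {f ν : X → ℝ} (hf : ∀ x, 0 ≤ f x)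
    (hfν : ∀ x, f x ≤ ν x) (hν : ν - 1 ∈ lowCorrelation Φ ε') :
    ∃ g ∈ Set.Icc (0 : X → ℝ) 1, 𝔼 x, (f x - g x) * ψ x ≤ ε := by
  have hEν : 𝔼 x, ν x ≤ 2 := by
    have h := (abs_le.1 (hν 1 hone)).2
    simp only [Pi.sub_apply, Pi.one_apply, mul_one, Finset.expect_sub_distrib,
      Fintype.expect_const] at h
    linarith
  refine ⟨ind {x | 0 < ψ x}, ⟨ind_nonneg _, ind_le_one _⟩, ?_⟩
  have hpt (x) : (f x - ind {x | 0 < ψ x} x) * ψ x ≤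
      (ν - 1) x * P.eval (ψ x) + ε / 6 * (ν x + 1) := by
    have hPx := abs_lt.1 (hP (ψ x) (abs_le.1 (hψ1 x)))
    have hmax : (f x - ind {x | 0 < ψ x} x) * ψ x ≤ (ν x - 1) * max (ψ x) 0 := by
      by_cases hx : 0 < ψ x
      · rw [ind_of_mem (by exact hx), max_eq_left hx.le]
        exact mul_le_mul_of_nonneg_right (by linarith [hfν x]) hx.le
      · rw [ind_of_notMem (by exact hx), max_eq_right (not_lt.1 hx)]
        nlinarith [hf x]
    have hν0 : 0 ≤ ν x := (hf x).trans (hfν x)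
    simp only [Pi.sub_apply, Pi.one_apply]
    nlinarith
  have hpoly := (abs_le.1 (abs_expect_mul_eval_le hmul hone hψ P hε'0 hν)).2
  calc 𝔼 x, (f x - ind {x | 0 < ψ x} x) * ψ x
      ≤ 𝔼 x, ((ν - 1) x * P.eval (ψ x) + ε / 6 * (ν x + 1)) := expect_mono hpt
    _ = 𝔼 x, (ν - 1) x * P.eval (ψ x) + ε / 6 * (𝔼 x, ν x + 1) := by
      rw [Finset.expect_add_distrib, ← Finset.mul_expect, Finset.expect_add_distrib,
        Fintype.expect_const]
    _ ≤ ε := by nlinarith [abs_nonneg (P.eval 0 - max (0 : ℝ) 0), hP 0 (by simp)]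

end Multiplicative

theorem exists_dense_model {ε : ℝ} (hε : 0 < ε) : ∃ ε' > 0,
    ∀ (X : Type*) [Fintype X] [Nonempty X] (Φ : Set (X → ℝ)), 1 ∈ Φ → (∀ φ ∈ Φ, ∀ x, |φ x| ≤ 1) →
    (∀ T ∈ lowCorrelation Φ 1, ∀ φ ∈ Φ, T * φ ∈ lowCorrelation Φ 1) →
    ∀ f ν : X → ℝ, (∀ x, 0 ≤ f x) → (∀ x, f x ≤ ν x) → ν - 1 ∈ lowCorrelation Φ ε' →
    ∃ g : X → ℝ, (∀ x, 0 ≤ g x) ∧ (∀ x, g x ≤ 1) ∧ f - g ∈ lowCorrelation Φ ε := by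
  obtain ⟨P, hP⟩ := exists_polynomial_near_of_continuousOn (-1) 1 (fun x : ℝ => max x 0)
    (by fun_prop) (ε / 6) (by positivity)
  set C := ∑ n ∈ P.support, |P.coeff n|
  have hC : 0 ≤ C := Finset.sum_nonneg fun _ _ => abs_nonneg _
  set ε' := min 1 (ε / (2 * (C + 1)))
  have hε'0 : 0 < ε' := lt_min one_pos (div_pos hε (by linarith [hC]))
  have hε'C : C * ε' ≤ ε / 2 := by
    have : ε' * (2 * (C + 1)) ≤ ε := (le_div_iff₀ (by linarith [hC])).1 (min_le_right _ _)
    nlinarith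
  refine ⟨ε', hε'0, fun X _ _ Φ hone hΦ hmul f ν hf hfν hν => ?_⟩
  obtain ⟨F, hF, hFΦ⟩ := exists_mem_lowCorrelation (Φ := Φ) (convex_Icc (f - 1) f) isCompact_Icc hε
    fun ψ hψ => by
      obtain ⟨g, hg, h⟩ := exists_expect_sub_mul_le hmul hone hψ (abs_le_of_mem_bipolar hΦ hψ) hP
        hε'0 (min_le_left _ _) hε'C hf hfν hν
      exact ⟨f - g, ⟨sub_le_sub_left hg.2 f, sub_le_self f hg.1⟩, h⟩
  exact ⟨f - F, sub_nonneg.2 hF.2, sub_le_comm.1 hF.1, by rwa [sub_sub_cancel]⟩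

end DenseModel

section RelativeSzemeredi

universe u

open Finset (univ)
open scoped BigOperators

section SumCutNorm

variable {J Z : Type*} [Fintype J] [DecidableEq J] [AddCommGroup Z]

/-- `(s, y) ↦ y`, with the coordinate `j₀` changed so that the sum of the coordinates is `s`. -/
def withSum (j₀ : J) : Z × (J → Z) →+ (J → Z) where
  toFun w := w.2 + Pi.single j₀ (w.1 - ∑ j, w.2 j)
  map_zero' := by simp
  map_add' a b := by
    simp only [Prod.fst_add, Prod.snd_add, Pi.add_apply, Finset.sum_add_distrib, add_sub_add_comm,
      Pi.single_add]
    exact add_add_add_comm ..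

lemma sum_withSum (j₀ : J) (w : Z × (J → Z)) : ∑ j, withSum j₀ w j = w.1 := by
  simp [withSum, Finset.sum_add_distrib]

lemma withSum_surjective (j₀ : J) : Function.Surjective (withSum (Z := Z) j₀) :=
  fun y => ⟨(∑ j, y j, y), by simp [withSum]⟩

variable [Fintype Z] {E : Type*} [NormedAddCommGroup E] [NormedSpace ℝ E] [Module ℚ≥0 E]

/-- `SumCutNormLE J F ε` bounds by `ε` the correlation of `y ↦ F (∑ j, y j)` with every product of
`1`-bounded functions on `J → Z`, the `j`-th of which ignores the coordinate `j`. -/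
def SumCutNormLE (J : Type*) [Fintype J] [DecidableEq J] (F : Z → E) (ε : ℝ) : Prop :=
  ∀ h : J → (J → Z) → ℝ, (∀ j, DependsOn (h j) {j}ᶜ) → (∀ j y, |h j y| ≤ 1) →
    ‖𝔼 y, (∏ j, h j y) • F (∑ j, y j)‖ ≤ ε

lemma SumCutNormLE.mono {F : Z → E} {ε ε' : ℝ} (h : SumCutNormLE J F ε) (hε : ε ≤ ε') :
    SumCutNormLE J F ε' :=
  fun u h1 h2 => (h u h1 h2).trans hε

lemma sumCutNormLE_real_iff {F : Z → ℝ} {ε : ℝ} :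
    SumCutNormLE J F ε ↔ ∀ h : J → (J → Z) → ℝ, (∀ j, DependsOn (h j) {j}ᶜ) →
      (∀ j y, |h j y| ≤ 1) → |𝔼 y, F (∑ j, y j) * ∏ j, h j y| ≤ ε := by
  simp only [SumCutNormLE, Real.norm_eq_abs, smul_eq_mul, mul_comm]

lemma expect_comp_sum [Nonempty J] (F : Z → ℝ) : 𝔼 y : J → Z, F (∑ j, y j) = 𝔼 s, F s := by
  let sumHom : (J → Z) →+ Z := ∑ j, Pi.evalAddMonoidHom (fun _ => Z) j
  have hsum (y : J → Z) : sumHom y = ∑ j, y j := by simp [sumHom]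
  have hsurj : Function.Surjective sumHom := fun s =>
    ⟨Pi.single (Classical.arbitrary J) s, by simp [hsum]⟩
  simpa only [hsum] using expect_comp_addMonoidHom hsurj F

lemma SumCutNormLE.abs_expect_le [Nonempty J] {F : Z → ℝ} {ε : ℝ} (h : SumCutNormLE J F ε) :
    |𝔼 s, F s| ≤ ε := by
  have h1 := h 1 (fun _ => dependsOn_compl_singleton_iff.2 fun _ _ => rfl) (by simp)
  simpa [expect_comp_sum] using h1

/-- The average of `∏ j, h j` over the vectors with coordinate sum `s`, as a function of `s`. -/
noncomputable def sumDual (j₀ : J) (h : J → (J → Z) → ℝ) (s : Z) : ℝ :=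
  𝔼 y, ∏ j, h j (withSum j₀ (s, y))

/-- The functions `sumDual j₀ h` against which `SumCutNormLE` tests. -/
def sumDuals (j₀ : J) : Set (Z → ℝ) :=
  sumDual j₀ '' {h | (∀ j, DependsOn (h j) {j}ᶜ) ∧ ∀ j y, |h j y| ≤ 1}

lemma expect_mul_sumDual (j₀ : J) (h : J → (J → Z) → ℝ) (T : Z → ℝ) :
    𝔼 s, T s * sumDual j₀ h s = 𝔼 y, T (∑ j, y j) * ∏ j, h j y := by
  rw [← expect_comp_addMonoidHom (withSum_surjective j₀) fun y => T (∑ j, y j) * ∏ j, h j y,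
    expect_prod_type]
  simp only [sum_withSum, sumDual, Finset.mul_expect]

lemma sumCutNormLE_iff_mem_lowCorrelation (j₀ : J) {F : Z → ℝ} {ε : ℝ} :
    SumCutNormLE J F ε ↔ F ∈ lowCorrelation (sumDuals j₀) ε := by
  refine sumCutNormLE_real_iff.trans ⟨?_, fun hF h h1 h2 => ?_⟩
  · rintro hF _ ⟨h, ⟨h1, h2⟩, rfl⟩
    rw [expect_mul_sumDual]
    exact hF h h1 h2
  · rw [← expect_mul_sumDual j₀]
    exact hF _ ⟨h, ⟨h1, h2⟩, rfl⟩

lemma sumDual_mul_sumDual (j₀ : J) (h h' : J → (J → Z) → ℝ) (s : Z) :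
    sumDual j₀ h s * sumDual j₀ h' s =
      𝔼 z, sumDual j₀ (fun j y => h j y * h' j (y + withSum j₀ (0, z))) s := by
  unfold sumDual
  rw [Finset.expect_comm, Finset.expect_mul]
  refine Finset.expect_congr rfl fun y _ => ?_
  rw [Finset.mul_expect]
  refine (Fintype.expect_equiv (Equiv.addLeft y) _ _ fun z => ?_).symm
  simp [Finset.prod_mul_distrib, ← map_add]

lemma one_mem_sumDuals (j₀ : J) : (1 : Z → ℝ) ∈ sumDuals j₀ :=
  ⟨1, ⟨fun _ => dependsOn_compl_singleton_iff.2 fun _ _ => rfl, by simp⟩, by ext; simp [sumDual]⟩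

lemma abs_le_one_of_mem_sumDuals {j₀ : J} {φ : Z → ℝ} (hφ : φ ∈ sumDuals j₀) (s : Z) :
    |φ s| ≤ 1 := by
  obtain ⟨h, ⟨-, h2⟩, rfl⟩ := hφ
  refine abs_expect_le_of_forall_le zero_le_one fun y => ?_
  rw [Finset.abs_prod]
  exact Finset.prod_le_one (fun _ _ => abs_nonneg _) fun j _ => h2 j _

lemma mul_mem_lowCorrelation_sumDuals {j₀ : J} {T φ : Z → ℝ}
    (hT : T ∈ lowCorrelation (sumDuals j₀) 1) (hφ : φ ∈ sumDuals j₀) :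
    T * φ ∈ lowCorrelation (sumDuals j₀) 1 := by
  rintro _ ⟨h', ⟨h1', h2'⟩, rfl⟩
  obtain ⟨h, ⟨h1, h2⟩, rfl⟩ := hφ
  have hprod : 𝔼 s, (T * sumDual j₀ h) s * sumDual j₀ h' s =
      𝔼 z, 𝔼 s, T s * sumDual j₀ (fun j y => h j y * h' j (y + withSum j₀ (0, z))) s := by
    simp_rw [Pi.mul_apply, mul_assoc, sumDual_mul_sumDual, Finset.mul_expect]
    exact Finset.expect_comm ..
  rw [hprod]
  refine abs_expect_le_of_forall_le zero_le_one fun z =>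
    hT _ ⟨_, ⟨fun j y y' hy => ?_, fun j y => ?_⟩, rfl⟩
  · have hshift : ∀ l ∈ ({j}ᶜ : Set J),
        (y + withSum j₀ (0, z)) l = (y' + withSum j₀ (0, z)) l := fun l hl => by simp [hy l hl]
    simp only [h1 j hy, h1' j hshift]
  · rw [abs_mul]
    exact mul_le_one₀ (h2 j _) (abs_nonneg _) (h2' j _)

variable (J) in
theorem exists_dense_model_sumCutNormLE [Nonempty J] {ε : ℝ} (hε : 0 < ε) :
    ∃ ε' > 0, ∀ (Z : Type*) [AddCommGroup Z] [Fintype Z] (f ν : Z → ℝ), (∀ x, 0 ≤ f x) →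
      (∀ x, f x ≤ ν x) → SumCutNormLE J (ν - 1) ε' →
      ∃ g : Z → ℝ, (∀ x, 0 ≤ g x) ∧ (∀ x, g x ≤ 1) ∧ SumCutNormLE J (f - g) ε := by
  obtain ⟨ε', hε', H⟩ := exists_dense_model hε
  refine ⟨ε', hε', fun Z _ _ f ν hf hfν hν => ?_⟩
  let j₀ := Classical.arbitrary J
  simp only [sumCutNormLE_iff_mem_lowCorrelation j₀] at hν ⊢
  exact H Z (sumDuals j₀) (one_mem_sumDuals j₀) (fun _ => abs_le_one_of_mem_sumDuals)
    (fun _ hT _ => mul_mem_lowCorrelation_sumDuals hT) f ν hf hfν hν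

end SumCutNorm

lemma expect_insertNth {X M : Type*} [Fintype X] [AddCommMonoid M] [Module ℚ≥0 M] {k : ℕ}
    (i : Fin (k + 1)) (F : (Fin (k + 1) → X) → M) :
    𝔼 x, F x = 𝔼 t, 𝔼 y : Fin k → X, F (i.insertNth t y) := by
  rw [← expect_prod_type fun w : X × (Fin k → X) => F (i.insertNth w.1 w.2)]
  exact (Fintype.expect_equiv (Fin.insertNthEquiv (fun _ => X) i) _ _ fun _ => rfl).symm

variable {K : Type*} [Field K] {k : ℕ}

/-- The form `∑ j, (j - i) x_j`, which ignores the coordinate `i`. It is the `i`-th term of an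
arithmetic progression whose first term and common difference are linear in `x`. -/
def progressionForm (i : Fin (k + 1)) (x : Fin (k + 1) → K) : K :=
  ∑ j ∈ univ.erase i, ((j : ℕ) - (i : ℕ) : K) * x j

lemma dependsOn_progressionForm (F : K → ℝ) (i : Fin (k + 1)) :
    DependsOn (fun x => F (progressionForm i x)) {i}ᶜ := fun x y hxy => by
  simp only [progressionForm]
  exact congrArg F <| Finset.sum_congr rfl fun j hj => by rw [hxy j (Finset.ne_of_mem_erase hj)]

variable (k K) in
/-- The first term and the common difference of the progression `progressionForm`. -/
def progressionHom : (Fin (k + 1) → K) →+ K × K where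
  toFun x := (∑ j : Fin (k + 1), (j : ℕ) * x j, -∑ j, x j)
  map_zero' := by simp
  map_add' x y := by
    simp only [Pi.add_apply, mul_add, Finset.sum_add_distrib, neg_add, Prod.mk_add_mk]

lemma progressionForm_eq (i : Fin (k + 1)) (x : Fin (k + 1) → K) :
    progressionForm i x = (progressionHom K k x).1 + (i : ℕ) • (progressionHom K k x).2 := by
  rw [progressionForm, Finset.sum_erase _ (by simp)]
  simp [progressionHom, sub_mul, Finset.mul_sum, ← sub_eq_add_neg]

lemma progressionHom_surjective [NeZero k] : Function.Surjective (progressionHom K k) := by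
  rintro ⟨a, d⟩
  obtain ⟨k, rfl⟩ := Nat.exists_eq_succ_of_ne_zero (NeZero.ne k)
  refine ⟨Pi.single 0 (-d - a) + Pi.single 1 a, Prod.ext ?_ ?_⟩
  · simp [progressionHom, mul_add, Finset.sum_add_distrib, Pi.single_apply]
  · simp [progressionHom, Finset.sum_add_distrib]

variable [Fintype K]

lemma expect_comp_mul {J : Type*} [Fintype J] [DecidableEq J] {c : J → K} (hc : ∀ j, c j ≠ 0)
    (F : (J → K) → ℝ) : 𝔼 y, F (c * y) = 𝔼 y, F y :=
  Fintype.expect_equiv (Equiv.piCongrRight fun j => Equiv.mulLeft₀ (c j) (hc j)) _ _ fun _ => rfl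

lemma SumCutNormLE.cutNormLE {F : K → ℝ} {ε : ℝ} (hF : SumCutNormLE (Fin k) F ε) (hε : 0 ≤ ε)
    (i : Fin (k + 1)) {c : Fin (k + 1) → K} (hc : ∀ j, j ≠ i → c j ≠ 0) :
    CutNormLE i (fun x => F (∑ j ∈ univ.erase i, c j * x j)) ε := by
  intro h h1 h2
  set e := i.succAbove
  have he (l) : e l ≠ i := Fin.succAbove_ne i l
  have herase : univ.erase i = univ.image e := by
    rw [Fin.image_succAbove_univ, Finset.compl_singleton]
  have hchange : 𝔼 x, F (∑ j ∈ univ.erase i, c j * x j) * ∏ j ∈ univ.erase i, h j x =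
      𝔼 t, 𝔼 y : Fin k → K, F (∑ l, y l) * ∏ l, h (e l) (i.insertNth t ((c ∘ e)⁻¹ * y)) := by
    rw [expect_insertNth i]
    refine Finset.expect_congr rfl fun t _ => ?_
    rw [← expect_comp_mul (c := (c ∘ e)⁻¹) fun l => inv_ne_zero (hc _ (he l))]
    simp only [herase, Finset.sum_image Fin.succAbove_right_injective.injOn,
      Finset.prod_image Fin.succAbove_right_injective.injOn, e, Fin.insertNth_apply_succAbove,
      Pi.mul_apply, Pi.inv_apply, Function.comp_apply, mul_inv_cancel_left₀ (hc _ (he _))]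
  rw [hchange]
  refine abs_expect_le_of_forall_le hε fun t => sumCutNormLE_real_iff.1 hF
    (fun l y => h (e l) (i.insertNth t ((c ∘ e)⁻¹ * y))) (fun l y y' hy => ?_) fun l y =>
      h2 _ (he l) _
  refine h1 _ (he l) fun j hj => ?_
  obtain rfl | ⟨m, rfl⟩ := Fin.eq_self_or_eq_succAbove i j
  · simp
  · simp [hy m fun hm => hj (congrArg e hm)]

lemma expect_prod_progressionForm [NeZero k] (F : K → ℝ) :
    𝔼 x : Fin (k + 1) → K, ∏ i, F (progressionForm i x) =
      𝔼 a, 𝔼 d, ∏ j ∈ Finset.range (k + 1), F (a + j • d) := by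
  let G (w : K × K) : ℝ := ∏ j ∈ Finset.range (k + 1), F (w.1 + j • w.2)
  rw [← expect_prod_type G, ← expect_comp_addMonoidHom (progressionHom_surjective (k := k)) G]
  simp only [G, Finset.prod_range, progressionForm_eq]

lemma SumCutNormLE.cutNormLE_progressionForm {p : ℕ} [CharP K p] (hk : k < p) {F : K → ℝ}
    {ε : ℝ} (hF : SumCutNormLE (Fin k) F ε) (hε : 0 ≤ ε) (i : Fin (k + 1)) :
    CutNormLE i (fun x => F (progressionForm i x)) ε :=
  hF.cutNormLE hε i fun j hj => sub_ne_zero.2 fun h => hj <| Fin.ext <|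
    CharP.natCast_injOn_Iio K p (j.is_le.trans_lt hk) (i.is_le.trans_lt hk) h

theorem exists_le_expect_prod_progression_of_le_majorant {δ : ℝ} (k : ℕ) [NeZero k] (hδ : 0 < δ) :
    ∃ c > 0, ∃ η > 0, ∀ (K : Type u) [Field K] [Fintype K] (p : ℕ) [CharP K p] (f ν : K → ℝ)
      (B ε₀ : ℝ), k < p → 1 ≤ B → 0 ≤ ε₀ → (∀ x, 0 ≤ f x) → (∀ x, f x ≤ ν x) → (∀ x, ν x ≤ B) →
      SumCutNormLE (Fin k) (ν - 1) ε₀ → B ^ (2 * (k + 1)) * ε₀ ≤ η → δ ≤ 𝔼 x, f x →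
        c ≤ 𝔼 a, 𝔼 d, ∏ j ∈ Finset.range (k + 1), f (a + j • d) := by
  obtain ⟨c, hc, hszemeredi⟩ := exists_le_expect_prod_progression.{u} (k + 1) (half_pos hδ)
  obtain ⟨η, hη, hcount⟩ := exists_countingEstimate.{u} (univ : Finset (Fin (k + 1))) (half_pos hc)
  obtain ⟨ε', hε', hmodel⟩ :=
    exists_dense_model_sumCutNormLE.{_, u} (Fin k) (lt_min hη (half_pos hδ))
  refine ⟨c / 2, half_pos hc, min η ε', lt_min hη hε', ?_⟩
  intro K _ _ p _ f ν B ε₀ hp hB hε₀ hf hfν hνB hν hBε₀ hδf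
  have hε₀B : ε₀ ≤ B ^ (2 * (k + 1)) * ε₀ := le_mul_of_one_le_left hε₀ (one_le_pow₀ hB)
  obtain ⟨g, hg0, hg1, hfg⟩ :=
    hmodel K f ν hf hfν (hν.mono (hε₀B.trans (hBε₀.trans (min_le_right _ _))))
  have hδg : δ / 2 ≤ 𝔼 x, g x := by
    have h := (abs_le.1 hfg.abs_expect_le).2
    simp only [Pi.sub_apply, Finset.expect_sub_distrib] at h
    linarith [min_le_right η (δ / 2)]
  have hclose := hcount K (fun i x => f (progressionForm i x)) (fun i x => g (progressionForm i x))
    (fun i x => ν (progressionForm i x)) B ε₀ hB hε₀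
    (by simpa using hBε₀.trans (min_le_left _ _))
    (fun i =>
      { dependsOn := dependsOn_progressionForm f i
        dependsOn_model := dependsOn_progressionForm g i
        dependsOn_majorant := dependsOn_progressionForm ν i
        nonneg := fun _ => hf _
        le_majorant := fun _ => hfν _
        majorant_le := fun _ => hνB _
        model_nonneg := fun _ => hg0 _
        model_le_one := fun _ => hg1 _
        cutNorm_sub := (hfg.mono (min_le_left _ _)).cutNormLE_progressionForm hp hη.le i
        cutNorm_majorant := hν.cutNormLE_progressionForm hp hε₀ i })
    fun j hj => absurd (Finset.mem_univ j) hj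
  rw [expect_prod_progressionForm f, expect_prod_progressionForm g] at hclose
  linarith [(abs_le.1 hclose).1, hszemeredi K g hg0 hg1 hδg]

end RelativeSzemeredi

section CharacterPseudorandomness

open Finset (univ)
open ComplexConjugate
open scoped BigOperators

section VanDerCorput

variable {X Z : Type*} [Fintype X] [Fintype Z] [AddCommGroup Z] {k : ℕ}

lemma ofReal_norm_expect_sq (G : X → ℂ) :
    ((‖𝔼 t, G t‖ ^ 2 : ℝ) : ℂ) = 𝔼 s, 𝔼 t, G s * conj (G t) := by
  rw [Complex.ofReal_pow, ← Complex.mul_conj', ← Finset.expect_mul_expect]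
  exact congrArg _ (map_expect (starRingEnd ℂ) G univ)

lemma sq_expect_le_expect_sq (f : X → ℝ) : (𝔼 x, f x) ^ 2 ≤ 𝔼 x, f x ^ 2 := by
  cases isEmpty_or_nonempty X
  · simp
  · simpa using Finset.expect_mul_sq_le_sq_mul_sq univ f 1

lemma norm_expect_smul_expect_sq_le {Y : Type*} [Fintype Y] {c : Y → ℝ}
    (hc : ∀ y, |c y| ≤ 1) (G : Y → X → ℂ) :
    ‖𝔼 y, c y • 𝔼 t, G y t‖ ^ 2 ≤ 𝔼 s, 𝔼 t, ‖𝔼 y, G y s * conj (G y t)‖ := by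
  have hle : ‖𝔼 y, c y • 𝔼 t, G y t‖ ≤ 𝔼 y, ‖𝔼 t, G y t‖ := by
    refine (RCLike.norm_expect_le (K := ℂ)).trans (expect_mono fun y => ?_)
    rw [norm_smul]
    exact mul_le_of_le_one_left (norm_nonneg _) (hc y)
  have hsq : ((𝔼 y, ‖𝔼 t, G y t‖ ^ 2 : ℝ) : ℂ) = 𝔼 s, 𝔼 t, 𝔼 y, G y s * conj (G y t) := by
    rw [Complex.ofReal_expect]
    simp_rw [ofReal_norm_expect_sq]
    rw [Finset.expect_comm]
    exact Finset.expect_congr rfl fun s _ => Finset.expect_comm ..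
  calc _ ≤ (𝔼 y, ‖𝔼 t, G y t‖) ^ 2 := pow_le_pow_left₀ (norm_nonneg _) hle 2
    _ ≤ 𝔼 y, ‖𝔼 t, G y t‖ ^ 2 := sq_expect_le_expect_sq _
    _ ≤ ‖((𝔼 y, ‖𝔼 t, G y t‖ ^ 2 : ℝ) : ℂ)‖ := Complex.norm_real _ ▸ le_abs_self _
    _ = ‖𝔼 s, 𝔼 t, 𝔼 y, G y s * conj (G y t)‖ := by rw [hsq]
    _ ≤ 𝔼 s, 𝔼 t, ‖𝔼 y, G y s * conj (G y t)‖ := (RCLike.norm_expect_le (K := ℂ)).trans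
        (expect_mono fun s => RCLike.norm_expect_le (K := ℂ))

lemma sumCutNormLE_fin_one {F : Z → ℂ} {ε : ℝ} (h : ‖𝔼 x, F x‖ ≤ ε) :
    SumCutNormLE (Fin 1) F ε := by
  intro u hu1 hu2
  have hconst (y : Fin 1 → Z) : u 0 y = u 0 0 := hu1 0 fun j hj => absurd (Subsingleton.elim j 0) hj
  simp only [Fin.prod_univ_one, Fin.sum_univ_one, hconst]
  rw [← Finset.smul_expect, norm_smul, Real.norm_eq_abs,
    Fintype.expect_equiv (Equiv.funUnique (Fin 1) Z) (fun y => F (y 0)) F fun _ => rfl]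
  exact (mul_le_of_le_one_left (norm_nonneg _) (hu2 0 0)).trans h

/-- The inequality of van der Corput: Cauchy–Schwarz in the coordinates other than the first one
eliminates the function that ignores the first coordinate. -/
theorem sumCutNormLE_succ_of_mul_conj {F : Z → ℂ} {ε : Z → Z → ℝ}
    (hF : ∀ s t, SumCutNormLE (Fin k) (fun x => F (x + s) * conj (F (x + t))) (ε s t)) :
    SumCutNormLE (Fin (k + 1)) F √(𝔼 s, 𝔼 t, ε s t) := by
  intro h h1 h2
  let u (t : Z) (y : Fin k → Z) : ℝ := ∏ l : Fin k, h l.succ (Fin.cons t y)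
  let G (y : Fin k → Z) (t : Z) : ℂ := u t y • F (∑ l, y l + t)
  have hsplit : 𝔼 x, (∏ j, h j x) • F (∑ j, x j) =
      𝔼 y, h 0 (Fin.cons 0 y : Fin (k + 1) → Z) • 𝔼 t, G y t := by
    rw [expect_insertNth 0, Finset.expect_comm]
    refine Finset.expect_congr rfl fun y _ => ?_
    rw [Finset.smul_expect]
    refine Finset.expect_congr rfl fun t _ => ?_
    have h0 : h 0 (Fin.cons t y) = h 0 (Fin.cons 0 y) := h1 0 fun j hj => by
      obtain ⟨l, rfl⟩ := Fin.exists_succ_eq.2 hj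
      simp
    simp [G, u, Fin.insertNth_zero', Fin.prod_univ_succ, Fin.sum_univ_succ, h0, mul_assoc, add_comm]
  have hcorr (s t : Z) : ‖𝔼 y, G y s * conj (G y t)‖ ≤ ε s t := by
    have hG (y) : G y s * conj (G y t) = (∏ l : Fin k, h l.succ (Fin.cons s y) *
        h l.succ (Fin.cons t y)) • (F (∑ l, y l + s) * conj (F (∑ l, y l + t))) := by
      simp only [G, u, Finset.prod_mul_distrib, Complex.real_smul, map_mul, Complex.conj_ofReal,
        Complex.ofReal_mul]
      ring
    simp only [hG]
    refine hF s t (fun l y => h l.succ (Fin.cons s y) * h l.succ (Fin.cons t y))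
      (fun l y y' hy => ?_) fun l y => ?_
    · have hcons (r : Z) : h l.succ (Fin.cons r y) = h l.succ (Fin.cons r y') :=
        h1 l.succ fun j hj => by
          cases j using Fin.cases with
          | zero => rfl
          | succ m => simpa using hy m fun hm => hj (congrArg Fin.succ hm)
      simp only [hcons]
    · rw [abs_mul]
      exact mul_le_one₀ (h2 _ _) (abs_nonneg _) (h2 _ _)
  rw [hsplit]
  refine Real.le_sqrt_of_sq_le
    ((norm_expect_smul_expect_sq_le (fun y => h2 0 (Fin.cons 0 y)) G).trans ?_)
  exact expect_mono fun s => expect_mono (hcorr s)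

end VanDerCorput

variable {J Z : Type*} [Fintype J] [DecidableEq J] [AddCommGroup Z] [Fintype Z]

lemma sumCutNormLE_of_norm_le {F : Z → ℂ} {ε : ℝ} (hε : 0 ≤ ε) (hF : ∀ x, ‖F x‖ ≤ ε) :
    SumCutNormLE J F ε := by
  intro h _ h2
  refine (RCLike.norm_expect_le (K := ℂ)).trans (expect_le_of_forall_le hε fun y => ?_)
  rw [norm_smul, norm_prod]
  exact (mul_le_of_le_one_left (norm_nonneg _)
    (Finset.prod_le_one (fun _ _ => norm_nonneg _) fun j _ => h2 j y)).trans (hF _)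

lemma sumCutNormLE_ofReal_iff {F : Z → ℝ} {ε : ℝ} :
    SumCutNormLE J (fun x => (F x : ℂ)) ε ↔ SumCutNormLE J F ε := by
  have hcast (h : J → (J → Z) → ℝ) : ‖𝔼 y, (∏ j, h j y) • (F (∑ j, y j) : ℂ)‖ =
      ‖𝔼 y, (∏ j, h j y) • F (∑ j, y j)‖ := by
    rw [← Complex.norm_real, Complex.ofReal_expect]
    simp
  simp only [SumCutNormLE, hcast]

lemma SumCutNormLE.sum {E ι : Type*} [NormedAddCommGroup E] [NormedSpace ℝ E] [Module ℚ≥0 E]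
    {s : Finset ι} {F : ι → Z → E} {ε : ι → ℝ} (hF : ∀ i ∈ s, SumCutNormLE J (F i) (ε i)) :
    SumCutNormLE J (fun x => ∑ i ∈ s, F i x) (∑ i ∈ s, ε i) := by
  intro h h1 h2
  simp_rw [Finset.smul_sum]
  rw [Finset.expect_sum_comm]
  exact norm_sum_le_of_le s fun i hi => hF i hi h h1 h2

lemma density_coe {X : Type*} [Fintype X] (A : Finset X) :
    density (A : Set X) = A.card / Fintype.card X := by
  classical
  simp [density, ind, Fintype.expect_eq_sum_div_card, Set.indicator_apply]

lemma density_setOf_not_disjoint_map_add_le (W : Finset Z) (s : Z) :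
    density {t | ¬ Disjoint (W.map (addLeftEmbedding s)) (W.map (addLeftEmbedding t))} ≤
      W.card ^ 2 / Fintype.card Z := by
  classical
  have hsub : {t | ¬ Disjoint (W.map (addLeftEmbedding s)) (W.map (addLeftEmbedding t))} ⊆
      ((W ×ˢ W).image fun w => s + w.1 - w.2 : Finset Z) := fun t ht => by
    obtain ⟨_, hu, hv⟩ := Finset.not_disjoint_iff.1 ht
    obtain ⟨u, huW, rfl⟩ := Finset.mem_map.1 hu
    obtain ⟨v, hvW, hvu⟩ := Finset.mem_map.1 hv
    exact Finset.mem_coe.2 <| Finset.mem_image.2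
      ⟨(u, v), Finset.mk_mem_product huW hvW, sub_eq_iff_eq_add.2 hvu.symm⟩
  refine (density_mono hsub).trans ?_
  rw [density_coe]
  gcongr
  rw [sq, ← Nat.cast_mul, ← Finset.card_product]
  exact_mod_cast Finset.card_image_le

variable {p : ℕ} [Fact p.Prime] {χ : MulChar (ZMod p) ℂ}

lemma norm_shiftProd_le_one (S T : Finset (ZMod p)) (x : ZMod p) : ‖shiftProd χ S T x‖ ≤ 1 := by
  have hχ (a) : ‖χ a‖ ≤ 1 := DirichletCharacter.norm_le_one χ a
  rw [shiftProd, norm_mul, norm_prod, norm_prod]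
  exact mul_le_one₀ (Finset.prod_le_one (fun _ _ => norm_nonneg _) fun a _ => hχ _)
    (Finset.prod_nonneg fun _ _ => norm_nonneg _)
    (Finset.prod_le_one (fun _ _ => norm_nonneg _) fun a _ => (RCLike.norm_conj _).trans_le (hχ _))

lemma exists_shiftProd_add_mul_conj_eq {S T : Finset (ZMod p)} (hST : Disjoint S T)
    (hne : (S ∪ T).Nonempty) {s t : ZMod p}
    (h : Disjoint ((S ∪ T).map (addLeftEmbedding s)) ((S ∪ T).map (addLeftEmbedding t))) :
    ∃ S' T' : Finset (ZMod p), Disjoint S' T' ∧ (S' ∪ T').Nonempty ∧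
      S'.card + T'.card ≤ 2 * (S.card + T.card) ∧
      ∀ x, shiftProd χ S T (x + s) * conj (shiftProd χ S T (x + t)) = shiftProd χ S' T' x := by
  simp only [Finset.map_union, Finset.disjoint_union_left, Finset.disjoint_union_right] at h
  obtain ⟨⟨hSS, hTS⟩, hST', hTT⟩ := h
  refine ⟨S.map (addLeftEmbedding s) ∪ T.map (addLeftEmbedding t),
    T.map (addLeftEmbedding s) ∪ S.map (addLeftEmbedding t), ?_, ?_, ?_, fun x => ?_⟩
  · simp only [Finset.disjoint_union_left, Finset.disjoint_union_right]
    exact ⟨⟨(Finset.disjoint_map _).2 hST, hTT.symm⟩, hSS, (Finset.disjoint_map _).2 hST.symm⟩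
  · obtain ⟨w, hw⟩ := hne
    refine ⟨s + w, ?_⟩
    rcases Finset.mem_union.1 hw with hw | hw <;> simp [hw]
  · have hcard₁ := Finset.card_union_le (S.map (addLeftEmbedding s)) (T.map (addLeftEmbedding t))
    have hcard₂ := Finset.card_union_le (T.map (addLeftEmbedding s)) (S.map (addLeftEmbedding t))
    simp only [Finset.card_map] at hcard₁ hcard₂
    omega
  · rw [conj_shiftProd, shiftProd_add, shiftProd_add, shiftProd, shiftProd, shiftProd,
      Finset.prod_union hST', Finset.prod_union hTS]
    ring

/-- `ShiftProdNormLE χ N σ` says that `N` or fewer shifts of `χ` and `χ̄`, no shift being taken for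
both, have an average product of modulus at most `σ`. -/
def ShiftProdNormLE (χ : MulChar (ZMod p) ℂ) (N : ℕ) (σ : ℝ) : Prop :=
  ∀ S T : Finset (ZMod p), Disjoint S T → (S ∪ T).Nonempty → S.card + T.card ≤ N →
    ‖𝔼 x, shiftProd χ S T x‖ ≤ σ

theorem ShiftProdNormLE.sumCutNormLE {M : ℕ} {σ : ℝ} (hχ : ShiftProdNormLE χ M σ)
    (hM : (M : ℝ) ^ 2 / p ≤ σ) {u N : ℕ} (hN : N * 2 ^ u ≤ M) {ρ : ℝ} (hρ0 : 0 ≤ ρ) (hρ1 : ρ ≤ 1)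
    (hσ : σ ≤ ρ ^ 2 ^ u) {S T : Finset (ZMod p)} (hST : Disjoint S T) (hne : (S ∪ T).Nonempty)
    (hcard : S.card + T.card ≤ N) : SumCutNormLE (Fin (u + 1)) (shiftProd χ S T) (2 * ρ) := by
  induction u generalizing N ρ S T with
  | zero =>
    refine sumCutNormLE_fin_one ((hχ S T hST hne (by omega)).trans ?_)
    rw [pow_zero, pow_one] at hσ
    linarith
  | succ u ih =>
    have hρ2 : ρ ^ 2 ≤ 1 := pow_le_one₀ hρ0 hρ1
    have hσ2 : σ ≤ (ρ ^ 2) ^ 2 ^ u := by rwa [← pow_mul, ← pow_succ']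
    let W := S ∪ T
    let B (s : ZMod p) : Set (ZMod p) :=
      {t | ¬ Disjoint (W.map (addLeftEmbedding s)) (W.map (addLeftEmbedding t))}
    have hB (s) : density (B s) ≤ ρ ^ 2 := by
      have hWM : W.card ≤ M := (Finset.card_union_le S T).trans <| hcard.trans <|
        (Nat.le_mul_of_pos_right N (by positivity)).trans hN
      calc density (B s) ≤ (W.card : ℝ) ^ 2 / p := by
            simpa using density_setOf_not_disjoint_map_add_le W s
        _ ≤ (M : ℝ) ^ 2 / p := by gcongr
        _ ≤ (ρ ^ 2) ^ 2 ^ u := hM.trans hσ2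
        _ ≤ ρ ^ 2 := pow_le_of_le_one (sq_nonneg ρ) hρ2 (by positivity)
    have hpair (s t) : SumCutNormLE (Fin (u + 1))
        (fun x => shiftProd χ S T (x + s) * conj (shiftProd χ S T (x + t)))
        (2 * ρ ^ 2 + ind (B s) t) := by
      by_cases ht : t ∈ B s
      · refine (sumCutNormLE_of_norm_le zero_le_one fun x => ?_).mono
          (by rw [ind_of_mem ht]; linarith [sq_nonneg ρ])
        rw [norm_mul, RCLike.norm_conj]
        exact mul_le_one₀ (norm_shiftProd_le_one ..) (norm_nonneg _) (norm_shiftProd_le_one ..)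
      · obtain ⟨S', T', hST', hne', hcard', hprod⟩ :=
          exists_shiftProd_add_mul_conj_eq (χ := χ) hST hne (not_not.1 ht)
        simp only [ind_of_notMem ht, add_zero, hprod]
        exact ih (N := 2 * N) (by rwa [mul_comm 2, mul_assoc, ← pow_succ']) (sq_nonneg ρ) hρ2 hσ2
          hST' hne' (by omega)
    refine (sumCutNormLE_succ_of_mul_conj hpair).mono ?_
    rw [Real.sqrt_le_left (by positivity)]
    refine expect_le_of_forall_le (by positivity) fun s => ?_
    rw [Finset.expect_add_distrib, Fintype.expect_const]
    change 2 * ρ ^ 2 + density (B s) ≤ (2 * ρ) ^ 2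
    nlinarith [hB s]

end CharacterPseudorandomness

section Subgroups

universe u

open Filter
open scoped BigOperators

section Majorant

variable {F : Type*} [Field F]

lemma mulChar_apply_eq_one_of_mem [Finite F] {R : Type*} [CommRing R] {G : Subgroup Fˣ}
    {χ : MulChar F R} (hχ : χ ^ G.index = 1) {x : Fˣ} (hx : x ∈ G) : χ x = 1 := by
  obtain ⟨g, hg⟩ := IsCyclic.exists_monoid_generator (α := Fˣ)
  obtain ⟨e, rfl⟩ := (Submonoid.mem_powers_iff x g).1 (hg x)
  have hdvd : Nat.card G * G.index ∣ Nat.card G * e := by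
    rw [G.card_mul_index, ← orderOf_eq_card_of_forall_mem_powers hg, mul_comm]
    refine orderOf_dvd_of_pow_eq_one ?_
    rw [pow_mul]
    exact orderOf_dvd_iff_pow_eq_one.1 (G.orderOf_dvd_natCard hx)
  obtain ⟨j, rfl⟩ := Nat.dvd_of_mul_dvd_mul_left Nat.card_pos hdvd
  have hg1 : χ g ^ G.index = 1 := by
    rw [← MulChar.pow_apply_coe, hχ, MulChar.one_apply_coe]
  rw [Units.val_pow_eq_pow_val, map_pow, pow_mul, hg1, one_pow]

open Classical in
/-- The indicator function of the kernel of `χ`, scaled by the order of `χ`. It is given the value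
`1` at `0`, so that all the powers of `χ` occur in its expansion with the same coefficient. -/
noncomputable def kerMajorant (χ : MulChar F ℂ) (x : F) : ℝ :=
  if x = 0 then 1 else if χ x = 1 then orderOf χ else 0

variable {χ : MulChar F ℂ}

lemma kerMajorant_nonneg (x : F) : 0 ≤ kerMajorant χ x := by
  unfold kerMajorant
  split_ifs <;> simp

variable [Finite F]

lemma one_le_orderOf_mulChar : (1 : ℝ) ≤ orderOf χ :=
  Nat.one_le_cast.2 (orderOf_pos_iff.2 (isOfFinOrder_of_finite χ))

lemma kerMajorant_le_orderOf (x : F) : kerMajorant χ x ≤ orderOf χ := by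
  unfold kerMajorant
  split_ifs
  · exact one_le_orderOf_mulChar
  · exact le_rfl
  · simp

lemma ofReal_kerMajorant_sub_one (x : F) :
    ((kerMajorant χ x - 1 : ℝ) : ℂ) = ∑ j ∈ Finset.Ico 1 (orderOf χ), (χ ^ j) x := by
  have hpos : 0 < orderOf χ := orderOf_pos_iff.2 (isOfFinOrder_of_finite χ)
  rcases eq_or_ne x 0 with rfl | hx
  · simp [kerMajorant, MulChar.map_zero]
  obtain ⟨y, rfl⟩ : IsUnit x := hx.isUnit
  simp only [MulChar.pow_apply_coe]
  have hgeom : ∑ j ∈ Finset.range (orderOf χ), χ y ^ j =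
      1 + ∑ j ∈ Finset.Ico 1 (orderOf χ), χ y ^ j := by
    rw [Finset.range_eq_Ico, Finset.sum_eq_sum_Ico_succ_bot hpos, pow_zero]
  by_cases hy : χ y = 1
  · simp [kerMajorant, hy, Nat.cast_sub hpos]
  · have hroot : χ y ^ orderOf χ = 1 := by
      rw [← MulChar.pow_apply_coe, pow_orderOf_eq_one, MulChar.one_apply_coe]
    rw [geom_sum_eq hy, hroot, sub_self, zero_div] at hgeom
    simp only [kerMajorant, if_neg hx, if_neg hy]
    push_cast
    linear_combination hgeom

lemma orderOf_mul_ind_le_kerMajorant {G : Subgroup Fˣ} (hχ : orderOf χ = G.index) {A : Set F}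
    (hA : A ⊆ Units.val '' (G : Set Fˣ)) (x : F) : orderOf χ * ind A x ≤ kerMajorant χ x := by
  by_cases hx : x ∈ A
  · obtain ⟨y, hy, rfl⟩ := hA hx
    have hχy : χ y = 1 := mulChar_apply_eq_one_of_mem (hχ ▸ pow_orderOf_eq_one χ) hy
    simp [kerMajorant, ind_of_mem hx, hχy]
  · simpa [ind_of_notMem hx] using kerMajorant_nonneg x

end Majorant

section Progressions

variable {F : Type u} [Field F] [Fintype F]

lemma half_le_expect_index_mul_ind {G : Subgroup Fˣ} {δ : ℝ} (hδ : 0 ≤ δ) {A : Finset F}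
    (hA : δ * Nat.card G ≤ A.card) : δ / 2 ≤ 𝔼 x, G.index * ind (A : Set F) x := by
  have hcard : (Nat.card G * G.index : ℝ) = Fintype.card F - 1 := by
    classical
    rw [← Nat.cast_mul, G.card_mul_index, Nat.card_eq_fintype_card, Fintype.card_units,
      Nat.cast_sub Fintype.card_pos, Nat.cast_one]
  have htwo : (2 : ℝ) ≤ Fintype.card F := by exact_mod_cast Fintype.one_lt_card (α := F)
  rw [← Finset.mul_expect]
  change _ ≤ G.index * density (A : Set F)
  rw [density_coe, mul_div_assoc', le_div_iff₀ (by positivity)]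
  calc δ / 2 * Fintype.card F ≤ δ * (Fintype.card F - 1) := by nlinarith
    _ = G.index * (δ * Nat.card G) := by rw [← hcard]; ring
    _ ≤ G.index * A.card := by gcongr

lemma expect_prod_progression_le {f : F → ℝ} {B : ℝ} {r : ℕ} (hB : 0 ≤ B) (hf : ∀ x, 0 ≤ f x)
    (hfB : ∀ x, f x ≤ B) (h : ∀ a d, d ≠ 0 → ∃ j < r, f (a + j • d) = 0) :
    𝔼 a, 𝔼 d, ∏ j ∈ Finset.range r, f (a + j • d) ≤ B ^ r / Fintype.card F := by
  refine expect_le_of_forall_le (by positivity) fun a => ?_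
  rw [Fintype.expect_eq_sum_div_card, Fintype.sum_eq_single 0 fun d hd => ?_]
  · gcongr
    exact (Finset.prod_le_prod (fun _ _ => hf _) fun _ _ => hfB _).trans_eq (by simp)
  · obtain ⟨j, hj, hfj⟩ := h a d hd
    exact Finset.prod_eq_zero (Finset.mem_range.2 hj) hfj

end Progressions

theorem exists_progression_of_sumCutNormLE_kerMajorant {δ : ℝ} (k : ℕ) [NeZero k] (hδ : 0 < δ) :
    ∃ c > 0, ∃ η > 0, ∀ (F : Type u) [Field F] [Fintype F] (p : ℕ) [CharP F p]
      (G : Subgroup Fˣ) (χ : MulChar F ℂ) (A : Finset F) (ε : ℝ), k < p → orderOf χ = G.index →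
      (A : Set F) ⊆ Units.val '' (G : Set Fˣ) → δ * Nat.card G ≤ A.card → 0 ≤ ε →
      SumCutNormLE (Fin k) (kerMajorant χ - 1) ε → (orderOf χ : ℝ) ^ (2 * (k + 1)) * ε ≤ η →
      (orderOf χ : ℝ) ^ (k + 1) / Fintype.card F < c →
        ∃ a d : F, d ≠ 0 ∧ ∀ j < k + 1, a + j • d ∈ A := by
  obtain ⟨c, hc, η, hη, H⟩ :=
    exists_le_expect_prod_progression_of_le_majorant.{u} k (half_pos hδ)
  refine ⟨c, hc, η, hη, ?_⟩
  intro F _ _ p _ G χ A ε hp hχ hAG hAδ hε hν hεη hcard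
  by_contra! hno
  let f (x : F) : ℝ := orderOf χ * ind (A : Set F) x
  have hf (x : F) : 0 ≤ f x := mul_nonneg (Nat.cast_nonneg _) (ind_nonneg _ x)
  have hfB (x : F) : f x ≤ orderOf χ := mul_le_of_le_one_right (Nat.cast_nonneg _) (ind_le_one _ x)
  have hfδ : δ / 2 ≤ 𝔼 x, f x := by
    simpa only [f, hχ] using half_le_expect_index_mul_ind hδ.le hAδ
  have hf0 (a d : F) (hd : d ≠ 0) : ∃ j < k + 1, f (a + j • d) = 0 := by
    obtain ⟨j, hj, hjA⟩ := hno a d hd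
    exact ⟨j, hj, by simp only [f, ind_of_notMem (Finset.mem_coe.not.2 hjA), mul_zero]⟩
  have hlower := H F p f (kerMajorant χ) (orderOf χ) ε hp one_le_orderOf_mulChar hε hf
    (orderOf_mul_ind_le_kerMajorant hχ hAG) kerMajorant_le_orderOf hν hεη hfδ
  exact (hlower.trans (expect_prod_progression_le (Nat.cast_nonneg _) hf hfB hf0)).not_gt hcard

lemma eventually_mul_rpow_le (C : ℝ) {a b : ℝ} (hab : a < b) :
    ∀ᶠ n : ℕ in atTop, C * (n : ℝ) ^ a ≤ (n : ℝ) ^ b := by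
  have hlim :=
    ((tendsto_rpow_neg_atTop (sub_pos.2 hab)).comp tendsto_natCast_atTop_atTop).const_mul C
  rw [mul_zero] at hlim
  filter_upwards [hlim.eventually_le_const one_pos, eventually_gt_atTop 0] with n hn hpos
  have hn0 : (0 : ℝ) < n := Nat.cast_pos.2 hpos
  calc C * (n : ℝ) ^ a = C * (n : ℝ) ^ (-(b - a)) * (n : ℝ) ^ b := by
        rw [mul_assoc, ← Real.rpow_add hn0]
        ring_nf
    _ ≤ (n : ℝ) ^ b := mul_le_of_le_one_left (by positivity) hn

lemma sq_mul_le_of_le_rpow {p n d r : ℕ} (hnp : n * d + 1 = p) (hd : 0 < d)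
    (hr : (r : ℝ) ≤ (p : ℝ) ^ (27 / 64 : ℝ)) (hdp : (d : ℝ) ≤ (p : ℝ) ^ (1 / 16 : ℝ))
    (hp : 2 * (p : ℝ) ^ (31 / 32 : ℝ) ≤ p) : r ^ 2 * d ≤ n := by
  have hp0 : (0 : ℝ) < p := Nat.cast_pos.2 (by lia)
  have hp1 : (1 : ℝ) ≤ p := Nat.one_le_cast.2 (by lia)
  have hn : (n * d + 1 : ℝ) = p := by exact_mod_cast hnp
  have hmul : (r : ℝ) ^ 2 * d * d ≤ n * d := by
    calc (r : ℝ) ^ 2 * d * d = r ^ 2 * d ^ 2 := by ring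
      _ ≤ ((p : ℝ) ^ (27 / 64 : ℝ)) ^ 2 * ((p : ℝ) ^ (1 / 16 : ℝ)) ^ 2 := by gcongr
      _ = (p : ℝ) ^ (31 / 32 : ℝ) := by
        rw [← Real.rpow_mul_natCast hp0.le, ← Real.rpow_mul_natCast hp0.le, ← Real.rpow_add hp0]
        norm_num
      _ ≤ n * d := by linarith [Real.one_le_rpow hp1 (show (0 : ℝ) ≤ 31 / 32 by norm_num)]
  exact_mod_cast le_of_mul_le_mul_right hmul (Nat.cast_pos.2 hd)

theorem eventually_shiftProdNormLE (N : ℕ) :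
    ∀ᶠ p : ℕ in atTop, ∀ [Fact p.Prime] (χ : MulChar (ZMod p) ℂ), χ ≠ 1 →
      (orderOf χ : ℝ) ≤ (p : ℝ) ^ (1 / 16 : ℝ) →
        ShiftProdNormLE χ N ((p : ℝ) ^ (-(3 / 8) : ℝ)) := by
  filter_upwards [eventually_mul_rpow_le (N + 4) (show (13 / 32 : ℝ) < 27 / 64 by norm_num),
    eventually_mul_rpow_le 2 (show (31 / 32 : ℝ) < 1 by norm_num),
    eventually_mul_rpow_le (3 * N + 2) (show (-(13 / 32) : ℝ) < -(3 / 8) by norm_num)]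
    with p hN2 hp hbound _ χ hχ hd S T hST hne hN
  have hp2 : (2 : ℝ) ≤ p := by exact_mod_cast (Fact.out : p.Prime).two_le
  have hp0 : (0 : ℝ) < p := by linarith
  have hp1 : (1 : ℝ) ≤ p := by linarith
  obtain ⟨n, hn⟩ := χ.orderOf_dvd_card_sub_one
  have hnp : n * orderOf χ + 1 = p := by
    have := (Fact.out : p.Prime).two_le
    rw [mul_comm, ← hn, ZMod.card]
    omega
  set r := ⌈(p : ℝ) ^ (13 / 32 : ℝ)⌉₊
  have hr1 : 1 ≤ (p : ℝ) ^ (13 / 32 : ℝ) := Real.one_le_rpow hp1 (by norm_num)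
  have hr_lower : (p : ℝ) ^ (13 / 32 : ℝ) ≤ r := Nat.le_ceil _
  have hr_upper : (r : ℝ) + N + 2 ≤ (p : ℝ) ^ (27 / 64 : ℝ) := by
    have := Nat.ceil_lt_add_one (zero_le_one.trans hr1)
    nlinarith [Nat.cast_nonneg (α := ℝ) N]
  have hr : (r + N + 2) ^ 2 * orderOf χ ≤ n := by
    refine sq_mul_le_of_le_rpow hnp (orderOf_pos_iff.2 (isOfFinOrder_of_finite χ)) ?_ hd ?_
    · exact_mod_cast hr_upper
    · rwa [Real.rpow_one] at hp
  have hsum := norm_sum_shiftProd_le hχ hnp (Nat.ceil_pos.2 (by positivity)) hr hST hne hN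
  rw [Fintype.expect_eq_sum_div_card, norm_div, ZMod.card, Complex.norm_natCast]
  calc _ ≤ (p * (2 * N + 2) / r + N : ℝ) / p := by gcongr
    _ = (2 * N + 2) / r + N / p := by field_simp
    _ ≤ (2 * N + 2) / (p : ℝ) ^ (13 / 32 : ℝ) + N / (p : ℝ) ^ (13 / 32 : ℝ) := by
      gcongr
      exact Real.rpow_le_self_of_one_le hp1 (by norm_num)
    _ = (3 * N + 2) * (p : ℝ) ^ (-(13 / 32) : ℝ) := by rw [Real.rpow_neg hp0.le]; ring
    _ ≤ _ := hbound

lemma sumCutNormLE_kerMajorant_sub_one {p : ℕ} [Fact p.Prime] {χ : MulChar (ZMod p) ℂ} {u : ℕ}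
    {σ ρ : ℝ} (hχ : ∀ j ∈ Finset.Ico 1 (orderOf χ), ShiftProdNormLE (χ ^ j) (2 ^ u) σ)
    (hp : ((2 ^ u : ℕ) : ℝ) ^ 2 / p ≤ σ) (hρ0 : 0 ≤ ρ) (hρ1 : ρ ≤ 1) (hσ : σ ≤ ρ ^ 2 ^ u) :
    SumCutNormLE (Fin (u + 1)) (kerMajorant χ - 1) (orderOf χ * (2 * ρ)) := by
  have hpow (j) (hj : j ∈ Finset.Ico 1 (orderOf χ)) :
      SumCutNormLE (Fin (u + 1)) (χ ^ j) (2 * ρ) := by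
    have h := (hχ j hj).sumCutNormLE (N := 1) hp (by simp) hρ0 hρ1 hσ
      (Finset.disjoint_empty_right {0}) (by simp) (by simp)
    have heq : shiftProd (χ ^ j) {0} ∅ = ⇑(χ ^ j) := by
      ext x
      simp [shiftProd]
    rwa [heq] at h
  refine sumCutNormLE_ofReal_iff.1 ?_
  simp only [Pi.sub_apply, Pi.one_apply, ofReal_kerMajorant_sub_one]
  refine (SumCutNormLE.sum hpow).mono ?_
  rw [Finset.sum_const, Nat.card_Ico, nsmul_eq_mul]
  gcongr
  exact Nat.sub_le _ _

theorem eventually_sumCutNormLE_kerMajorant_sub_one (u : ℕ) :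
    ∀ᶠ p : ℕ in atTop, ∀ [Fact p.Prime] (χ : MulChar (ZMod p) ℂ),
      (orderOf χ : ℝ) ≤ (p : ℝ) ^ (1 / 16 : ℝ) →
        SumCutNormLE (Fin (u + 1)) (kerMajorant χ - 1)
          (orderOf χ * (2 * (p : ℝ) ^ (-(3 / 2 ^ (u + 3)) : ℝ))) := by
  filter_upwards [eventually_shiftProdNormLE (2 ^ u),
    eventually_mul_rpow_le (((2 ^ u : ℕ) : ℝ) ^ 2) (show (-1 : ℝ) < -(3 / 8) by norm_num)]
    with p hshift hp _ χ hχ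
  have hp1 : (1 : ℝ) ≤ p := by exact_mod_cast (Fact.out : p.Prime).one_le
  refine sumCutNormLE_kerMajorant_sub_one (σ := (p : ℝ) ^ (-(3 / 8) : ℝ)) (fun j hj => ?_) ?_
    (by positivity) (Real.rpow_le_one_of_one_le_of_nonpos hp1 (neg_nonpos.2 (by positivity))) ?_
  · obtain ⟨hj0, hj⟩ := Finset.mem_Ico.1 hj
    have hord : orderOf (χ ^ j) ≤ orderOf χ :=
      Nat.le_of_dvd (orderOf_pos_iff.2 (isOfFinOrder_of_finite χ)) (orderOf_pow_dvd j)
    exact hshift _ (pow_ne_one_of_lt_orderOf (Nat.one_le_iff_ne_zero.1 hj0) hj)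
      ((Nat.cast_le.2 hord).trans hχ)
  · rwa [Real.rpow_neg_one, ← div_eq_mul_inv] at hp
  · rw [← Real.rpow_mul_natCast (by positivity)]
    refine le_of_eq (congrArg _ ?_)
    push_cast
    field_simp
    ring

lemma exists_orderOf_mulChar_eq_index {F : Type*} [Field F] [Finite F] (G : Subgroup Fˣ) :
    ∃ χ : MulChar F ℂ, orderOf χ = G.index := by
  have := Fintype.ofFinite F
  refine MulChar.exists_mulChar_orderOf F ?_
    (Complex.isPrimitiveRoot_exp _ G.index_ne_zero_of_finite)
  rw [← Nat.card_eq_fintype_card, ← Nat.card_units]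
  exact G.index_dvd_card

lemma index_le_rpow_of_rpow_le_card {p : ℕ} [Fact p.Prime] {G : Subgroup (ZMod p)ˣ} {κ : ℝ}
    (hG : (p : ℝ) ^ (1 - κ) ≤ Nat.card G) : (G.index : ℝ) ≤ (p : ℝ) ^ κ := by
  have hp0 : (0 : ℝ) < p := Nat.cast_pos.2 (Fact.out : p.Prime).pos
  have hcard : (G.index * Nat.card G : ℝ) ≤ p := by
    rw [← Nat.cast_mul, G.index_mul_card, Nat.card_units, Nat.card_zmod]
    exact Nat.cast_le.2 (Nat.sub_le _ _)
  refine le_of_mul_le_mul_right ?_ (Real.rpow_pos_of_pos hp0 (1 - κ))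
  calc G.index * (p : ℝ) ^ (1 - κ) ≤ G.index * Nat.card G := by gcongr
    _ ≤ p := hcard
    _ = (p : ℝ) ^ κ * (p : ℝ) ^ (1 - κ) := by rw [← Real.rpow_add hp0]; simp

/-- The exponent `κ` of the main theorem: the subgroups considered there have index less than
`p ^ κ`. -/
noncomputable def indexExponent (r : ℕ) : ℝ := 1 / (r * 2 ^ (r + 1))

lemma indexExponent_pos {r : ℕ} (hr : r ≠ 0) : 0 < indexExponent r := by
  unfold indexExponent
  positivity

lemma indexExponent_mul_self {r : ℕ} (hr : r ≠ 0) : indexExponent r * r = 1 / 2 ^ (r + 1) := by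
  unfold indexExponent
  field_simp

lemma indexExponent_mul_self_lt_one {r : ℕ} (hr : r ≠ 0) : indexExponent r * r < 1 := by
  rw [indexExponent_mul_self hr, div_lt_one (by positivity)]
  exact one_lt_pow₀ one_lt_two r.succ_ne_zero

lemma indexExponent_le_one_div_sixteen {r : ℕ} (hr : 2 ≤ r) : indexExponent r ≤ 1 / 16 := by
  refine one_div_le_one_div_of_le (by norm_num) ?_
  calc (16 : ℝ) = (2 : ℕ) * 2 ^ (2 + 1) := by norm_num
    _ ≤ r * 2 ^ (r + 1) := by gcongr; norm_num

lemma indexExponent_mul_lt {r : ℕ} (hr : 2 ≤ r) :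
    indexExponent r * (2 * r + 1 : ℕ) < 3 / 2 ^ (r + 1) := by
  have hr0 : r ≠ 0 := by lia
  have hr1 : (1 : ℝ) < r := by exact_mod_cast hr
  calc indexExponent r * (2 * r + 1 : ℕ) < indexExponent r * (3 * r) :=
        mul_lt_mul_of_pos_left (by push_cast; linarith) (indexExponent_pos hr0)
    _ = 3 / 2 ^ (r + 1) := by rw [mul_left_comm, indexExponent_mul_self hr0]; ring

theorem eventually_exists_progression (u : ℕ) {δ : ℝ} (hδ : 0 < δ) :
    ∀ᶠ p : ℕ in atTop, ∀ [Fact p.Prime] (G : Subgroup (ZMod p)ˣ) (A : Finset (ZMod p)),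
      (p : ℝ) ^ (1 - indexExponent (u + 2)) ≤ Nat.card G →
      (A : Set (ZMod p)) ⊆ Units.val '' (G : Set (ZMod p)ˣ) → δ * Nat.card G ≤ A.card →
        ∃ a d : ZMod p, d ≠ 0 ∧ ∀ j < u + 2, a + j • d ∈ A := by
  obtain ⟨c, hc, η, hη, H⟩ := exists_progression_of_sumCutNormLE_kerMajorant.{0} (u + 1) hδ
  have hr : 2 ≤ u + 2 := le_add_self
  set κ := indexExponent (u + 2)
  have hκ_cut : κ * (2 * (u + 2) + 1 : ℕ) + -(3 / 2 ^ (u + 3)) < 0 := by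
    linarith [indexExponent_mul_lt hr]
  filter_upwards [eventually_sumCutNormLE_kerMajorant_sub_one u,
    eventually_mul_rpow_le (2 / η) hκ_cut,
    eventually_mul_rpow_le (2 / c) (indexExponent_mul_self_lt_one (u + 1).succ_ne_zero),
    eventually_gt_atTop (u + 1)] with p hcut hη_le hc_le hp _ G A hG hAG hA
  have hp0 : (0 : ℝ) < p := Nat.cast_pos.2 (Fact.out : p.Prime).pos
  have hp1 : (1 : ℝ) ≤ p := by exact_mod_cast (Fact.out : p.Prime).one_le
  obtain ⟨χ, hχ⟩ := exists_orderOf_mulChar_eq_index G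
  have hχκ : (orderOf χ : ℝ) ≤ (p : ℝ) ^ κ := hχ ▸ index_le_rpow_of_rpow_le_card hG
  have hχ_pow (n : ℕ) : (orderOf χ : ℝ) ^ n ≤ (p : ℝ) ^ (κ * n) := by
    rw [Real.rpow_mul_natCast hp0.le]
    gcongr
  have hχ16 : (orderOf χ : ℝ) ≤ (p : ℝ) ^ (1 / 16 : ℝ) :=
    hχκ.trans (Real.rpow_le_rpow_of_exponent_le hp1 (indexExponent_le_one_div_sixteen hr))
  refine H (ZMod p) p G χ A _ hp hχ hAG hA (by positivity) (hcut χ hχ16) ?_ ?_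
  · rw [Real.rpow_add hp0, Real.rpow_zero, div_mul_eq_mul_div, div_le_one hη] at hη_le
    calc _ = 2 * (orderOf χ ^ (2 * (u + 2) + 1) * (p : ℝ) ^ (-(3 / 2 ^ (u + 3)) : ℝ)) := by ring
      _ ≤ _ := by gcongr; exact hχ_pow _
      _ ≤ η := hη_le
  · rw [Real.rpow_one, div_mul_eq_mul_div, div_le_iff₀ hc] at hc_le
    rw [ZMod.card, div_lt_iff₀ hp0]
    nlinarith [hχ_pow (u + 2), Real.rpow_pos_of_pos hp0 (κ * (u + 2 : ℕ))]

end Subgroups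

end SubgroupAP

/-- Theorem 1: Given `r ∈ ℤ⁺`, with `κ = 1/(r·2^(r+1))`, for every `δ > 0` and all
sufficiently large primes `p`, every subgroup `G ≤ 𝔽_p^*` of size `|G| > p^(1-κ)` has the
property that every `A ⊆ G` with `|A| > δ|G|` contains a non-trivial `r`-term arithmetic
progression. -/
theorem arithmetic_progressions_in_large_subsets_of_multiplicative_groups
    (r : ℕ) (hr : 0 < r) (δ : ℝ) (hδ : 0 < δ) :
    ∃ p₀ : ℕ, ∀ p : ℕ, p.Prime → p > p₀ →
      ∀ G : Subgroup (ZMod p)ˣ,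
        (Nat.card G : ℝ) > (p : ℝ) ^ ((1 : ℝ) - 1 / ((r : ℝ) * 2 ^ (r + 1))) →
        ∀ A : Finset (ZMod p),
          (↑A : Set (ZMod p)) ⊆ Units.val '' (G : Set (ZMod p)ˣ) →
          (A.card : ℝ) > δ * (Nat.card G : ℝ) →
          ∃ a b : ZMod p, b ≠ 0 ∧ ∀ i : ℕ, i < r → a + (i : ZMod p) * b ∈ A := by
  obtain rfl | ⟨u, rfl⟩ : r = 1 ∨ ∃ u, r = u + 2 := by
    obtain rfl | h := eq_or_ne r 1
    · exact .inl rfl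
    · exact .inr ⟨r - 2, by lia⟩
  · refine ⟨0, fun p hp _ G _ A _ hA => ?_⟩
    have := Fact.mk hp
    obtain ⟨a, ha⟩ : A.Nonempty := by
      rw [← Finset.card_pos, ← Nat.cast_pos (α := ℝ)]
      exact (by positivity : (0 : ℝ) ≤ δ * Nat.card G).trans_lt hA
    exact ⟨a, 1, one_ne_zero, fun i hi => by simpa [Nat.lt_one_iff.1 hi] using ha⟩
  · obtain ⟨p₀, h⟩ := Filter.eventually_atTop.1 (SubgroupAP.eventually_exists_progression u hδ)
    refine ⟨p₀, fun p hp hpp₀ G hG A hAG hA => ?_⟩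
    have := Fact.mk hp
    simpa only [nsmul_eq_mul] using h p hpp₀.le G A hG.le hAG hA.le
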